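/- arXiv:2309.07977 — 5 statements merged into one kernel-verified Lean document; each statement's English description precedes it below -/
import Mathlib

section
/- Let Ω ⊂ ℝ² be a bounded open set whose boundary consists of two disjoint connected components Γ₁ and Γ₂, each a smooth Jordan curve, and let Ω' be the bounded connected component of ℝ² \ closure(Ω), with ∂Ω' = Γ₂. Suppose u is twice continuously differentiable on an open neighborhood of closure(Ω), ∇u = 0 at every point of ∂Ω, u ≡ c₁ on Γ₁ and u ≡ c₂ on Γ₂. Define v : ℝ² → ℝ² by v = (∂u/∂x₂, −∂u/∂x₁) on closure(Ω) and v = 0 elsewhere. Then v is continuous on ℝ², the support of v is contained in closure(Ω), and v is divergence-free in the sense of distributions: ∫_{ℝ²} v·∇φ dx = 0 for every smooth compactly supported function φ : ℝ² → ℝ. -/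
open Real Set MeasureTheory

noncomputable section

abbrev Pt := EuclideanSpace ℝ (Fin 2)

/-- Partial derivative in the `i`-th coordinate direction. -/
def pd (i : Fin 2) (f : Pt → ℝ) (x : Pt) : ℝ := fderiv ℝ f x (EuclideanSpace.single i 1)

/-- A smooth Jordan curve in the plane: the image of a smooth, regular, `2π`-periodic
injective (modulo periods) parametrization. -/
def IsSmoothJordanCurve (Γ : Set Pt) : Prop :=
  ∃ γ : ℝ → Pt, ContDiff ℝ (⊤ : ℕ∞) γ ∧ Function.Periodic γ (2*π) ∧
    (∀ s t, γ s = γ t → ∃ n : ℤ, s - t = n * (2*π)) ∧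
    (∀ t, deriv γ t ≠ 0) ∧ Γ = Set.range γ

/-!
Let `K = closure Ω`; after multiplication by a cutoff, `u` is `C²` on the whole plane. For a `C¹`
compactly supported `f` vanishing on `frontier K`, the zero extension `K.indicator f` is Lipschitz,
so each of its directional derivatives has integral zero. These derivatives agree a.e. with the zero
extensions of those of `f`, whatever the measure of `frontier K`: on every line, the points of a
level set at which the derivative is nonzero are isolated. Hence `∫ x in K, fderiv ℝ f x e = 0`, and
applying this to `φ ∂₂u` and `φ ∂₁u` gives the divergence identity, because mixed second derivatives
commute.
-/

open Filter Topology
open scoped NNReal Manifold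

theorem countable_setOf_eq_and_deriv_ne_zero {𝕜 F : Type*} [NontriviallyNormedField 𝕜]
    [SecondCountableTopology 𝕜] [NormedAddCommGroup F] [NormedSpace 𝕜 F] (f : 𝕜 → F) (c : F) :
    {t | f t = c ∧ deriv f t ≠ 0}.Countable := by
  refine (HereditarilyLindelofSpace.isLindelof _).countable_of_isDiscrete
    (isDiscrete_iff_nhdsNE.2 ?_)
  rintro t ⟨-, ht⟩
  have hisolated : ∀ᶠ s in 𝓝[≠] t, f s ≠ c :=
    (differentiableAt_of_deriv_ne_zero ht).hasDerivAt.eventually_ne ht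
  rw [inf_principal_eq_bot]
  filter_upwards [hisolated] with s hs hmem using hs hmem.1

section ZeroExtension

variable {E F : Type*} [NormedAddCommGroup E] [NormedSpace ℝ E] [FiniteDimensional ℝ E]
  [NormedAddCommGroup F] {f : E → F} {K V : Set E}

theorem exists_contDiff_eventuallyEq_nhdsSet [NormedSpace ℝ F] {n : ℕ∞} (hK : IsClosed K)
    (hV : IsOpen V) (hKV : K ⊆ V) (hf : ContDiffOn ℝ n f V) :
    ∃ g : E → F, ContDiff ℝ n g ∧ g =ᶠ[𝓝ˢ K] f := by
  obtain ⟨U, hU, hKU, hUV⟩ := normal_exists_closure_subset hK hV hKV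
  obtain ⟨χ, hχ_one, hχ_zero, -⟩ := exists_contMDiffMap_one_nhds_of_subset_interior
    𝓘(ℝ, E) (n := n) hK (hU.interior_eq.symm ▸ hKU)
  refine ⟨fun x => χ x • f x, contDiff_iff_contDiffAt.2 fun x => ?_, ?_⟩
  · by_cases hx : x ∈ V
    · exact χ.contMDiff.contDiff.contDiffAt.smul (hf.contDiffAt (hV.mem_nhds hx))
    · have hzero : (fun y => χ y • f y) =ᶠ[𝓝 x] fun _ => 0 := by
        filter_upwards [isClosed_closure.isOpen_compl.mem_nhds fun h => hx (hUV h)] with y hy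
        rw [hχ_zero y fun h => hy (subset_closure h), zero_smul]
      exact contDiffAt_const.congr_of_eventuallyEq hzero
  · filter_upwards [hχ_one] with x hx
    rw [hx, one_smul]

theorem lipschitzWith_indicator_of_frontier_eq_zero {C : ℝ≥0} (hf : LipschitzWith C f)
    (h0 : ∀ x ∈ frontier K, f x = 0) : LipschitzWith C (K.indicator f) := by
  have norm_le : ∀ x ∈ K, ∀ y ∉ K, ‖f x‖ ≤ C * dist x y := by
    intro x hx y hy
    obtain ⟨z, hz, hxz⟩ := exists_mem_frontier_infDist_compl_eq_dist hx
      ((ne_univ_iff_exists_notMem K).2 ⟨y, hy⟩)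
    calc ‖f x‖ = dist (f x) (f z) := by rw [h0 z hz, dist_zero_right]
      _ ≤ C * dist x z := hf.dist_le_mul x z
      _ ≤ C * dist x y := by
        rw [← hxz]
        gcongr
        exact Metric.infDist_le_dist_of_mem hy
  refine LipschitzWith.of_dist_le_mul fun x y => ?_
  by_cases hx : x ∈ K <;> by_cases hy : y ∈ K
  · simpa only [indicator_of_mem hx, indicator_of_mem hy] using hf.dist_le_mul x y
  · simpa only [indicator_of_mem hx, indicator_of_notMem hy, dist_zero_right]
      using norm_le x hx y hy
  · simpa only [indicator_of_notMem hx, indicator_of_mem hy, dist_zero_left, dist_comm x y]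
      using norm_le y hy x hx
  · simp only [indicator_of_notMem hx, indicator_of_notMem hy, dist_self]
    positivity

variable [MeasurableSpace E] [BorelSpace E] (μ : Measure E) [μ.IsAddHaarMeasure]

theorem ae_lineDeriv_eq_zero_of_eq [NormedSpace ℝ F] [CompleteSpace F] (hf : Continuous f)
    (c : F) (e : E) : ∀ᵐ x ∂μ, f x = c → lineDeriv ℝ f x e = 0 := by
  borelize F
  have hmeas : MeasurableSet {x | f x = c → lineDeriv ℝ f x e = 0} :=
    (hf.measurable (measurableSet_singleton c)).imp
      (measurable_lineDeriv hf (measurableSet_singleton 0))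
  refine ae_mem_of_ae_add_linearMap_mem (LinearMap.toSpanSingleton ℝ E e) volume μ hmeas fun p => ?_
  filter_upwards [(countable_setOf_eq_and_deriv_ne_zero
    (fun t : ℝ => f (p + t • e)) c).ae_notMem volume] with t ht hfc
  have hderiv : lineDeriv ℝ f (p + t • e) e = deriv (fun s : ℝ => f (p + s • e)) t := by
    simpa only [lineDeriv, add_smul, add_assoc, add_zero] using
      deriv_comp_const_add (fun s : ℝ => f (p + s • e)) t 0
  by_contra hne
  exact ht ⟨hfc, hderiv ▸ hne⟩

theorem ae_lineDeriv_indicator [NormedSpace ℝ F] [CompleteSpace F] (hf : Continuous f)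
    (h0 : ∀ x ∈ frontier K, f x = 0) (e : E) :
    (fun x => lineDeriv ℝ (K.indicator f) x e) =ᵐ[μ] K.indicator fun x => lineDeriv ℝ f x e := by
  filter_upwards [ae_lineDeriv_eq_zero_of_eq μ hf 0 e,
    ae_lineDeriv_eq_zero_of_eq μ (continuous_indicator h0 hf.continuousOn) 0 e] with x hfx hindx
  by_cases hx : x ∈ frontier K
  · have hind : K.indicator f x = 0 := indicator_apply_eq_zero.2 fun _ => h0 x hx
    rw [hindx hind, eq_comm, indicator_apply_eq_zero]
    exact fun _ => hfx (h0 x hx)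
  by_cases hxK : x ∈ K
  · have hnhds : K ∈ 𝓝 x := mem_interior_iff_mem_nhds.1 <| by
      by_contra hint
      exact hx ⟨subset_closure hxK, hint⟩
    have heq : K.indicator f =ᶠ[𝓝 x] f := by
      filter_upwards [hnhds] with y hy using indicator_of_mem hy f
    rw [heq.lineDeriv_eq, indicator_of_mem hxK]
  · have hnhds : (closure K)ᶜ ∈ 𝓝 x := isClosed_closure.isOpen_compl.mem_nhds fun hcl =>
      hx ⟨hcl, fun hint => hxK (interior_subset hint)⟩
    have heq : K.indicator f =ᶠ[𝓝 x] fun _ => 0 := by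
      filter_upwards [hnhds] with y hy using indicator_of_notMem (fun h => hy (subset_closure h)) f
    rw [heq.lineDeriv_eq, indicator_of_notMem hxK, lineDeriv, deriv_const]

end ZeroExtension

section SecondDerivative

variable {𝕜 E F : Type*} [RCLike 𝕜] [NormedAddCommGroup E] [NormedSpace 𝕜 E]
  [NormedAddCommGroup F] [NormedSpace 𝕜 F] {x : E}

theorem fderiv_fderiv_apply_comm {f : E → F} (hf : ContDiffAt 𝕜 2 f x) (a b : E) :
    fderiv 𝕜 (fun y => fderiv 𝕜 f y a) x b = fderiv 𝕜 (fun y => fderiv 𝕜 f y b) x a := by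
  have hdiff : DifferentiableAt 𝕜 (fderiv 𝕜 f) x :=
    (hf.fderiv_right (m := 1) one_add_one_eq_two.le).differentiableAt one_ne_zero
  have hsecond : ∀ a b, fderiv 𝕜 (fun y => fderiv 𝕜 f y a) x b = fderiv 𝕜 (fderiv 𝕜 f) x b a :=
    fun a b => by simp [fderiv_clm_apply hdiff (differentiableAt_const a)]
  rw [hsecond, hsecond, (hf.isSymmSndFDerivAt (by simp)).eq]

theorem fderiv_mul_fderiv_apply_sub {w φ : E → 𝕜} (hw : ContDiffAt 𝕜 2 w x)
    (hφ : DifferentiableAt 𝕜 φ x) (a b : E) :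
    fderiv 𝕜 (fun y => φ y * fderiv 𝕜 w y b) x a - fderiv 𝕜 (fun y => φ y * fderiv 𝕜 w y a) x b =
      fderiv 𝕜 w x b * fderiv 𝕜 φ x a - fderiv 𝕜 w x a * fderiv 𝕜 φ x b := by
  have hdiff : ∀ e, DifferentiableAt 𝕜 (fun y => fderiv 𝕜 w y e) x := fun e =>
    ((hw.fderiv_right (m := 1) one_add_one_eq_two.le).differentiableAt one_ne_zero).clm_apply
      (differentiableAt_const e)
  rw [fderiv_fun_mul hφ (hdiff b), fderiv_fun_mul hφ (hdiff a)]
  simp only [add_apply, smul_apply, smul_eq_mul, fderiv_fderiv_apply_comm hw b a]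
  ring

end SecondDerivative

section Integral

variable {E : Type*} [NormedAddCommGroup E] [NormedSpace ℝ E] [FiniteDimensional ℝ E]
  [MeasurableSpace E] [BorelSpace E] (μ : Measure E) [μ.IsAddHaarMeasure]
  {f w φ : E → ℝ} {K : Set E}

theorem integral_lineDeriv_eq_zero {C : ℝ≥0} (hf : LipschitzWith C f) (hc : HasCompactSupport f)
    (e : E) : ∫ x, lineDeriv ℝ f x e ∂μ = 0 := by
  have hparts := (LipschitzWith.const (1 : ℝ)).integral_lineDeriv_mul_eq (μ := μ) hf hc (-e)
  simpa [lineDeriv] using hparts.symm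

theorem setIntegral_fderiv_eq_zero_of_frontier_eq_zero (hK : MeasurableSet K)
    (hf : ContDiff ℝ 1 f) (hc : HasCompactSupport f) (h0 : ∀ x ∈ frontier K, f x = 0) (e : E) :
    ∫ x in K, fderiv ℝ f x e ∂μ = 0 := by
  obtain ⟨C, hC⟩ := ContDiff.lipschitzWith_of_hasCompactSupport hc hf one_ne_zero
  have hline : (fun x => lineDeriv ℝ f x e) = fun x => fderiv ℝ f x e := funext fun x =>
    (hf.differentiable one_ne_zero x).lineDeriv_eq_fderiv
  rw [← integral_indicator hK, ← hline, ← integral_congr_ae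
    (ae_lineDeriv_indicator μ hf.continuous h0 e)]
  exact integral_lineDeriv_eq_zero μ (lipschitzWith_indicator_of_frontier_eq_zero hC h0)
    (hc.mono (support_indicator.trans_subset inter_subset_right)) e

theorem setIntegral_fderiv_mul_fderiv_sub_eq_zero (hK : MeasurableSet K) (hw : ContDiff ℝ 2 w)
    (h0 : ∀ x ∈ frontier K, fderiv ℝ w x = 0) (hφ : ContDiff ℝ 1 φ) (hc : HasCompactSupport φ)
    (a b : E) :
    ∫ x in K, (fderiv ℝ w x b * fderiv ℝ φ x a - fderiv ℝ w x a * fderiv ℝ φ x b) ∂μ = 0 := by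
  have hprod : ∀ e, ContDiff ℝ 1 (fun x => φ x * fderiv ℝ w x e) := fun e =>
    hφ.mul ((hw.fderiv_right one_add_one_eq_two.le).clm_apply contDiff_const)
  have hprodc : ∀ e, HasCompactSupport (fun x => φ x * fderiv ℝ w x e) := fun e => hc.mul_right
  have hint : ∀ e e', Integrable (fun x => fderiv ℝ (fun y => φ y * fderiv ℝ w y e) x e') μ :=
    fun e e' => (((hprod e).continuous_fderiv one_ne_zero).clm_apply
      continuous_const).integrable_of_hasCompactSupport ((hprodc e).fderiv_apply ℝ e')
  have hzero : ∀ e e', ∫ x in K, fderiv ℝ (fun y => φ y * fderiv ℝ w y e) x e' ∂μ = 0 :=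
    fun e => setIntegral_fderiv_eq_zero_of_frontier_eq_zero μ hK (hprod e) (hprodc e)
      fun x hx => by rw [h0 x hx, zero_apply, mul_zero]
  simp_rw [← fderiv_mul_fderiv_apply_sub hw.contDiffAt (hφ.differentiable one_ne_zero _) a b]
  rw [integral_sub (hint b a).integrableOn (hint a b).integrableOn, hzero, hzero, sub_zero]

end Integral

theorem continuous_pd {f : Pt → ℝ} (hf : ContDiff ℝ 1 f) (i : Fin 2) : Continuous (pd i f) :=
  (hf.continuous_fderiv one_ne_zero).clm_apply continuous_const

theorem vector_field_continuous_divergence_free_general (Ω : Set Pt) (u : Pt → ℝ) (v : Pt → ℝ × ℝ)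
    (hu : ∃ V : Set Pt, IsOpen V ∧ closure Ω ⊆ V ∧ ContDiffOn ℝ 2 u V)
    (hgrad : ∀ x ∈ frontier Ω, fderiv ℝ u x = 0)
    (hv₁ : ∀ x ∈ closure Ω, v x = (pd 1 u x, -pd 0 u x)) (hv₂ : ∀ x ∉ closure Ω, v x = 0) :
    Continuous v ∧ Function.support v ⊆ closure Ω ∧
      ∀ φ : Pt → ℝ, ContDiff ℝ 1 φ → HasCompactSupport φ →
        ∫ x, ((v x).1 * pd 0 φ x + (v x).2 * pd 1 φ x) = 0 := by
  obtain ⟨V, hV, hΩV, huV⟩ := hu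
  obtain ⟨w, hw, hwu⟩ := exists_contDiff_eventuallyEq_nhdsSet (n := 2) isClosed_closure hV hΩV huV
  have hfderiv : ∀ x ∈ closure Ω, fderiv ℝ w x = fderiv ℝ u x := fun x hx =>
    (hwu.filter_mono (nhds_le_nhdsSet hx)).fderiv_eq
  have hw0 : ∀ x ∈ frontier (closure Ω), fderiv ℝ w x = 0 := fun x hx =>
    (hfderiv x (isClosed_closure.frontier_subset hx)).trans (hgrad x (frontier_closure_subset hx))
  have hv : v = (closure Ω).indicator fun x => (pd 1 w x, -pd 0 w x) := by
    ext1 x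
    by_cases hx : x ∈ closure Ω
    · rw [hv₁ x hx, indicator_of_mem hx, pd, pd, pd, pd, hfderiv x hx]
    · rw [hv₂ x hx, indicator_of_notMem hx]
  refine ⟨?_, fun x hx => not_not.1 fun h => hx (hv₂ x h), fun φ hφ hc => ?_⟩
  · rw [hv]
    refine continuous_indicator (fun x hx => ?_) (Continuous.continuousOn ?_)
    · simp [pd, hw0 x hx]
    · have hw1 : ContDiff ℝ 1 w := hw.of_le one_le_two
      exact (continuous_pd hw1 1).prodMk (continuous_pd hw1 0).neg
  · have hintegrand : (fun x => (v x).1 * pd 0 φ x + (v x).2 * pd 1 φ x) =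
        (closure Ω).indicator fun x => pd 1 w x * pd 0 φ x - pd 0 w x * pd 1 φ x := by
      ext x
      by_cases hx : x ∈ closure Ω <;> simp [hv, hx, sub_eq_add_neg]
    rw [hintegrand, integral_indicator isClosed_closure.measurableSet]
    exact setIntegral_fderiv_mul_fderiv_sub_eq_zero volume isClosed_closure.measurableSet hw hw0
      hφ hc _ _

/-- If `u` is `C²` near `closure Ω`, has vanishing gradient on `∂Ω`
and is locally constant on the two smooth Jordan boundary curves, then the field
`v = (∂₂u, −∂₁u)` extended by zero outside `closure Ω` is continuous, supported in
`closure Ω`, and divergence-free in the sense of distributions. -/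
theorem vector_field_continuous_divergence_free
    (Ω Ω' Γ₁ Γ₂ : Set Pt) (u : Pt → ℝ) (c₁ c₂ : ℝ) (v : Pt → ℝ × ℝ)
    (hΩopen : IsOpen Ω) (hΩbd : Bornology.IsBounded Ω)
    (hfr : frontier Ω = Γ₁ ∪ Γ₂) (hdisj : Disjoint Γ₁ Γ₂)
    (hΓ₁ : IsSmoothJordanCurve Γ₁) (hΓ₂ : IsSmoothJordanCurve Γ₂)
    (hΩ'open : IsOpen Ω') (hΩ'conn : IsConnected Ω') (hΩ'bd : Bornology.IsBounded Ω')
    (hΩ'sub : Ω' ⊆ (closure Ω)ᶜ)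
    (hΩ'comp : ∀ x ∈ Ω', connectedComponentIn (closure Ω)ᶜ x = Ω')
    (hΩ'fr : frontier Ω' = Γ₂)
    (hu : ∃ V : Set Pt, IsOpen V ∧ closure Ω ⊆ V ∧ ContDiffOn ℝ 2 u V)
    (hgrad : ∀ x ∈ frontier Ω, fderiv ℝ u x = 0)
    (hb1 : ∀ x ∈ Γ₁, u x = c₁) (hb2 : ∀ x ∈ Γ₂, u x = c₂)
    (hv₁ : ∀ x ∈ closure Ω, v x = (pd 1 u x, -pd 0 u x))
    (hv₂ : ∀ x ∉ closure Ω, v x = 0) :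
    Continuous v ∧ Function.support v ⊆ closure Ω ∧
      ∀ φ : Pt → ℝ, ContDiff ℝ (⊤ : ℕ∞) φ → HasCompactSupport φ →
        ∫ x, ((v x).1 * pd 0 φ x + (v x).2 * pd 1 φ x) = 0 := by
  obtain ⟨hcont, hsupp, hdiv⟩ :=
    vector_field_continuous_divergence_free_general Ω u v hu hgrad hv₁ hv₂
  exact ⟨hcont, hsupp, fun φ hφ => hdiv φ (hφ.of_le (by exact_mod_cast le_top))⟩

end
end

section
/- Let Ω ⊂ ℝ² be a bounded open set whose boundary consists of two disjoint connected components Γ₁ and Γ₂, each a smooth Jordan curve, and let Ω' be the bounded connected component of ℝ² \ closure(Ω), with ∂Ω' = Γ₂. Suppose μ ∈ ℝ and u is twice continuously differentiable on an open neighborhood of closure(Ω) with Δu + μu = 0 in Ω, ∇u = 0 at every point of ∂Ω, u ≡ c₁ on Γ₁ and u ≡ c₂ on Γ₂. Define v : ℝ² → ℝ² by v = (∂u/∂x₂, −∂u/∂x₁) on closure(Ω) and v = 0 elsewhere, and p : ℝ² → ℝ by p = 0 on the unbounded component of ℝ² \ closure(Ω ∪ Ω'), p = −(1/2)(|∇u|²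 + μu² − μc₁²) on closure(Ω), and p = −(1/2)μ(c₂² − c₁²) on Ω'. Then p is continuous on ℝ², and for every smooth compactly supported vector field w : ℝ² → ℝ² one has ∫_{ℝ²} ( Σ_{i,j=1}^2 v_i v_j ∂_i w_j + p · div w ) dx = 0; together with the distributional divergence-free property of v, the pair (v,p) is a continuous, compactly supported stationary weak solution of the incompressible Euler equations on ℝ². -/
open Real Set MeasureTheory

noncomputable section

/-- The Laplacian of a function on the plane. -/
def lap (f : Pt → ℝ) (x : Pt) : ℝ := pd 0 (pd 0 f) x + pd 1 (pd 1 f) x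

/-!
Inside `Ω` the field `v = (∂₂u, -∂₁u)` and the rows of the stress tensor `v ⊗ v + p I` are
divergence free, the latter because of the equation for `u`; outside they are locally constant. A
continuous function that is `C¹` on a compact set and locally constant off it is Lipschitz, so it
can be integrated by parts and its weak derivative is the classical one, with no contribution of the
boundary as soon as that is a null set. Hence only the continuity across `∂Ω` is at stake. It holds
for `v` since `∇u = 0` there, and for `p` since `u` takes the value `c₂` on `Γ₂` and, `Γ₂` being
locally two-sided, only `Ω` and `Ω'` lie next to it.
-/

open Filter Topology

section LocallyTwoSided

variable {X : Type*} [TopologicalSpace X]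

/-- The set `Γ` is locally two-sided at `x`: arbitrarily close to `x`, the complement of `Γ` in a
neighborhood of `x` is covered by two preconnected sets, the sides, that avoid `Γ`. The sides may
coincide and they need not be open. -/
def IsLocallyTwoSidedAt (Γ : Set X) (x : X) : Prop :=
  ∀ O ∈ 𝓝 x, ∃ A B : Set X, IsPreconnected A ∧ IsPreconnected B ∧
    A ⊆ O \ Γ ∧ B ⊆ O \ Γ ∧ A ∪ B ∈ 𝓝[Γᶜ] x

lemma subset_of_isPreconnected_of_disjoint_frontier {A U : Set X} (hA : IsPreconnected A)
    (hU : IsOpen U) (hAU : (A ∩ U).Nonempty) (hd : Disjoint A (frontier U)) : A ⊆ U := by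
  refine hA.subset_of_closure_inter_subset hU hAU fun y ⟨hyU, hyA⟩ ↦ ?_
  by_contra hy
  exact disjoint_left.1 hd hyA (hU.frontier_eq ▸ ⟨hyU, hy⟩)

lemma IsLocallyTwoSidedAt.union_mem_nhdsWithin_compl {Γ U W : Set X} {x : X}
    (hΓ : IsLocallyTwoSidedAt Γ x) (hU : IsOpen U) (hW : IsOpen W) (hUW : Disjoint U W)
    (hUΓ : frontier U =ᶠ[𝓝 x] Γ) (hWΓ : frontier W =ᶠ[𝓝 x] Γ)
    (hxU : x ∈ closure U) (hxW : x ∈ closure W) : U ∪ W ∈ 𝓝[Γᶜ] x := by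
  have hfrontier : ∀ᶠ y in 𝓝 x, y ∉ Γ → y ∉ frontier U ∧ y ∉ frontier W := by
    filter_upwards [hUΓ.mem_iff, hWΓ.mem_iff] with y hyU hyW hy
    exact ⟨mt hyU.1 hy, mt hyW.1 hy⟩
  obtain ⟨A, B, hA, hB, hAO, hBO, hAB⟩ := hΓ _ hfrontier
  have hAfr : ∀ y ∈ A, y ∉ frontier U ∧ y ∉ frontier W := fun y hy ↦ (hAO hy).1 (hAO hy).2
  have hBfr : ∀ y ∈ B, y ∉ frontier U ∧ y ∉ frontier W := fun y hy ↦ (hBO hy).1 (hBO hy).2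
  have side_subset {S V : Set X} (hS : IsPreconnected S) (hV : IsOpen V)
      (hSV : ∀ y ∈ S, y ∉ frontier V) {y : X} (hyS : y ∈ S) (hyV : y ∈ V) : S ⊆ V :=
    subset_of_isPreconnected_of_disjoint_frontier hS hV ⟨y, hyS, hyV⟩ (disjoint_left.2 hSV)
  have side_meets {V : Set X} (hV : IsOpen V) (hVΓ : frontier V =ᶠ[𝓝 x] Γ) (hxV : x ∈ closure V) :
      ∃ y ∈ V, y ∈ A ∪ B := by
    have hnear : ∀ᶠ y in 𝓝 x, y ∈ V → y ∈ A ∪ B := by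
      filter_upwards [hVΓ.mem_iff, eventually_nhdsWithin_iff.1 hAB] with y hyΓ hyAB hyV
      exact hyAB fun hy ↦ (hV.frontier_eq ▸ hyΓ.2 hy).2 hyV
    exact ((mem_closure_iff_frequently.1 hxV).and_eventually hnear).exists.imp
      fun y hy ↦ ⟨hy.1, hy.2 hy.1⟩
  obtain ⟨y, hyU, hyAB⟩ := side_meets hU hUΓ hxU
  obtain ⟨z, hzW, hzAB⟩ := side_meets hW hWΓ hxW
  refine mem_of_superset hAB ?_
  rcases hyAB with hyA | hyB
  · have hAsub := side_subset hA hU (fun a ha ↦ (hAfr a ha).1) hyA hyU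
    have hzB := hzAB.resolve_left fun hzA ↦ disjoint_left.1 hUW (hAsub hzA) hzW
    have hBsub := side_subset hB hW (fun b hb ↦ (hBfr b hb).2) hzB hzW
    exact union_subset_union hAsub hBsub
  · have hBsub := side_subset hB hU (fun b hb ↦ (hBfr b hb).1) hyB hyU
    have hzA := hzAB.resolve_right fun hzB ↦ disjoint_left.1 hUW (hBsub hzB) hzW
    have hAsub := side_subset hA hW (fun a ha ↦ (hAfr a ha).2) hzA hzW
    exact union_comm U W ▸ union_subset_union hAsub hBsub

lemma mem_nhdsWithin_compl_closure {U W Γ : Set X} (hU : IsOpen U) (hW : IsOpen W)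
    (hUW : Disjoint U W) (hΓ : IsClosed Γ) (hfr : frontier U = Γ ∪ frontier W)
    (hd : Disjoint Γ (frontier W)) (hsided : ∀ x ∈ frontier W, IsLocallyTwoSidedAt (frontier W) x)
    {x : X} (hx : x ∈ closure W) :
    W ∈ 𝓝[(closure U)ᶜ] x := by
  by_cases hxW : x ∈ W
  · exact mem_nhdsWithin_of_mem_nhds (hW.mem_nhds hxW)
  have hxfr : x ∈ frontier W := hW.frontier_eq ▸ ⟨hx, hxW⟩
  have hUeq : frontier U =ᶠ[𝓝 x] frontier W := by
    filter_upwards [hΓ.isOpen_compl.mem_nhds fun h ↦ disjoint_left.1 hd h hxfr] with y hy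
    exact propext (hfr ▸ or_iff_right hy)
  have hsubset : (closure U)ᶜ ⊆ (frontier W)ᶜ :=
    compl_subset_compl.2 ((hfr ▸ subset_union_right).trans frontier_subset_closure)
  have hcover := (hsided x hxfr).union_mem_nhdsWithin_compl hU hW hUW hUeq .rfl
    (frontier_subset_closure (hfr ▸ Or.inr hxfr)) hx
  filter_upwards [nhdsWithin_mono x hsubset hcover, self_mem_nhdsWithin] with y hy hyU
  exact hy.resolve_left fun h ↦ hyU (subset_closure h)

lemma eventually_nhdsWithin_compl_closure_eq {β : Type*} {U W : Set X} {p : X → β} {a b : β}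
    (hU : IsOpen U) (hW : ∀ x ∈ closure W, W ∈ 𝓝[(closure U)ᶜ] x)
    (ha : ∀ x ∈ closure W, p x = a) (hb : ∀ x ∉ U, x ∉ closure W → p x = b) (x : X) :
    ∀ᶠ y in 𝓝[(closure U)ᶜ] x, p y = p x := by
  by_cases hxW : x ∈ closure W
  · filter_upwards [hW x hxW] with y hy
    rw [ha x hxW, ha y (subset_closure hy)]
  by_cases hxU : x ∈ U
  · filter_upwards [mem_nhdsWithin_of_mem_nhds (hU.mem_nhds hxU), self_mem_nhdsWithin] with y hy hyU
    exact absurd (subset_closure hy) hyU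
  · filter_upwards [mem_nhdsWithin_of_mem_nhds (isClosed_closure.isOpen_compl.mem_nhds hxW),
      self_mem_nhdsWithin] with y hy hyU
    rw [hb x hxU hxW, hb y (fun h ↦ hyU (subset_closure h)) hy]

end LocallyTwoSided

section Curve

variable {E : Type*} [NormedAddCommGroup E] [NormedSpace ℝ E]

/-- The sides are the images of the two half-balls. -/
lemma isLocallyTwoSidedAt_of_nhds_le_map {X : Type*} [TopologicalSpace X] {Γ : Set X}
    {Φ : E × ℝ → X} {a : E} (hΦ : Continuous Φ)
    (hopen : 𝓝 (Φ (a, 0)) ≤ map Φ (𝓝 (a, 0))) (hΓ : ∀ᶠ q in 𝓝 (a, 0), Φ q ∈ Γ ↔ q.2 = 0) :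
    IsLocallyTwoSidedAt Γ (Φ (a, 0)) := by
  intro O hO
  obtain ⟨δ, hδ, hball⟩ :=
    Metric.eventually_nhds_iff_ball.1 ((hΦ.continuousAt.eventually hO).and hΓ)
  rw [← ball_prod_same, Real.ball_eq_Ioo, zero_sub, zero_add] at hball
  have isPreconnected_side (I : Set ℝ) (hI : IsPreconnected I) :
      IsPreconnected (Φ '' (Metric.ball a δ ×ˢ I)) :=
    ((convex_ball a δ).isPreconnected.prod hI).image _ hΦ.continuousOn
  have side_subset (I : Set ℝ) (hI : I ⊆ Ioo (-δ) δ) (h0 : ∀ s ∈ I, s ≠ 0) :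
      Φ '' (Metric.ball a δ ×ˢ I) ⊆ O \ Γ := by
    rintro _ ⟨q, hq, rfl⟩
    obtain ⟨hqO, hqΓ⟩ := hball q ⟨hq.1, hI hq.2⟩
    exact ⟨hqO, fun h ↦ h0 _ hq.2 (hqΓ.1 h)⟩
  refine ⟨Φ '' (Metric.ball a δ ×ˢ Ioo 0 δ), Φ '' (Metric.ball a δ ×ˢ Ioo (-δ) 0),
    isPreconnected_side _ isPreconnected_Ioo, isPreconnected_side _ isPreconnected_Ioo,
    side_subset _ (Ioo_subset_Ioo_left (neg_nonpos.2 hδ.le)) fun s hs ↦ hs.1.ne',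
    side_subset _ (Ioo_subset_Ioo_right hδ.le) fun s hs ↦ hs.2.ne, ?_⟩
  have himage : Φ '' Metric.ball (a, 0) δ ∈ 𝓝 (Φ (a, 0)) :=
    hopen (image_mem_map (Metric.ball_mem_nhds _ hδ))
  filter_upwards [mem_nhdsWithin_of_mem_nhds himage, self_mem_nhdsWithin]
  rintro _ ⟨q, hq, rfl⟩ hqΓ
  rw [← ball_prod_same, Real.ball_eq_Ioo, zero_sub, zero_add] at hq
  rcases lt_trichotomy q.2 0 with hneg | hzero | hpos
  · exact Or.inr ⟨q, ⟨hq.1, hq.2.1, hneg⟩, rfl⟩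
  · exact absurd ((hball q hq).2.2 hzero) hqΓ
  · exact Or.inl ⟨q, ⟨hq.1, hpos, hq.2.2⟩, rfl⟩

lemma exists_equiv_prod_apply_of_finrank_eq_two (hE : Module.finrank ℝ E = 2) {d : E}
    (hd : d ≠ 0) : ∃ (n : E) (L : (ℝ × ℝ) ≃L[ℝ] E), ∀ q, L q = q.1 • d + q.2 • n := by
  have : FiniteDimensional ℝ E := .of_finrank_pos (by lia)
  obtain ⟨n, hn⟩ := exists_linearIndependent_pair_of_one_lt_finrank (R := ℝ) (by lia) hd
  let L : ℝ × ℝ →ₗ[ℝ] E :=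
    (LinearMap.fst ℝ ℝ ℝ).smulRight d + (LinearMap.snd ℝ ℝ ℝ).smulRight n
  have hL : Function.Injective L := by
    refine (injective_iff_map_eq_zero L).2 fun q hq ↦ ?_
    exact Prod.ext_iff.2 (LinearIndependent.pair_iff.1 hn q.1 q.2 hq)
  exact ⟨n, (L.linearEquivOfInjective hL (by simp [hE])).toContinuousLinearEquiv, fun q ↦ rfl⟩

/-- Near `γ t₀`, the map `(t, s) ↦ γ t + s n`, with `n` transverse to the curve, straightens the
curve; that the curve does not come back to `γ t₀` from far away is the hypothesis `hemb`. -/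
lemma isLocallyTwoSidedAt_range_of_hasStrictDerivAt (hE : Module.finrank ℝ E = 2) {γ : ℝ → E}
    {t₀ : ℝ} {d : E} (hγ : Continuous γ) (hderiv : HasStrictDerivAt γ d t₀) (hd : d ≠ 0)
    (hemb : 𝓝[range γ] (γ t₀) ≤ map γ (𝓝 t₀)) : IsLocallyTwoSidedAt (range γ) (γ t₀) := by
  obtain ⟨n, L, hL⟩ := exists_equiv_prod_apply_of_finrank_eq_two hE hd
  let Φ : ℝ × ℝ → E := fun q ↦ γ q.1 + q.2 • n
  have hΦ₀ (t : ℝ) : Φ (t, 0) = γ t := by simp [Φ]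
  have hΦ : Continuous Φ := by fun_prop
  have hderivΦ : HasStrictFDerivAt Φ (L : ℝ × ℝ →L[ℝ] E) (t₀, 0) := by
    have hfst := hderiv.hasStrictFDerivAt.comp (f := Prod.fst) ((t₀, 0) : ℝ × ℝ)
      hasStrictFDerivAt_fst
    have hsnd := (hasStrictFDerivAt_snd (𝕜 := ℝ) (p := ((t₀, 0) : ℝ × ℝ))).smul_const n
    refine (hfst.add hsnd).congr_fderiv ?_
    ext <;> simp [hL]
  have hinj := hderivΦ.eventually_left_inverse
  have := FiniteDimensional.of_finrank_pos (K := ℝ) (V := E) (by lia)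
  have := FiniteDimensional.complete ℝ E
  rw [← hΦ₀]
  refine isLocallyTwoSidedAt_of_nhds_le_map hΦ
    (hderivΦ.map_nhds_eq_of_surj (LinearMap.range_eq_top.2 L.surjective)).ge ?_
  have hreturn : ∀ᶠ y in 𝓝 (Φ (t₀, 0)), y ∈ range γ →
      ∃ t, γ t = y ∧ hderivΦ.localInverse Φ L _ (Φ (t, 0)) = (t, 0) := by
    have hinj₀ := (Continuous.prodMk_left (0 : ℝ)).continuousAt.eventually hinj
    rw [hΦ₀]
    filter_upwards [eventually_nhdsWithin_iff.1 (hemb (image_mem_map hinj₀))] with y hy hyγ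
    exact (hy hyγ).imp fun t ht ↦ ⟨ht.2, ht.1⟩
  filter_upwards [hinj, hΦ.continuousAt.eventually hreturn] with q hq hreturn
  refine ⟨fun hqγ ↦ ?_, fun hq₀ ↦ ⟨q.1, by simp [Φ, hq₀]⟩⟩
  obtain ⟨t, ht, hinv⟩ := hreturn hqγ
  rw [hΦ₀, ht, hq] at hinv
  exact congrArg Prod.snd hinv

/-- The curve factors through an embedding of the circle. -/
lemma map_nhds_eq_nhdsWithin_range_of_periodic {X : Type*} [TopologicalSpace X] [T2Space X]
    {γ : ℝ → X} {T : ℝ} (hT : 0 < T) (hγ : Continuous γ) (hper : Function.Periodic γ T)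
    (hinj : ∀ s t, γ s = γ t → ∃ n : ℤ, s - t = n * T) (t : ℝ) :
    map γ (𝓝 t) = 𝓝[range γ] (γ t) := by
  have : Fact (0 < T) := ⟨hT⟩
  have hlift : Continuous (hper.lift : AddCircle T → X) := continuous_quot_lift _ hγ
  have hlift_inj : Function.Injective (hper.lift : AddCircle T → X) := by
    rintro ⟨s⟩ ⟨t⟩ hst
    obtain ⟨n, hn⟩ := hinj s t hst
    refine QuotientAddGroup.eq.2 (AddSubgroup.mem_zmultiples_iff.2 ⟨-n, ?_⟩)
    rw [zsmul_eq_mul, Int.cast_neg, neg_mul, ← hn]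
    ring
  have hrange : range (hper.lift : AddCircle T → X) = range γ :=
    (QuotientAddGroup.mk_surjective.range_comp _).symm
  have hmk : map (QuotientAddGroup.mk : ℝ → AddCircle T) (𝓝 t) = 𝓝 (t : AddCircle T) :=
    QuotientAddGroup.isOpenMap_coe.map_nhds_eq continuous_quot_mk.continuousAt
  calc map γ (𝓝 t) = map hper.lift (map (QuotientAddGroup.mk : ℝ → AddCircle T) (𝓝 t)) :=
        map_map.symm
    _ = 𝓝[range γ] (γ t) := by
        rw [hmk, (hlift.isClosedEmbedding hlift_inj).isEmbedding.map_nhds_eq, hrange, hper.lift_coe]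

lemma addHaar_range_eq_zero_of_finrank_lt {F : Type*} [NormedAddCommGroup F] [NormedSpace ℝ F]
    [FiniteDimensional ℝ F] [FiniteDimensional ℝ E] [MeasurableSpace E] [BorelSpace E]
    (m : Measure E) [m.IsAddHaarMeasure] {γ : F → E} (hγ : ContDiff ℝ 1 γ)
    (hfinrank : Module.finrank ℝ F < Module.finrank ℝ E) : m (range γ) = 0 := by
  refine measure_zero_of_dimH_lt (d := Module.finrank ℝ E) ?_
    (hγ.dimH_range_le.trans_lt (by exact_mod_cast hfinrank))
  rw [NNReal.coe_natCast]
  exact Measure.absolutelyContinuous_isAddHaarMeasure m _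

end Curve

namespace IsSmoothJordanCurve

variable {Γ : Set Pt}

lemma isClosed (hΓ : IsSmoothJordanCurve Γ) : IsClosed Γ := by
  obtain ⟨γ, hγ, hper, -, -, rfl⟩ := hΓ
  rw [← hper.image_Icc two_pi_pos 0]
  exact (isCompact_Icc.image hγ.continuous).isClosed

lemma volume_eq_zero (hΓ : IsSmoothJordanCurve Γ) : volume Γ = 0 := by
  obtain ⟨γ, hγ, -, -, -, rfl⟩ := hΓ
  exact addHaar_range_eq_zero_of_finrank_lt volume (hγ.of_le (by simp)) (by simp)

lemma isLocallyTwoSidedAt (hΓ : IsSmoothJordanCurve Γ) {x : Pt} (hx : x ∈ Γ) :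
    IsLocallyTwoSidedAt Γ x := by
  obtain ⟨γ, hγ, hper, hinj, hreg, rfl⟩ := hΓ
  obtain ⟨t₀, rfl⟩ := hx
  exact isLocallyTwoSidedAt_range_of_hasStrictDerivAt (by simp) hγ.continuous
    (hγ.contDiffAt.hasStrictDerivAt (by simp)) (hreg t₀)
    (map_nhds_eq_nhdsWithin_range_of_periodic two_pi_pos hγ.continuous hper hinj t₀).ge

end IsSmoothJordanCurve

section LocallyConstantExtension

variable {E : Type*} [NormedAddCommGroup E] [NormedSpace ℝ E]

/-- The function `f` on the whole space is a locally constant extension of `F` from `K`: it agrees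
on `K` with `F`, which is `C¹` around `K`, and it is constant off `K` near every point of the
space. Taking the last condition at the points of `K` as well makes `f` continuous across the
frontier of `K`. -/
structure IsLocallyConstantExtension (K : Set E) (F f : E → ℝ) : Prop where
  contDiffAt : ∀ x ∈ K, ContDiffAt ℝ 1 F x
  eqOn : EqOn f F K
  eventually_eq : ∀ x, ∀ᶠ y in 𝓝[Kᶜ] x, f y = f x

lemma eq_of_forall_mem_Ioo_eventually_eq {g : ℝ → ℝ} {a b : ℝ} (hab : a ≤ b)
    (hg : ContinuousOn g (Icc a b)) (hloc : ∀ t ∈ Ioo a b, ∀ᶠ s in 𝓝 t, g s = g t) :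
    g a = g b := by
  rcases hab.eq_or_lt with rfl | hlt
  · rfl
  obtain ⟨c, -, hc⟩ := exists_hasDerivAt_eq_slope g (fun _ ↦ 0) hlt hg fun t ht ↦
    (hasDerivAt_const t (g t)).congr_of_eventuallyEq (hloc t ht)
  exact (sub_eq_zero.1 ((div_eq_zero_iff.1 hc.symm).resolve_right (sub_pos.2 hlt).ne')).symm

namespace IsLocallyConstantExtension

variable {K : Set E} {F G f g : E → ℝ}

lemma of_eq_zero (hF : ∀ x ∈ K, ContDiffAt ℝ 1 F x) (hfF : EqOn f F K)
    (hf : ∀ x ∉ K, f x = 0) (hfr : ∀ x ∈ frontier K, F x = 0) :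
    IsLocallyConstantExtension K F f := by
  refine ⟨hF, hfF, fun x ↦ ?_⟩
  by_cases hx : x ∈ interior K
  · filter_upwards [mem_nhdsWithin_of_mem_nhds (mem_interior_iff_mem_nhds.1 hx),
      self_mem_nhdsWithin] with y hy hyK using absurd hy hyK
  have hfx : f x = 0 := by
    by_cases hxK : x ∈ K
    · rw [hfF hxK, hfr x ⟨subset_closure hxK, hx⟩]
    · exact hf x hxK
  filter_upwards [self_mem_nhdsWithin] with y hy
  rw [hf y hy, hfx]

lemma add (hf : IsLocallyConstantExtension K F f) (hg : IsLocallyConstantExtension K G g) :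
    IsLocallyConstantExtension K (fun x ↦ F x + G x) (fun x ↦ f x + g x) where
  contDiffAt x hx := (hf.contDiffAt x hx).add (hg.contDiffAt x hx)
  eqOn x hx := congrArg₂ (· + ·) (hf.eqOn hx) (hg.eqOn hx)
  eventually_eq x := by
    filter_upwards [hf.eventually_eq x, hg.eventually_eq x] with y hfy hgy
    rw [hfy, hgy]

lemma mul (hf : IsLocallyConstantExtension K F f) (hg : IsLocallyConstantExtension K G g) :
    IsLocallyConstantExtension K (fun x ↦ F x * G x) (fun x ↦ f x * g x) where
  contDiffAt x hx := (hf.contDiffAt x hx).mul (hg.contDiffAt x hx)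
  eqOn x hx := congrArg₂ (· * ·) (hf.eqOn hx) (hg.eqOn hx)
  eventually_eq x := by
    filter_upwards [hf.eventually_eq x, hg.eventually_eq x] with y hfy hgy
    rw [hfy, hgy]

lemma eventually_eq_nhds (h : IsLocallyConstantExtension K F f) (hK : IsClosed K) {x : E}
    (hx : x ∉ K) : ∀ᶠ y in 𝓝 x, f y = f x := by
  simpa only [hK.isOpen_compl.nhdsWithin_eq hx] using h.eventually_eq x

lemma continuous (h : IsLocallyConstantExtension K F f) (hK : IsClosed K) : Continuous f := by
  refine continuous_iff_continuousAt.2 fun x ↦ ?_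
  rw [← continuousWithinAt_univ, ← union_compl_self K, continuousWithinAt_union]
  refine ⟨?_, continuousWithinAt_const.congr_of_eventuallyEq (h.eventually_eq x) rfl⟩
  by_cases hx : x ∈ K
  · exact (h.contDiffAt x hx).continuousAt.continuousWithinAt.congr h.eqOn (h.eqOn hx)
  · exact continuousWithinAt_of_notMem_closure (hK.closure_eq.symm ▸ hx)

/-- On a segment, only the part between the first and the last point in `K` contributes to the
variation of `f`. -/
lemma lipschitzWith_of_lipschitzOnWith (h : IsLocallyConstantExtension K F f) (hK : IsClosed K)
    {C : NNReal} (hC : LipschitzOnWith C f K) : LipschitzWith C f := by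
  refine LipschitzWith.of_dist_le_mul fun x y ↦ ?_
  let γ : ℝ → E := AffineMap.lineMap x y
  have hγ : Continuous γ := AffineMap.lineMap_continuous
  have hγ₀ : γ 0 = x := AffineMap.lineMap_apply_zero x y
  have hγ₁ : γ 1 = y := AffineMap.lineMap_apply_one x y
  have eq_of_notMem {a b : ℝ} (hab : a ≤ b) (hout : ∀ t ∈ Ioo a b, γ t ∉ K) :
      f (γ a) = f (γ b) :=
    eq_of_forall_mem_Ioo_eventually_eq (g := f ∘ γ) hab ((h.continuous hK).comp hγ).continuousOn
      fun t ht ↦ hγ.continuousAt.eventually (h.eventually_eq_nhds hK (hout t ht))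
  have hcompact : IsCompact (Icc (0 : ℝ) 1 ∩ γ ⁻¹' K) :=
    isCompact_Icc.inter_right (hK.preimage hγ)
  rcases (Icc (0 : ℝ) 1 ∩ γ ⁻¹' K).eq_empty_or_nonempty with hempty | hne
  · have hxy := eq_of_notMem zero_le_one fun t ht htK ↦
      notMem_empty t (hempty ▸ ⟨Ioo_subset_Icc_self ht, htK⟩)
    rw [← hγ₀, ← hγ₁, hxy, dist_self]
    positivity
  obtain ⟨a, ⟨⟨ha₀, ha₁⟩, haK⟩, ha_least⟩ := hcompact.exists_isLeast hne
  obtain ⟨b, ⟨⟨hb₀, hb₁⟩, hbK⟩, hb_greatest⟩ := hcompact.exists_isGreatest hne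
  have hfirst : f (γ 0) = f (γ a) := eq_of_notMem ha₀ fun t ht htK ↦
    ht.2.not_ge (ha_least ⟨⟨ht.1.le, ht.2.le.trans ha₁⟩, htK⟩)
  have hlast : f (γ b) = f (γ 1) := eq_of_notMem hb₁ fun t ht htK ↦
    ht.1.not_ge (hb_greatest ⟨⟨hb₀.trans ht.1.le, ht.2.le⟩, htK⟩)
  calc dist (f x) (f y) = dist (f (γ a)) (f (γ b)) := by rw [← hfirst, hlast, hγ₀, hγ₁]
    _ ≤ C * dist (γ a) (γ b) := hC.dist_le_mul _ haK _ hbK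
    _ = C * (dist a b * dist x y) := by rw [dist_lineMap_lineMap]
    _ ≤ C * (1 * dist x y) := by gcongr; exact Real.dist_le_of_mem_Icc_01 ⟨ha₀, ha₁⟩ ⟨hb₀, hb₁⟩
    _ = C * dist x y := by rw [one_mul]

lemma exists_lipschitzWith (h : IsLocallyConstantExtension K F f) (hK : IsCompact K) :
    ∃ C, LipschitzWith C f := by
  have hloc : LocallyLipschitzOn K F := fun x hx ↦
    have ⟨C, t, ht, hC⟩ := (h.contDiffAt x hx).exists_lipschitzOnWith
    ⟨C, t, mem_nhdsWithin_of_mem_nhds ht, hC⟩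
  obtain ⟨C, hC⟩ := hloc.exists_lipschitzOnWith_of_compact hK
  refine ⟨C, h.lipschitzWith_of_lipschitzOnWith hK.isClosed fun x hx y hy ↦ ?_⟩
  rw [h.eqOn hx, h.eqOn hy]
  exact hC hx hy

lemma lineDeriv_eq_indicator (h : IsLocallyConstantExtension K F f) (hK : IsClosed K) {x : E}
    (hx : x ∉ frontier K) (e : E) :
    lineDeriv ℝ f x e = K.indicator (fun y ↦ fderiv ℝ F y e) x := by
  by_cases hxK : x ∈ K
  · have hint : K ∈ 𝓝 x :=
      mem_interior_iff_mem_nhds.1 (not_not.1 fun hnot ↦ hx ⟨subset_closure hxK, hnot⟩)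
    have heq : f =ᶠ[𝓝 x] F := mem_of_superset hint h.eqOn
    rw [indicator_of_mem hxK, heq.lineDeriv_eq,
      ((h.contDiffAt x hxK).differentiableAt one_ne_zero).lineDeriv_eq_fderiv]
  · have heq : f =ᶠ[𝓝 x] fun _ ↦ f x := h.eventually_eq_nhds hK hxK
    rw [indicator_of_notMem hxK, heq.lineDeriv_eq]
    simp only [lineDeriv, deriv_const]

lemma continuousOn_fderiv_apply (h : IsLocallyConstantExtension K F f) (e : E) :
    ContinuousOn (fun x ↦ fderiv ℝ F x e) K := fun x hx ↦
  (((h.contDiffAt x hx).fderiv_right (m := 0) (by simp)).continuousAt.clm_apply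
    continuousAt_const).continuousWithinAt

variable [MeasurableSpace E] [BorelSpace E] {m : Measure E} {φ : E → ℝ}

lemma integrable_mul_fderiv [IsFiniteMeasureOnCompacts m] (h : IsLocallyConstantExtension K F f)
    (hK : IsClosed K) (hφ : ContDiff ℝ 1 φ) (hφc : HasCompactSupport φ) (e : E) :
    Integrable (fun x ↦ f x * fderiv ℝ φ x e) m :=
  ((h.continuous hK).mul ((hφ.continuous_fderiv one_ne_zero).clm_apply
    continuous_const)).integrable_of_hasCompactSupport (hφc.fderiv_apply ℝ e).mul_left

variable [FiniteDimensional ℝ E] [m.IsAddHaarMeasure]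

lemma integral_mul_fderiv (h : IsLocallyConstantExtension K F f) (hK : IsCompact K)
    (hnull : m (frontier K) = 0) (hφ : ContDiff ℝ 1 φ) (hφc : HasCompactSupport φ) (e : E) :
    ∫ x, f x * fderiv ℝ φ x e ∂m = -∫ x in K, fderiv ℝ F x e * φ x ∂m := by
  obtain ⟨C, hC⟩ := h.exists_lipschitzWith hK
  obtain ⟨D, hD⟩ := hφ.lipschitzWith_of_hasCompactSupport hφc one_ne_zero
  have hae : (fun x ↦ lineDeriv ℝ f x e * φ x) =ᵐ[m]
      K.indicator fun x ↦ fderiv ℝ F x e * φ x := by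
    filter_upwards [compl_mem_ae_iff.2 hnull] with x hx
    rw [h.lineDeriv_eq_indicator hK.isClosed hx, indicator_mul_left]
  rw [← integral_indicator hK.measurableSet, ← integral_congr_ae hae,
    hC.integral_lineDeriv_mul_eq hD hφc, ← integral_neg]
  refine integral_congr_ae (.of_forall fun x ↦ ?_)
  simp only [(hφ.differentiable one_ne_zero x).lineDeriv_eq_fderiv, map_neg]
  ring

theorem integral_sum_mul_fderiv_eq_zero {ι : Type*} [Fintype ι] {F f : ι → E → ℝ} {e : ι → E}
    (h : ∀ i, IsLocallyConstantExtension K (F i) (f i)) (hK : IsCompact K)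
    (hnull : m (frontier K) = 0) (hdiv : ∀ᵐ x ∂m.restrict K, ∑ i, fderiv ℝ (F i) x (e i) = 0)
    (hφ : ContDiff ℝ 1 φ) (hφc : HasCompactSupport φ) :
    ∫ x, ∑ i, f i x * fderiv ℝ φ x (e i) ∂m = 0 := by
  have hint (i : ι) : IntegrableOn (fun x ↦ fderiv ℝ (F i) x (e i) * φ x) K m :=
    (((h i).continuousOn_fderiv_apply (e i)).mul hφ.continuous.continuousOn).integrableOn_compact hK
  calc ∫ x, ∑ i, f i x * fderiv ℝ φ x (e i) ∂m
      = ∑ i, ∫ x, f i x * fderiv ℝ φ x (e i) ∂m :=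
        integral_finsetSum _ fun i _ ↦ (h i).integrable_mul_fderiv hK.isClosed hφ hφc (e i)
    _ = ∑ i, -∫ x in K, fderiv ℝ (F i) x (e i) * φ x ∂m := by
        simp_rw [(h _).integral_mul_fderiv hK hnull hφ hφc]
    _ = -∫ x in K, (∑ i, fderiv ℝ (F i) x (e i)) * φ x ∂m := by
        rw [Finset.sum_neg_distrib, ← integral_finsetSum _ fun i _ ↦ hint i]
        simp_rw [Finset.sum_mul]
    _ = 0 := by
        rw [neg_eq_zero]
        refine integral_eq_zero_of_ae ?_
        filter_upwards [hdiv] with x hx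
        rw [hx, zero_mul, Pi.zero_apply]

end IsLocallyConstantExtension

end LocallyConstantExtension

section PartialDerivatives

variable {f g u : Pt → ℝ} {x : Pt} (i : Fin 2)

lemma pd_add (hf : DifferentiableAt ℝ f x) (hg : DifferentiableAt ℝ g x) :
    pd i (fun y ↦ f y + g y) x = pd i f x + pd i g x := by
  simp only [pd, fderiv_fun_add hf hg, add_apply]

lemma pd_mul (hf : DifferentiableAt ℝ f x) (hg : DifferentiableAt ℝ g x) :
    pd i (fun y ↦ f y * g y) x = pd i f x * g x + f x * pd i g x := by
  simp only [pd, fderiv_fun_mul hf hg, add_apply, smul_apply, smul_eq_mul]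
  ring

lemma pd_neg (f : Pt → ℝ) (x : Pt) : pd i (fun y ↦ -f y) x = -pd i f x := by
  simp only [pd, fderiv_fun_neg, neg_apply]

lemma contDiffAt_pd (hu : ContDiffAt ℝ 2 u x) : ContDiffAt ℝ 1 (pd i u) x :=
  (hu.fderiv_right (by norm_num)).clm_apply contDiffAt_const

lemma pd_comm (hu : ContDiffAt ℝ 2 u x) (j : Fin 2) : pd i (pd j u) x = pd j (pd i u) x := by
  have hdiff : DifferentiableAt ℝ (fderiv ℝ u) x :=
    (hu.fderiv_right (m := 1) (by norm_num)).differentiableAt one_ne_zero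
  have pd_pd (i j : Fin 2) : pd i (pd j u) x =
      fderiv ℝ (fderiv ℝ u) x (EuclideanSpace.single i 1) (EuclideanSpace.single j 1) := by
    unfold pd
    rw [fderiv_clm_apply hdiff (differentiableAt_const _)]
    simp
  rw [pd_pd, pd_pd]
  exact hu.isSymmSndFDerivAt (by simp) _ _

end PartialDerivatives

section Bernoulli

/-- The Bernoulli pressure of the flow with stream function `u`, normalized to vanish at the
stagnation points on the level `u = c`. It is the pressure of the steady flow `(∂₂u, -∂₁u)` when
`Δu + F'(u) = 0`. -/
def bernoulliPressure (F : ℝ → ℝ) (u : Pt → ℝ) (c : ℝ) (x : Pt) : ℝ :=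
  F c - F (u x) - ((pd 0 u x) ^ 2 + (pd 1 u x) ^ 2) / 2

variable {F : ℝ → ℝ} {u : Pt → ℝ} {c : ℝ} {x : Pt}

lemma contDiffAt_bernoulliPressure (hF : ContDiff ℝ 1 F) (hu : ContDiffAt ℝ 2 u x) :
    ContDiffAt ℝ 1 (bernoulliPressure F u c) x :=
  (contDiffAt_const.sub (hF.contDiffAt.comp x (hu.of_le (by norm_num)))).sub
    ((((contDiffAt_pd 0 hu).pow 2).add ((contDiffAt_pd 1 hu).pow 2)).div_const 2)

lemma pd_bernoulliPressure (hF : Differentiable ℝ F) (hu : ContDiffAt ℝ 2 u x) (i : Fin 2) :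
    pd i (bernoulliPressure F u c) x =
      -(deriv F (u x) * pd i u x + pd 0 u x * pd i (pd 0 u) x + pd 1 u x * pd i (pd 1 u) x) := by
  have hFu : HasFDerivAt (fun y ↦ F (u y)) (deriv F (u x) • fderiv ℝ u x) x :=
    (hF (u x)).hasDerivAt.comp_hasFDerivAt x (hu.differentiableAt two_ne_zero).hasFDerivAt
  have hpd (j : Fin 2) : HasFDerivAt (pd j u) (fderiv ℝ (pd j u) x) x :=
    ((contDiffAt_pd j hu).differentiableAt one_ne_zero).hasFDerivAt
  have hP : HasFDerivAt (bernoulliPressure F u c) _ x := ((hasFDerivAt_const (F c) x).sub hFu).sub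
    ((((hpd 0).pow 2).add ((hpd 1).pow 2)).mul_const (2⁻¹ : ℝ))
  rw [pd, hP.fderiv]
  simp only [zero_sub, pd, Nat.add_one_sub_one, pow_one, nsmul_eq_mul, Nat.cast_ofNat, smul_add,
    sub_apply, neg_apply, smul_apply, smul_eq_mul, add_apply]
  ring

lemma divergence_velocity_eq_zero (hu : ContDiffAt ℝ 2 u x) :
    pd 0 (pd 1 u) x + pd 1 (fun y ↦ -pd 0 u y) x = 0 := by
  rw [pd_neg, pd_comm 0 hu 1, add_neg_cancel]

lemma divergence_stress_fst_eq_zero (hF : ContDiff ℝ 1 F) (hu : ContDiffAt ℝ 2 u x)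
    (heq : lap u x + deriv F (u x) = 0) :
    pd 0 (fun y ↦ pd 1 u y * pd 1 u y + bernoulliPressure F u c y) x +
      pd 1 (fun y ↦ -pd 0 u y * pd 1 u y) x = 0 := by
  have h₀ := (contDiffAt_pd 0 hu).differentiableAt one_ne_zero
  have h₁ := (contDiffAt_pd 1 hu).differentiableAt one_ne_zero
  rw [pd_add 0 (h₁.fun_mul h₁) ((contDiffAt_bernoulliPressure hF hu).differentiableAt one_ne_zero),
    pd_mul 0 h₁ h₁, pd_bernoulliPressure (hF.differentiable one_ne_zero) hu,
    pd_mul 1 h₀.fun_neg h₁, pd_neg, pd_comm 0 hu 1]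
  rw [lap] at heq
  linear_combination -pd 0 u x * heq

lemma divergence_stress_snd_eq_zero (hF : ContDiff ℝ 1 F) (hu : ContDiffAt ℝ 2 u x)
    (heq : lap u x + deriv F (u x) = 0) :
    pd 0 (fun y ↦ pd 1 u y * -pd 0 u y) x +
      pd 1 (fun y ↦ -pd 0 u y * -pd 0 u y + bernoulliPressure F u c y) x = 0 := by
  have h₀ := (contDiffAt_pd 0 hu).differentiableAt one_ne_zero
  have h₁ := (contDiffAt_pd 1 hu).differentiableAt one_ne_zero
  rw [pd_add 1 (h₀.fun_neg.fun_mul h₀.fun_neg)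
      ((contDiffAt_bernoulliPressure hF hu).differentiableAt one_ne_zero),
    pd_mul 1 h₀.fun_neg h₀.fun_neg, pd_bernoulliPressure (hF.differentiable one_ne_zero) hu,
    pd_mul 0 h₁ h₀.fun_neg, pd_neg, pd_neg, pd_comm 0 hu 1]
  rw [lap] at heq
  linear_combination -pd 1 u x * heq

end Bernoulli

section WeakSolution

variable {Ω : Set Pt}

lemma integral_mul_pd_add_mul_pd_eq_zero {F₁ F₂ f₁ f₂ φ : Pt → ℝ} (hΩ : Bornology.IsBounded Ω)
    (hnull : volume (frontier Ω) = 0) (h₁ : IsLocallyConstantExtension (closure Ω) F₁ f₁)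
    (h₂ : IsLocallyConstantExtension (closure Ω) F₂ f₂)
    (hdiv : ∀ x ∈ Ω, pd 0 F₁ x + pd 1 F₂ x = 0) (hφ : ContDiff ℝ 1 φ) (hφc : HasCompactSupport φ) :
    ∫ x, (f₁ x * pd 0 φ x + f₂ x * pd 1 φ x) = 0 := by
  have hdiv_ae : ∀ᵐ x ∂volume.restrict (closure Ω), pd 0 F₁ x + pd 1 F₂ x = 0 := by
    filter_upwards [ae_restrict_mem isClosed_closure.measurableSet,
      ae_restrict_of_ae (compl_mem_ae_iff.2 hnull)] with x hx hxfr
    exact hdiv x (interior_subset (not_not.1 fun hint ↦ hxfr ⟨hx, hint⟩))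
  have := IsLocallyConstantExtension.integral_sum_mul_fderiv_eq_zero (F := ![F₁, F₂])
    (f := ![f₁, f₂]) (e := fun i ↦ EuclideanSpace.single i 1) (m := volume)
    (Fin.forall_fin_two.2 ⟨h₁, h₂⟩) hΩ.isCompact_closure
    (measure_mono_null frontier_closure_subset hnull)
    (by simpa only [Fin.sum_univ_two, Matrix.cons_val_zero, Matrix.cons_val_one, pd] using hdiv_ae)
    hφ hφc
  simpa only [Fin.sum_univ_two, Matrix.cons_val_zero, Matrix.cons_val_one, pd] using this

lemma integral_stress_mul_pd_eq_zero {V₁ V₂ P v₁ v₂ p w₁ w₂ : Pt → ℝ}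
    (hΩ : Bornology.IsBounded Ω) (hnull : volume (frontier Ω) = 0)
    (hv₁ : IsLocallyConstantExtension (closure Ω) V₁ v₁)
    (hv₂ : IsLocallyConstantExtension (closure Ω) V₂ v₂)
    (hp : IsLocallyConstantExtension (closure Ω) P p)
    (hdiv₁ : ∀ x ∈ Ω, pd 0 (fun y ↦ V₁ y * V₁ y + P y) x + pd 1 (fun y ↦ V₂ y * V₁ y) x = 0)
    (hdiv₂ : ∀ x ∈ Ω, pd 0 (fun y ↦ V₁ y * V₂ y) x + pd 1 (fun y ↦ V₂ y * V₂ y + P y) x = 0)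
    (hw₁ : ContDiff ℝ 1 w₁) (hw₁c : HasCompactSupport w₁)
    (hw₂ : ContDiff ℝ 1 w₂) (hw₂c : HasCompactSupport w₂) :
    ∫ x, (v₁ x * v₁ x * pd 0 w₁ x + v₁ x * v₂ x * pd 0 w₂ x + v₂ x * v₁ x * pd 1 w₁ x
      + v₂ x * v₂ x * pd 1 w₂ x + p x * (pd 0 w₁ x + pd 1 w₂ x)) = 0 := by
  have h₁₁ := (hv₁.mul hv₁).add hp
  have h₂₁ := hv₂.mul hv₁
  have h₁₂ := hv₁.mul hv₂
  have h₂₂ := (hv₂.mul hv₂).add hp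
  have hrow₁ : Integrable fun x ↦
      (v₁ x * v₁ x + p x) * pd 0 w₁ x + v₂ x * v₁ x * pd 1 w₁ x :=
    (h₁₁.integrable_mul_fderiv isClosed_closure hw₁ hw₁c _).add
      (h₂₁.integrable_mul_fderiv isClosed_closure hw₁ hw₁c _)
  have hrow₂ : Integrable fun x ↦
      v₁ x * v₂ x * pd 0 w₂ x + (v₂ x * v₂ x + p x) * pd 1 w₂ x :=
    (h₁₂.integrable_mul_fderiv isClosed_closure hw₂ hw₂c _).add
      (h₂₂.integrable_mul_fderiv isClosed_closure hw₂ hw₂c _)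
  calc _ = ∫ x, (((v₁ x * v₁ x + p x) * pd 0 w₁ x + v₂ x * v₁ x * pd 1 w₁ x)
        + (v₁ x * v₂ x * pd 0 w₂ x + (v₂ x * v₂ x + p x) * pd 1 w₂ x)) := by
        congr with x
        ring
    _ = 0 := by
        rw [integral_add hrow₁ hrow₂,
          integral_mul_pd_add_mul_pd_eq_zero hΩ hnull h₁₁ h₂₁ hdiv₁ hw₁ hw₁c,
          integral_mul_pd_add_mul_pd_eq_zero hΩ hnull h₁₂ h₂₂ hdiv₂ hw₂ hw₂c, add_zero]

lemma isLocallyConstantExtension_bernoulliPressure {Ω' Γ₁ Γ₂ : Set Pt} {F : ℝ → ℝ} {u p : Pt → ℝ}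
    {c₁ c₂ : ℝ} (hΩ : IsOpen Ω) (hfr : frontier Ω = Γ₁ ∪ Γ₂) (hdisj : Disjoint Γ₁ Γ₂)
    (hΓ₁ : IsClosed Γ₁) (hΓ₂ : ∀ x ∈ Γ₂, IsLocallyTwoSidedAt Γ₂ x) (hΩ' : IsOpen Ω')
    (hΩ'sub : Ω' ⊆ (closure Ω)ᶜ) (hΩ'fr : frontier Ω' = Γ₂) (hF : ContDiff ℝ 1 F)
    (hu : ∀ x ∈ closure Ω, ContDiffAt ℝ 2 u x) (hgrad : ∀ x ∈ frontier Ω, fderiv ℝ u x = 0)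
    (hu₁ : ∀ x ∈ Γ₁, u x = c₁) (hu₂ : ∀ x ∈ Γ₂, u x = c₂)
    (hp : EqOn p (bernoulliPressure F u c₁) (closure Ω)) (hp' : ∀ x ∈ Ω', p x = F c₁ - F c₂)
    (hp₀ : ∀ x, x ∉ closure Ω → x ∉ Ω' → p x = 0) :
    IsLocallyConstantExtension (closure Ω) (bernoulliPressure F u c₁) p := by
  subst hΩ'fr
  have hpfr {x : Pt} (hx : x ∈ frontier Ω) : p x = F c₁ - F (u x) := by
    simp [hp (frontier_subset_closure hx), bernoulliPressure, pd, hgrad x hx]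
  have hpΩ' : ∀ x ∈ closure Ω', p x = F c₁ - F c₂ := by
    intro x hx
    by_cases hxΩ' : x ∈ Ω'
    · exact hp' x hxΩ'
    · have hxfr : x ∈ frontier Ω' := hΩ'.frontier_eq ▸ ⟨hx, hxΩ'⟩
      rw [hpfr (hfr ▸ Or.inr hxfr), hu₂ x hxfr]
  have hpout : ∀ x ∉ Ω, x ∉ closure Ω' → p x = 0 := by
    intro x hxΩ hxΩ'
    by_cases hxcl : x ∈ closure Ω
    · have hxfr : x ∈ frontier Ω := hΩ.frontier_eq ▸ ⟨hxcl, hxΩ⟩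
      have hxΓ₁ : x ∈ Γ₁ :=
        (hfr ▸ hxfr : x ∈ Γ₁ ∪ frontier Ω').resolve_right fun h ↦ hxΩ' (frontier_subset_closure h)
      rw [hpfr hxfr, hu₁ x hxΓ₁, sub_self]
    · exact hp₀ x hxcl fun h ↦ hxΩ' (subset_closure h)
  have hΩΩ' : Disjoint Ω Ω' := disjoint_left.2 fun x hx hx' ↦ hΩ'sub hx' (subset_closure hx)
  exact ⟨fun x hx ↦ contDiffAt_bernoulliPressure hF (hu x hx), hp,
    eventually_nhdsWithin_compl_closure_eq hΩ
      (fun x ↦ mem_nhdsWithin_compl_closure hΩ hΩ' hΩΩ' hΓ₁ hfr hdisj hΓ₂) hpΩ' hpout⟩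

end WeakSolution

theorem stationary_weak_euler_solution_general
    (Ω Ω' Γ₁ Γ₂ : Set Pt) (F : ℝ → ℝ) (u : Pt → ℝ) (c₁ c₂ : ℝ) (v : Pt → ℝ × ℝ) (p : Pt → ℝ)
    (hΩopen : IsOpen Ω) (hΩbd : Bornology.IsBounded Ω)
    (hfr : frontier Ω = Γ₁ ∪ Γ₂) (hdisj : Disjoint Γ₁ Γ₂) (hnull : volume (frontier Ω) = 0)
    (hΓ₁ : IsClosed Γ₁) (hΓ₂ : ∀ x ∈ Γ₂, IsLocallyTwoSidedAt Γ₂ x)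
    (hΩ'open : IsOpen Ω') (hΩ'sub : Ω' ⊆ (closure Ω)ᶜ) (hΩ'fr : frontier Ω' = Γ₂)
    (hF : ContDiff ℝ 1 F) (hu : ∀ x ∈ closure Ω, ContDiffAt ℝ 2 u x)
    (heq : ∀ x ∈ Ω, lap u x + deriv F (u x) = 0)
    (hgrad : ∀ x ∈ frontier Ω, fderiv ℝ u x = 0)
    (hu₁ : ∀ x ∈ Γ₁, u x = c₁) (hu₂ : ∀ x ∈ Γ₂, u x = c₂)
    (hv : ∀ x ∈ closure Ω, v x = (pd 1 u x, -pd 0 u x)) (hv₀ : ∀ x ∉ closure Ω, v x = 0)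
    (hp : ∀ x ∈ closure Ω, p x = F c₁ - F (u x) - ((pd 0 u x) ^ 2 + (pd 1 u x) ^ 2) / 2)
    (hp' : ∀ x ∈ Ω', p x = F c₁ - F c₂) (hp₀ : ∀ x, x ∉ closure Ω → x ∉ Ω' → p x = 0) :
    Continuous p ∧
    (∀ w : Pt → ℝ × ℝ, ContDiff ℝ 1 w → HasCompactSupport w →
      ∫ x, ((v x).1 * (v x).1 * pd 0 (fun y ↦ (w y).1) x
          + (v x).1 * (v x).2 * pd 0 (fun y ↦ (w y).2) x
          + (v x).2 * (v x).1 * pd 1 (fun y ↦ (w y).1) x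
          + (v x).2 * (v x).2 * pd 1 (fun y ↦ (w y).2) x
          + p x * (pd 0 (fun y ↦ (w y).1) x + pd 1 (fun y ↦ (w y).2) x)) = 0) ∧
    Continuous v ∧ HasCompactSupport v ∧
    (∀ φ : Pt → ℝ, ContDiff ℝ 1 φ → HasCompactSupport φ →
      ∫ x, ((v x).1 * pd 0 φ x + (v x).2 * pd 1 φ x) = 0) := by
  have hgrad_pd (i : Fin 2) : ∀ x ∈ frontier (closure Ω), pd i u x = 0 := fun x hx ↦ by
    rw [pd, hgrad x (frontier_closure_subset hx), zero_apply]
  have hvel₁ : IsLocallyConstantExtension (closure Ω) (pd 1 u) fun x ↦ (v x).1 :=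
    .of_eq_zero (fun x hx ↦ contDiffAt_pd 1 (hu x hx)) (fun x hx ↦ congrArg Prod.fst (hv x hx))
      (fun x hx ↦ congrArg Prod.fst (hv₀ x hx)) (hgrad_pd 1)
  have hvel₂ : IsLocallyConstantExtension (closure Ω) (fun x ↦ -pd 0 u x) fun x ↦ (v x).2 :=
    .of_eq_zero (fun x hx ↦ (contDiffAt_pd 0 (hu x hx)).neg)
      (fun x hx ↦ congrArg Prod.snd (hv x hx)) (fun x hx ↦ congrArg Prod.snd (hv₀ x hx))
      fun x hx ↦ neg_eq_zero.2 (hgrad_pd 0 x hx)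
  have hpres := isLocallyConstantExtension_bernoulliPressure hΩopen hfr hdisj hΓ₁ hΓ₂ hΩ'open
    hΩ'sub hΩ'fr hF hu hgrad hu₁ hu₂ hp hp' hp₀
  have huΩ : ∀ x ∈ Ω, ContDiffAt ℝ 2 u x := fun x hx ↦ hu x (subset_closure hx)
  exact ⟨hpres.continuous isClosed_closure,
    fun w hw hwc ↦ integral_stress_mul_pd_eq_zero hΩbd hnull hvel₁ hvel₂ hpres
      (fun x hx ↦ divergence_stress_fst_eq_zero hF (huΩ x hx) (heq x hx))
      (fun x hx ↦ divergence_stress_snd_eq_zero hF (huΩ x hx) (heq x hx))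
      hw.fst (hwc.comp_left (g := Prod.fst) rfl) hw.snd (hwc.comp_left (g := Prod.snd) rfl),
    (hvel₁.continuous isClosed_closure).prodMk (hvel₂.continuous isClosed_closure),
    .intro hΩbd.isCompact_closure hv₀,
    fun φ ↦ integral_mul_pd_add_mul_pd_eq_zero hΩbd hnull hvel₁ hvel₂
      fun x hx ↦ divergence_velocity_eq_zero (huΩ x hx)⟩

/-- With `u` a Neumann eigenfunction of the doubly connected domain `Ω`
which is locally constant on the boundary, the pair `(v,p)` built out of `u` as in the
text is a continuous, compactly supported stationary weak solution of the 2D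
incompressible Euler equations. -/
theorem stationary_weak_euler_solution
    (Ω Ω' Γ₁ Γ₂ : Set Pt) (u : Pt → ℝ) (μ c₁ c₂ : ℝ) (v : Pt → ℝ × ℝ) (p : Pt → ℝ)
    (hΩopen : IsOpen Ω) (hΩbd : Bornology.IsBounded Ω)
    (hfr : frontier Ω = Γ₁ ∪ Γ₂) (hdisj : Disjoint Γ₁ Γ₂)
    (hΓ₁ : IsSmoothJordanCurve Γ₁) (hΓ₂ : IsSmoothJordanCurve Γ₂)
    (hΩ'open : IsOpen Ω') (hΩ'conn : IsConnected Ω') (hΩ'bd : Bornology.IsBounded Ω')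
    (hΩ'sub : Ω' ⊆ (closure Ω)ᶜ)
    (hΩ'comp : ∀ x ∈ Ω', connectedComponentIn (closure Ω)ᶜ x = Ω')
    (hΩ'fr : frontier Ω' = Γ₂)
    (hu : ∃ V : Set Pt, IsOpen V ∧ closure Ω ⊆ V ∧ ContDiffOn ℝ 2 u V)
    (heq : ∀ x ∈ Ω, lap u x + μ * u x = 0)
    (hgrad : ∀ x ∈ frontier Ω, fderiv ℝ u x = 0)
    (hb1 : ∀ x ∈ Γ₁, u x = c₁) (hb2 : ∀ x ∈ Γ₂, u x = c₂)
    (hv₁ : ∀ x ∈ closure Ω, v x = (pd 1 u x, -pd 0 u x))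
    (hv₂ : ∀ x ∉ closure Ω, v x = 0)
    (hp₁ : ∀ x ∈ closure Ω,
      p x = -(1/2) * ((pd 0 u x)^2 + (pd 1 u x)^2 + μ * (u x)^2 - μ * c₁^2))
    (hp₂ : ∀ x ∈ Ω', p x = -(1/2) * (μ * (c₂^2 - c₁^2)))
    (hp₃ : ∀ x, x ∉ closure Ω → x ∉ Ω' → p x = 0) :
    Continuous p ∧
    (∀ w : Pt → ℝ × ℝ, ContDiff ℝ (⊤ : ℕ∞) w → HasCompactSupport w →
      ∫ x, ((v x).1 * (v x).1 * pd 0 (fun y => (w y).1) x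
          + (v x).1 * (v x).2 * pd 0 (fun y => (w y).2) x
          + (v x).2 * (v x).1 * pd 1 (fun y => (w y).1) x
          + (v x).2 * (v x).2 * pd 1 (fun y => (w y).2) x
          + p x * (pd 0 (fun y => (w y).1) x + pd 1 (fun y => (w y).2) x)) = 0) ∧
    Continuous v ∧ HasCompactSupport v ∧
    (∀ φ : Pt → ℝ, ContDiff ℝ (⊤ : ℕ∞) φ → HasCompactSupport φ →
      ∫ x, ((v x).1 * pd 0 φ x + (v x).2 * pd 1 φ x) = 0) := by
  obtain ⟨V, hV, hΩV, huV⟩ := hu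
  have hF (s : ℝ) : HasDerivAt (fun s ↦ μ / 2 * s ^ 2) (μ * s) s :=
    ((hasDerivAt_pow 2 s).const_mul (μ / 2)).congr_deriv (by ring)
  have hnull : volume (frontier Ω) = 0 :=
    hfr ▸ measure_union_null hΓ₁.volume_eq_zero hΓ₂.volume_eq_zero
  obtain ⟨hpc, hmom, hvc, hvsupp, hdiv⟩ := stationary_weak_euler_solution_general Ω Ω' Γ₁ Γ₂
    (fun s ↦ μ / 2 * s ^ 2) u c₁ c₂ v p hΩopen hΩbd hfr hdisj hnull hΓ₁.isClosed
    (fun x ↦ hΓ₂.isLocallyTwoSidedAt) hΩ'open hΩ'sub hΩ'fr (by fun_prop)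
    (fun x hx ↦ huV.contDiffAt (hV.mem_nhds (hΩV hx)))
    (fun x hx ↦ (hF (u x)).deriv ▸ heq x hx) hgrad hb1 hb2 hv₁ hv₂
    (fun x hx ↦ (hp₁ x hx).trans (by ring)) (fun x hx ↦ (hp₂ x hx).trans (by ring)) hp₃
  exact ⟨hpc, fun w hw ↦ hmom w (hw.of_le (by simp)), hvc, hvsupp,
    fun φ hφ ↦ hdiv φ (hφ.of_le (by simp))⟩

end
end

section
/- Let 0 < a < 1, μ ∈ ℝ, and let n ≥ 1 be an integer. Suppose ψ : [a,1] → ℝ is nonconstant, three times continuously differentiable, and satisfies ψ''(r) + ψ'(r)/r + μψ(r) = 0 for all r ∈ [a,1] together with ψ'(a) = ψ'(1) = 0. Then φ := ψ' is a not-identically-zero solution of φ''(r) + φ'(r)/r − φ(r)/r² + μφ(r) = 0 on [a,1] with φ(a) = φ(1) = 0; moreover, if ψ has exactly n zeros in the open interval (a,1), then φ has exactly n − 1 zeros in (a,1). (This expresses the identity μ_{0,n}(a) = λ_{1,n−1}(a) between the n-th radial Neumann eigenvalue and the (n−1)-st 1-mode Dirichlet eigenvalue of the annulus {x ∈ ℝ²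 : a < |x| < 1}.) -/
open Set

/-!
Differentiating the radial equation shows that `ψ'` solves the `1`-mode equation. For the zero
count, write the radial equation in divergence form `(r ψ')' = -μ r ψ`; testing it against `ψ` gives
`(r ψ' ψ)' = r ψ'² - μ r ψ²`, which forces `μ > 0` under Neumann conditions. Rolle's theorem for `ψ`
puts a zero of `ψ'` between any two zeros of `ψ`, and Rolle's theorem for `r ψ'` puts a zero of `ψ`
between any two zeros of `ψ'`, the endpoints included: the two kinds of zeros alternate.
The same works for `ψ'' + q ψ' + μ ψ = 0` with any differentiable `q`, the weight `r` being replaced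
by an integrating factor `p`, `p' = q p`.
-/

theorem encard_le_encard_add_one_of_interleaved {α : Type*} [LinearOrder α] {s t : Set α}
    (h : ∀ x ∈ s, ∀ y ∈ s, x < y → ∃ z ∈ t, z ∈ Ioo x y) : s.encard ≤ t.encard + 1 := by
  by_contra! hlt
  have ht : t.Finite := by
    rw [← encard_lt_top_iff]
    exact le_self_add.trans_lt (hlt.trans_le le_top)
  obtain ⟨u, hus, hu⟩ := exists_subset_encard_eq (Order.add_one_le_of_lt hlt)
  rw [ht.encard_eq_coe_toFinset_card] at hu
  have hufin : u.Finite := finite_of_encard_eq_coe (k := ht.toFinset.card + 1 + 1) hu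
  have hle : hufin.toFinset.card ≤ ht.toFinset.card + 1 := by
    refine Finset.card_le_of_interleaved fun x hx y hy hxy _ => ?_
    obtain ⟨z, hz, hxz, hzy⟩ :=
      h x (hus (hufin.mem_toFinset.1 hx)) y (hus (hufin.mem_toFinset.1 hy)) hxy
    exact ⟨z, ht.mem_toFinset.2 hz, hxz, hzy⟩
  rw [hufin.encard_eq_coe_toFinset_card] at hu
  have hcard : hufin.toFinset.card = ht.toFinset.card + 1 + 1 := by exact_mod_cast hu
  omega

theorem encard_zeros_le_encard_zeros_deriv_add_one {a b : ℝ} {f f' : ℝ → ℝ}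
    (hf : ContinuousOn f (Icc a b)) (hf' : ∀ x ∈ Ioo a b, HasDerivAt f (f' x) x) :
    {x ∈ Icc a b | f x = 0}.encard ≤ {x ∈ Ioo a b | f' x = 0}.encard + 1 := by
  refine encard_le_encard_add_one_of_interleaved fun x ⟨hx, hfx⟩ y ⟨hy, hfy⟩ hxy => ?_
  have hsub : Ioo x y ⊆ Ioo a b := Ioo_subset_Ioo hx.1 hy.2
  obtain ⟨z, hz, hz0⟩ := exists_hasDerivAt_eq_zero hxy (hf.mono (Icc_subset_Icc hx.1 hy.2))
    (hfx.trans hfy.symm) fun z hz => hf' z (hsub hz)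
  exact ⟨z, ⟨hsub hz, hz0⟩, hz⟩

theorem hasDerivAt_eq_zero_of_nonneg_of_eq_endpoints {a b : ℝ} {f f' : ℝ → ℝ}
    (hf : ContinuousOn f (Icc a b)) (hf' : ∀ x ∈ Ioo a b, HasDerivAt f (f' x) x)
    (hnonneg : ∀ x ∈ Ioo a b, 0 ≤ f' x) (hab : f a = f b) : ∀ x ∈ Ioo a b, f' x = 0 := by
  intro x hx
  have hmono : MonotoneOn f (Icc a b) :=
    monotoneOn_of_hasDerivWithinAt_nonneg (f' := f') (convex_Icc a b) hf
      (by simpa only [interior_Icc] using fun y hy => (hf' y hy).hasDerivWithinAt)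
      (by simpa only [interior_Icc] using hnonneg)
  have hle : a ≤ b := (hx.1.trans hx.2).le
  have hconst : ∀ y ∈ Icc a b, f y = f a := fun y hy =>
    le_antisymm ((hmono hy (right_mem_Icc.2 hle) hy.2).trans_eq hab.symm)
      (hmono (left_mem_Icc.2 hle) hy hy.1)
  have heq : f =ᶠ[nhds x] fun _ => f a :=
    Filter.eventually_of_mem (Icc_mem_nhds hx.1 hx.2) hconst
  exact (hf' x hx).unique ((hasDerivAt_const x (f a)).congr_of_eventuallyEq heq)

/-- `ψ` solves the Neumann problem `(p ψ')' + μ w ψ = 0` on `(a, b)`, `ψ'(a) = ψ'(b) = 0`, of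
Sturm–Liouville theory. The derivative of `ψ` is carried along as a function `φ` of its own, so that
the endpoint values are those of `φ`; besides `ψ` only the flux `p φ` has to be differentiable. -/
structure IsNeumannSolution (a b : ℝ) (p w : ℝ → ℝ) (μ : ℝ) (ψ φ : ℝ → ℝ) : Prop where
  continuousOn : ContinuousOn ψ (Icc a b)
  continuousOn_flux : ContinuousOn (fun r => p r * φ r) (Icc a b)
  hasDerivAt : ∀ r ∈ Ioo a b, HasDerivAt ψ (φ r) r
  hasDerivAt_flux : ∀ r ∈ Ioo a b, HasDerivAt (fun r => p r * φ r) (-(μ * w r * ψ r)) r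
  left_eq_zero : φ a = 0
  right_eq_zero : φ b = 0

namespace IsNeumannSolution

variable {a b μ : ℝ} {p w ψ φ : ℝ → ℝ}

theorem eigenvalue_pos (h : IsNeumannSolution a b p w μ ψ φ) (hp : ∀ r ∈ Ioo a b, 0 < p r)
    (hw : ∀ r ∈ Ioo a b, 0 ≤ w r) (hne : ∃ r ∈ Icc a b, φ r ≠ 0) : 0 < μ := by
  by_contra! hμ
  obtain ⟨r, hrIcc, hφr⟩ := hne
  have har : a ≠ r := fun hra => hφr (hra ▸ h.left_eq_zero)
  have hrb : r ≠ b := fun hrb => hφr (hrb ▸ h.right_eq_zero)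
  have hr : r ∈ Ioo a b := ⟨hrIcc.1.lt_of_ne har, hrIcc.2.lt_of_ne hrb⟩
  have hpotential : ∀ x ∈ Ioo a b, 0 ≤ -(μ * w x * ψ x) * ψ x := fun x hx => by
    linarith [mul_nonneg (mul_nonneg (neg_nonneg.2 hμ) (hw x hx)) (mul_self_nonneg (ψ x))]
  have hkinetic : ∀ x ∈ Ioo a b, 0 ≤ p x * φ x * φ x := fun x hx => by
    rw [mul_assoc]
    exact mul_nonneg (hp x hx).le (mul_self_nonneg _)
  have hzero : -(μ * w r * ψ r) * ψ r + p r * φ r * φ r = 0 :=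
    hasDerivAt_eq_zero_of_nonneg_of_eq_endpoints (h.continuousOn_flux.mul h.continuousOn)
      (fun x hx => (h.hasDerivAt_flux x hx).mul (h.hasDerivAt x hx))
      (fun x hx => add_nonneg (hpotential x hx) (hkinetic x hx))
      (by simp [h.left_eq_zero, h.right_eq_zero]) r hr
  have hφ0 : p r * φ r * φ r = 0 := by linarith [hpotential r hr, hkinetic r hr]
  exact mul_ne_zero (mul_ne_zero (hp r hr).ne' hφr) hφr hφ0

theorem encard_zeros_le (h : IsNeumannSolution a b p w μ ψ φ) :
    {r ∈ Ioo a b | ψ r = 0}.encard ≤ {r ∈ Ioo a b | φ r = 0}.encard + 1 :=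
  calc {r ∈ Ioo a b | ψ r = 0}.encard
      ≤ {r ∈ Icc a b | ψ r = 0}.encard := by
        gcongr
        exact Ioo_subset_Icc_self
    _ ≤ {r ∈ Ioo a b | φ r = 0}.encard + 1 :=
        encard_zeros_le_encard_zeros_deriv_add_one h.continuousOn h.hasDerivAt

theorem encard_zeros_deriv_add_one_le (h : IsNeumannSolution a b p w μ ψ φ) (hab : a < b)
    (hw : ∀ r ∈ Ioo a b, w r ≠ 0) (hμ : μ ≠ 0) :
    {r ∈ Ioo a b | φ r = 0}.encard + 1 ≤ {r ∈ Ioo a b | ψ r = 0}.encard := by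
  have hsource : ∀ r ∈ Ioo a b, -(μ * w r * ψ r) = 0 ↔ ψ r = 0 := fun r hr => by
    simp [hμ, hw r hr]
  refine (ENat.add_le_add_iff_right ENat.one_ne_top).1 ?_
  calc {r ∈ Ioo a b | φ r = 0}.encard + 1 + 1
      = (insert a (insert b {r ∈ Ioo a b | φ r = 0})).encard := by
        rw [encard_insert_of_notMem (by simp [hab.ne]), encard_insert_of_notMem (by simp)]
    _ ≤ {r ∈ Icc a b | p r * φ r = 0}.encard := by
        refine encard_le_encard (insert_subset ?_ (insert_subset ?_ fun r ⟨hr, hφr⟩ => ?_))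
        · exact ⟨left_mem_Icc.2 hab.le, by rw [h.left_eq_zero, mul_zero]⟩
        · exact ⟨right_mem_Icc.2 hab.le, by rw [h.right_eq_zero, mul_zero]⟩
        · exact ⟨Ioo_subset_Icc_self hr, by rw [hφr, mul_zero]⟩
    _ ≤ {r ∈ Ioo a b | -(μ * w r * ψ r) = 0}.encard + 1 :=
        encard_zeros_le_encard_zeros_deriv_add_one h.continuousOn_flux h.hasDerivAt_flux
    _ = {r ∈ Ioo a b | ψ r = 0}.encard + 1 := by rw [sep_ext_iff.2 hsource]

theorem encard_zeros_eq (h : IsNeumannSolution a b p w μ ψ φ) (hab : a < b)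
    (hp : ∀ r ∈ Ioo a b, 0 < p r) (hw : ∀ r ∈ Ioo a b, 0 < w r)
    (hne : ∃ r ∈ Icc a b, φ r ≠ 0) :
    {r ∈ Ioo a b | ψ r = 0}.encard = {r ∈ Ioo a b | φ r = 0}.encard + 1 :=
  le_antisymm h.encard_zeros_le <|
    h.encard_zeros_deriv_add_one_le hab (fun r hr => (hw r hr).ne')
      (h.eigenvalue_pos hp (fun r hr => (hw r hr).le) hne).ne'

end IsNeumannSolution

theorem exists_integratingFactor {a b : ℝ} {q : ℝ → ℝ} (hab : a ≤ b)
    (hq : ContinuousOn q (Icc a b)) :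
    ∃ p : ℝ → ℝ, (∀ r, 0 < p r) ∧ ∀ r ∈ Icc a b, HasDerivAt p (q r * p r) r := by
  have hcont : Continuous (IccExtend hab ((Icc a b).domRestrict q)) := hq.domRestrict.Icc_extend'
  refine ⟨fun r => Real.exp (∫ x in a..r, IccExtend hab ((Icc a b).domRestrict q) x),
    fun r => Real.exp_pos _, fun r hr => ?_⟩
  have hderiv := (hcont.integral_hasStrictDerivAt a r).hasDerivAt.exp
  rwa [IccExtend_of_mem hab _ hr, domRestrict_apply, mul_comm] at hderiv

theorem exists_derivWithin_ne_zero_of_ne {a b : ℝ} {f : ℝ → ℝ}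
    (hf : DifferentiableOn ℝ f (Icc a b)) (hne : ∃ r ∈ Icc a b, ∃ s ∈ Icc a b, f r ≠ f s) :
    ∃ r ∈ Icc a b, derivWithin f (Icc a b) r ≠ 0 := by
  by_contra! hzero
  obtain ⟨r, hr, s, hs, hrs⟩ := hne
  have hconst := constant_of_derivWithin_zero hf fun x hx => hzero x (Ico_subset_Icc_self hx)
  exact hrs ((hconst r hr).trans (hconst s hs).symm)

theorem derivWithin_solves_differentiated_equation {𝕜 : Type*} [NontriviallyNormedField 𝕜]
    {s : Set 𝕜} {ψ q : 𝕜 → 𝕜} {μ q' r : 𝕜} (hs : UniqueDiffWithinAt 𝕜 s r) (hr : r ∈ s)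
    (hq : HasDerivWithinAt q q' s r) (hψ : DifferentiableWithinAt 𝕜 ψ s r)
    (hψ' : DifferentiableWithinAt 𝕜 (derivWithin ψ s) s r)
    (hode : ∀ x ∈ s,
      derivWithin (derivWithin ψ s) s x + q x * derivWithin ψ s x + μ * ψ x = 0) :
    derivWithin (derivWithin (derivWithin ψ s) s) s r + q r * derivWithin (derivWithin ψ s) s r
      + q' * derivWithin ψ s r + μ * derivWithin ψ s r = 0 := by
  have hsolved : ∀ x ∈ s,
      derivWithin (derivWithin ψ s) s x = -(q x * derivWithin ψ s x + μ * ψ x) :=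
    fun x hx => by linear_combination hode x hx
  have hderiv := ((hq.mul hψ'.hasDerivWithinAt).add (hψ.hasDerivWithinAt.const_mul μ)).neg
  rw [(hderiv.congr hsolved (hsolved r hr)).derivWithin hs]
  ring

theorem isNeumannSolution_of_integratingFactor {a b μ : ℝ} {p q ψ : ℝ → ℝ}
    (hp : ∀ r ∈ Icc a b, HasDerivAt p (q r * p r) r)
    (hψ : DifferentiableOn ℝ ψ (Icc a b))
    (hψ' : DifferentiableOn ℝ (derivWithin ψ (Icc a b)) (Icc a b))
    (hode : ∀ r ∈ Ioo a b,
      derivWithin (derivWithin ψ (Icc a b)) (Icc a b) r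
        + q r * derivWithin ψ (Icc a b) r + μ * ψ r = 0)
    (hbca : derivWithin ψ (Icc a b) a = 0) (hbcb : derivWithin ψ (Icc a b) b = 0) :
    IsNeumannSolution a b p p μ ψ (derivWithin ψ (Icc a b)) where
  continuousOn := hψ.continuousOn
  continuousOn_flux := (HasDerivAt.continuousOn hp).mul hψ'.continuousOn
  hasDerivAt r hr := (hψ r (Ioo_subset_Icc_self hr)).hasDerivWithinAt.hasDerivAt
    (Icc_mem_nhds hr.1 hr.2)
  hasDerivAt_flux r hr := by
    have hφ := (hψ' r (Ioo_subset_Icc_self hr)).hasDerivWithinAt.hasDerivAt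
      (Icc_mem_nhds hr.1 hr.2)
    refine ((hp r (Ioo_subset_Icc_self hr)).mul hφ).congr_deriv ?_
    linear_combination p r * hode r hr
  left_eq_zero := hbca
  right_eq_zero := hbcb

theorem radial_neumann_gives_dirichlet_general {a b μ : ℝ} {q q' ψ : ℝ → ℝ} (hab : a < b)
    (hq : ∀ r ∈ Icc a b, HasDerivWithinAt q (q' r) (Icc a b) r)
    (hψ : DifferentiableOn ℝ ψ (Icc a b))
    (hψ' : DifferentiableOn ℝ (derivWithin ψ (Icc a b)) (Icc a b))
    (hnc : ∃ r ∈ Icc a b, ∃ s ∈ Icc a b, ψ r ≠ ψ s)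
    (hode : ∀ r ∈ Icc a b,
      derivWithin (derivWithin ψ (Icc a b)) (Icc a b) r
        + q r * derivWithin ψ (Icc a b) r + μ * ψ r = 0)
    (hbca : derivWithin ψ (Icc a b) a = 0) (hbcb : derivWithin ψ (Icc a b) b = 0) :
    (¬ ∀ r ∈ Icc a b, derivWithin ψ (Icc a b) r = 0) ∧
    (∀ r ∈ Icc a b,
      derivWithin (derivWithin (derivWithin ψ (Icc a b)) (Icc a b)) (Icc a b) r
        + q r * derivWithin (derivWithin ψ (Icc a b)) (Icc a b) r
        + q' r * derivWithin ψ (Icc a b) r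
        + μ * derivWithin ψ (Icc a b) r = 0) ∧
    {r ∈ Ioo a b | ψ r = 0}.encard
      = {r ∈ Ioo a b | derivWithin ψ (Icc a b) r = 0}.encard + 1 := by
  have hne := exists_derivWithin_ne_zero_of_ne hψ hnc
  refine ⟨by push Not; exact hne, fun r hr => ?_, ?_⟩
  · exact derivWithin_solves_differentiated_equation (uniqueDiffOn_Icc hab r hr) hr (hq r hr)
      (hψ r hr) (hψ' r hr) hode
  · obtain ⟨p, hp, hp'⟩ := exists_integratingFactor hab.le (HasDerivWithinAt.continuousOn hq)
    exact (isNeumannSolution_of_integratingFactor hp' hψ hψ'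
      (fun r hr => hode r (Ioo_subset_Icc_self hr)) hbca hbcb).encard_zeros_eq hab
        (fun r _ => hp r) (fun r _ => hp r) hne

/-- The derivative of a nonconstant radial Neumann eigenfunction of the
annulus `{a < |x| < 1}` is a nontrivial `1`-mode Dirichlet eigenfunction, and the nodal
count drops by one; this expresses the identity `μ_{0,n}(a) = λ_{1,n−1}(a)`. -/
theorem radial_neumann_gives_dirichlet
    (a μ : ℝ) (n : ℕ) (ha : a ∈ Set.Ioo (0:ℝ) 1) (hn : 1 ≤ n)
    (ψ : ℝ → ℝ) (hC3 : ContDiffOn ℝ 3 ψ (Set.Icc a 1))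
    (hnc : ∃ r ∈ Set.Icc a 1, ∃ s ∈ Set.Icc a 1, ψ r ≠ ψ s)
    (hode : ∀ r ∈ Set.Icc a 1,
      derivWithin (derivWithin ψ (Set.Icc a 1)) (Set.Icc a 1) r
        + derivWithin ψ (Set.Icc a 1) r / r + μ * ψ r = 0)
    (hbca : derivWithin ψ (Set.Icc a 1) a = 0)
    (hbc1 : derivWithin ψ (Set.Icc a 1) 1 = 0) :
    (¬ ∀ r ∈ Set.Icc a 1, derivWithin ψ (Set.Icc a 1) r = 0) ∧
    (∀ r ∈ Set.Icc a 1,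
      derivWithin (derivWithin (derivWithin ψ (Set.Icc a 1)) (Set.Icc a 1)) (Set.Icc a 1) r
        + derivWithin (derivWithin ψ (Set.Icc a 1)) (Set.Icc a 1) r / r
        - derivWithin ψ (Set.Icc a 1) r / r^2
        + μ * derivWithin ψ (Set.Icc a 1) r = 0) ∧
    derivWithin ψ (Set.Icc a 1) a = 0 ∧ derivWithin ψ (Set.Icc a 1) 1 = 0 ∧
    ({r ∈ Set.Ioo a 1 | ψ r = 0}.encard = (n : ℕ∞) →
      {r ∈ Set.Ioo a 1 | derivWithin ψ (Set.Icc a 1) r = 0}.encard = ((n - 1 : ℕ) : ℕ∞)) := by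
  obtain ⟨hnz, hode', hcard⟩ := radial_neumann_gives_dirichlet_general ha.2
    (fun r hr => (hasDerivAt_inv (ha.1.trans_le hr.1).ne').hasDerivWithinAt)
    (hC3.differentiableOn three_ne_zero)
    ((hC3.derivWithin (m := 2) (uniqueDiffOn_Icc ha.2) (by norm_num)).differentiableOn two_ne_zero)
    hnc (fun r hr => by linear_combination hode r hr) hbca hbc1
  refine ⟨hnz, fun r hr => by linear_combination hode' r hr, hbca, hbc1, fun hzeros => ?_⟩
  rw [hzeros, ← Nat.sub_add_cancel hn, Nat.cast_add_one] at hcard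
  exact (ENat.add_left_injective_of_ne_top ENat.one_ne_top hcard).symm
end

section
/- For every integer l ≥ 4 there exist a ∈ (0,1) and μ > 0 with the following three properties. (i) The Neumann problem ψ''(r) + ψ'(r)/r + μψ(r) = 0 on (a,1) with ψ'(a) = ψ'(1) = 0 has a nonconstant C² solution with exactly two zeros in (a,1) (so μ equals the second nontrivial radial Neumann eigenvalue μ_{0,2}(a) of the annulus {a < |x| < 1}). (ii) The Dirichlet problem φ''(r) + φ'(r)/r − l²φ(r)/r² + μφ(r) = 0 on (a,1) with φ(a) = φ(1) = 0 has a C² solution φ which is positive on (a,1) (so μ equals the first l-mode Dirichlet eigenvalue λ_{l,0}(a)). (iii) Non-resonance: for every integer m ≥ 1, every not-identically-zero C² solution w of w''(r) + w'(r)/r − (ml)²w(r)/r² + μw(r) = 0 on (a,1) with w(a) = w(1) = 0 satisfies m = 1 and w is a scalar multiple of φ. -/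
open Set

/-!
In the variable `t = log r + (log μ) / 2` the radial equation of angular mode `k` becomes
`u'' = (k² - e^{2t}) u` on an interval `[σ, τ]` with `e^{2τ} = μ` and `e^{σ - τ} = a`, so that the
eigenvalue no longer occurs in the equation. Its solutions are `A sin (α - δ)` for an increasing
phase `α = α_k` and an amplitude `A > 0`. Hence there is a positive Dirichlet solution of mode `l`
exactly when `α_l` advances by `π` from `σ` to `τ`. By `J₀' = -J₁`, derivatives of radial Neumann
solutions are Dirichlet solutions of mode `1`, so two zeros of the Neumann solution correspond to an
advance of `α₁` by `2π`.

For given `σ` let `τ` be the point where `α_l` has advanced by `π`. For `e^σ = 1/10` the mode `1`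
has already advanced by at least `2π` at `τ`; for `e^σ = 2l` the centrifugal term is negligible and
it has advanced by at most `2π`. Both bounds follow from Sturm comparison, with `r^{-1/2} sin (ω r)`
and with explicit polynomials. The intermediate value theorem gives a crossing. There, the modes
`m l` with `m > 1` advance by strictly less than `π`, again by Sturm comparison, and so have no
Dirichlet solution.
-/

open Filter Topology Real
open scoped NNReal

section GlobalSolution

variable {E : Type*} [NormedAddCommGroup E] [NormedSpace ℝ E] [CompleteSpace E] {f : ℝ → E → E}

theorem exists_forall_mem_Ioo_hasDerivAt_of_bounded
    (hlip : ∀ T : ℝ, ∃ K : ℝ≥0, ∀ t ∈ Icc (-T) T, LipschitzWith K (f t))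
    (hcont : ∀ x, Continuous (f · x))
    (hbdd : ∀ T : ℝ, ∃ C : ℝ≥0, ∀ t ∈ Icc (-T) T, ∀ x, ‖f t x‖ ≤ C) (x₀ : E) {T : ℝ}
    (hT : 0 ≤ T) :
    ∃ γ : ℝ → E, γ 0 = x₀ ∧ ∀ t ∈ Ioo (-T) T, HasDerivAt γ (f t (γ t)) t := by
  obtain ⟨K, hK⟩ := hlip T
  obtain ⟨C, hC⟩ := hbdd T
  have hpl : IsPicardLindelof f (tmin := -T) (tmax := T) ⟨0, by simpa, hT⟩ x₀
      (C * T.toNNReal) 0 C K :=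
    { lipschitzOnWith := fun t ht => (hK t ht).lipschitzOnWith
      continuousOn := fun x _ => (hcont x).continuousOn
      norm_le := fun t ht x _ => hC t ht x
      mul_max_le := by simp [hT] }
  obtain ⟨γ, hγ0, hγ⟩ := hpl.exists_eq_forall_mem_Icc_hasDerivWithinAt₀
  exact ⟨γ, hγ0, fun t ht => (hγ t (Ioo_subset_Icc_self ht)).hasDerivAt (Icc_mem_nhds ht.1 ht.2)⟩

theorem exists_forall_hasDerivAt_of_bounded
    (hlip : ∀ T : ℝ, ∃ K : ℝ≥0, ∀ t ∈ Icc (-T) T, LipschitzWith K (f t))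
    (hcont : ∀ x, Continuous (f · x))
    (hbdd : ∀ T : ℝ, ∃ C : ℝ≥0, ∀ t ∈ Icc (-T) T, ∀ x, ‖f t x‖ ≤ C) (x₀ : E) :
    ∃ γ : ℝ → E, γ 0 = x₀ ∧ ∀ t, HasDerivAt γ (f t (γ t)) t := by
  choose γ hγ0 hγ using fun n : ℕ =>
    exists_forall_mem_Ioo_hasDerivAt_of_bounded hlip hcont hbdd x₀ n.cast_nonneg
  have agree : ∀ m n : ℕ, 0 < m → m ≤ n → EqOn (γ m) (γ n) (Ioo (-m) m) := by
    intro m n hm hmn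
    obtain ⟨K, hK⟩ := hlip m
    have hsub : Ioo (-m : ℝ) m ⊆ Ioo (-n) n :=
      Ioo_subset_Ioo (neg_le_neg (mod_cast hmn)) (mod_cast hmn)
    exact ODE_solution_unique_of_mem_Ioo (s := fun _ => univ)
      (fun t ht => (hK t (Ioo_subset_Icc_self ht)).lipschitzOnWith) (t₀ := 0) (by simpa)
      (fun t ht => ⟨hγ m t ht, mem_univ _⟩) (fun t ht => ⟨hγ n t (hsub ht), mem_univ _⟩)
      ((hγ0 m).trans (hγ0 n).symm)
  let N : ℝ → ℕ := fun t => ⌊|t|⌋₊ + 1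
  have hN : ∀ t, t ∈ Ioo (-N t : ℝ) (N t) := fun t =>
    abs_lt.mp (by simpa [N] using Nat.lt_floor_add_one |t|)
  refine ⟨fun t => γ (N t) t, hγ0 _, fun t => (hγ _ t (hN t)).congr_of_eventuallyEq ?_⟩
  filter_upwards [Ioo_mem_nhds (hN t).1 (hN t).2] with s hs
  rcases le_total (N s) (N t) with h | h
  · exact agree _ _ (Nat.succ_pos _) h (hN s)
  · exact (agree _ _ (Nat.succ_pos _) h hs).symm

end GlobalSolution

section Prufer

variable {Q u v : ℝ → ℝ}

/-- The linear equation `u'' = Q u` on `ℝ`, as a first-order system with `v = u'`. -/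
structure IsSolutionPair (Q u v : ℝ → ℝ) : Prop where
  hasDerivAt (t : ℝ) : HasDerivAt u (v t) t
  hasDerivAt' (t : ℝ) : HasDerivAt v (Q t * u t) t

theorem IsSolutionPair.continuous (h : IsSolutionPair Q u v) : Continuous u :=
  continuous_iff_continuousAt.mpr fun t => (h.hasDerivAt t).continuousAt

theorem IsSolutionPair.continuous' (h : IsSolutionPair Q u v) : Continuous v :=
  continuous_iff_continuousAt.mpr fun t => (h.hasDerivAt' t).continuousAt

-- The Prüfer angle `θ`, given by `u = ρ sin θ` and `v = ρ cos θ`, satisfies an equation whose right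
-- hand side is bounded in `θ`; this is why its solutions do not blow up.
theorem exists_pruferAngle (hQ : Continuous Q) (θ₀ : ℝ) :
    ∃ θ : ℝ → ℝ, θ 0 = θ₀ ∧ ∀ t, HasDerivAt θ (cos (θ t) ^ 2 - Q t * sin (θ t) ^ 2) t := by
  have bound : ∀ T : ℝ, ∃ C : ℝ≥0, ∀ t ∈ Icc (-T) T, |Q t| ≤ C := fun T => by
    obtain ⟨C, hC⟩ := isCompact_Icc.exists_bound_of_continuousOn (hQ.continuousOn (s := Icc (-T) T))
    exact ⟨C.toNNReal, fun t ht => (hC t ht).trans (le_coe_toNNReal C)⟩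
  refine exists_forall_hasDerivAt_of_bounded (f := fun t x => cos x ^ 2 - Q t * sin x ^ 2)
    (fun T => ?_) (fun x => by fun_prop) (fun T => ?_) θ₀
  · obtain ⟨C, hC⟩ := bound T
    refine ⟨1 + C, fun t ht => lipschitzWith_of_nnnorm_deriv_le (by fun_prop) fun x => ?_⟩
    have hderiv : HasDerivAt (fun x => cos x ^ 2 - Q t * sin x ^ 2) (-(1 + Q t) * sin (2 * x)) x :=
      (((hasDerivAt_cos x).pow 2).sub (((hasDerivAt_sin x).pow 2).const_mul (Q t))).congr_deriv
        (by rw [sin_two_mul]; ring)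
    rw [hderiv.deriv, ← NNReal.coe_le_coe, coe_nnnorm, norm_mul, norm_neg]
    calc ‖1 + Q t‖ * ‖sin (2 * x)‖ ≤ ‖1 + Q t‖ * 1 := by gcongr; exact abs_sin_le_one _
      _ ≤ 1 + C := by rw [mul_one]; exact (norm_add_le _ _).trans (by simpa using hC t ht)
  · obtain ⟨C, hC⟩ := bound T
    refine ⟨1 + C, fun t ht x => (norm_sub_le _ _).trans (add_le_add ?_ ?_)⟩
    · simpa using abs_cos_le_one x
    · rw [norm_mul, norm_pow]
      exact (mul_le_of_le_one_right (norm_nonneg _)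
        (pow_le_one₀ (norm_nonneg _) (abs_sin_le_one x))).trans (hC t ht)

theorem exists_isSolutionPair_of_angle (hQ : Continuous Q) (θ₀ : ℝ) :
    ∃ u v, IsSolutionPair Q u v ∧ u 0 = sin θ₀ ∧ v 0 = cos θ₀ := by
  obtain ⟨θ, rfl, hθ⟩ := exists_pruferAngle hQ θ₀
  have hθc : Continuous θ := continuous_iff_continuousAt.mpr fun t => (hθ t).continuousAt
  let g : ℝ → ℝ := fun t => (1 + Q t) * (sin (θ t) * cos (θ t))
  let ρ : ℝ → ℝ := fun t => exp (∫ s in (0 : ℝ)..t, g s)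
  have hρ : ∀ t, HasDerivAt ρ (ρ t * g t) t := fun t =>
    (Continuous.integral_hasStrictDerivAt (by fun_prop) 0 t).hasDerivAt.exp
  refine ⟨fun t => ρ t * sin (θ t), fun t => ρ t * cos (θ t), ⟨fun t => ?_, fun t => ?_⟩, ?_, ?_⟩
  · refine ((hρ t).mul (hθ t).sin).congr_deriv ?_
    linear_combination ρ t * cos (θ t) * sin_sq_add_cos_sq (θ t)
  · refine ((hρ t).mul (hθ t).cos).congr_deriv ?_
    simp only [g]
    linear_combination ρ t * sin (θ t) * Q t * sin_sq_add_cos_sq (θ t)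
  · simp [ρ]
  · simp [ρ]

end Prufer

section PhaseAmplitude

variable {Q : ℝ → ℝ} {s t : ℝ}

theorem hasDerivAt_wronskian {u v p q : ℝ → ℝ} {v' q' : ℝ} (hu : HasDerivAt u (v t) t)
    (hv : HasDerivAt v v' t) (hp : HasDerivAt p (q t) t) (hq : HasDerivAt q q' t) :
    HasDerivAt (fun s => u s * q s - v s * p s) (u t * q' - v' * p t) t :=
  ((hu.mul hq).sub (hv.mul hp)).congr_deriv (by ring)

/-- The phase-amplitude form of the equation `u'' = Q u`: a positive solution `amp` of the
Ermakov–Pinney equation `A'' = Q A + A⁻³`, with derivative `ampDeriv`, and a primitive `phase` of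
`A⁻²`. The solutions of `u'' = Q u` are then the functions `t ↦ c * amp t * sin (phase t - δ)`. -/
structure PhaseAmplitude (Q : ℝ → ℝ) where
  phase : ℝ → ℝ
  amp : ℝ → ℝ
  ampDeriv : ℝ → ℝ
  amp_pos (t : ℝ) : 0 < amp t
  hasDerivAt_phase (t : ℝ) : HasDerivAt phase (1 / amp t ^ 2) t
  hasDerivAt_amp (t : ℝ) : HasDerivAt amp (ampDeriv t) t
  hasDerivAt_ampDeriv (t : ℝ) : HasDerivAt ampDeriv (Q t * amp t + 1 / amp t ^ 3) t

theorem IsSolutionPair.wronskian_eq {u v p q : ℝ → ℝ} (h : IsSolutionPair Q u v)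
    (h' : IsSolutionPair Q p q) (s t : ℝ) : u s * q s - v s * p s = u t * q t - v t * p t := by
  have hW := fun t => hasDerivAt_wronskian (h.hasDerivAt t) (h.hasDerivAt' t) (h'.hasDerivAt t)
    (h'.hasDerivAt' t)
  exact is_const_of_deriv_eq_zero (fun t => (hW t).differentiableAt)
    (fun t => (hW t).deriv.trans (by ring)) s t

theorem nonempty_phaseAmplitude (hQ : Continuous Q) : Nonempty (PhaseAmplitude Q) := by
  obtain ⟨p, p', hp, hp0, hp0'⟩ := exists_isSolutionPair_of_angle hQ 0
  obtain ⟨q, q', hq, hq0, hq0'⟩ := exists_isSolutionPair_of_angle hQ (π / 2)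
  have hW : ∀ t, q t * p' t - q' t * p t = 1 := fun t => by
    rw [hq.wronskian_eq hp t 0, hp0, hp0', hq0, hq0']; simp
  let R : ℝ → ℝ := fun t => p t ^ 2 + q t ^ 2
  let A : ℝ → ℝ := fun t => √(R t)
  have hR : ∀ t, 0 < R t := fun t => by
    rcases eq_or_ne (p t) 0 with h | h
    · have : q t ≠ 0 := fun h' => by simpa [h, h'] using hW t
      positivity
    · positivity
  have hA : ∀ t, 0 < A t := fun t => sqrt_pos.mpr (hR t)
  have hAR : ∀ t, A t ^ 2 = R t := fun t => sq_sqrt (hR t).le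
  have hAc : Continuous A := ((hp.continuous.pow 2).add (hq.continuous.pow 2)).sqrt
  have hR' : ∀ t, HasDerivAt R (2 * (p t * p' t + q t * q' t)) t := fun t =>
    (((hp.hasDerivAt t).pow 2).add ((hq.hasDerivAt t).pow 2)).congr_deriv (by ring)
  have hA' : ∀ t, HasDerivAt A ((p t * p' t + q t * q' t) / A t) t := fun t =>
    ((hR' t).sqrt (hR t).ne').congr_deriv (by simp only [A]; ring)
  refine ⟨⟨fun t => ∫ s in (0 : ℝ)..t, 1 / A s ^ 2, A, fun t => (p t * p' t + q t * q' t) / A t, hA,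
    fun t => ?_, hA', fun t => ?_⟩⟩
  · exact (Continuous.integral_hasStrictDerivAt
      (continuous_const.div (hAc.pow 2) fun t => (pow_pos (hA t) 2).ne') 0 t).hasDerivAt
  · refine ((((hp.hasDerivAt t).mul (hp.hasDerivAt' t)).add
      ((hq.hasDerivAt t).mul (hq.hasDerivAt' t))).div (hA' t) (hA t).ne').congr_deriv ?_
    have := (hA t).ne'
    have hlagrange : (p' t ^ 2 + q' t ^ 2) * A t ^ 2 = (p t * p' t + q t * q' t) ^ 2 + 1 := by
      linear_combination (p' t ^ 2 + q' t ^ 2) * hAR t + (q t * p' t - q' t * p t + 1) * hW t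
    simp only [Pi.add_apply, Pi.mul_apply]
    field_simp
    linear_combination hlagrange - Q t * A t ^ 2 * hAR t

namespace PhaseAmplitude

variable (P : PhaseAmplitude Q)

theorem continuous_phase : Continuous P.phase :=
  continuous_iff_continuousAt.mpr fun t => (P.hasDerivAt_phase t).continuousAt

theorem strictMono_phase : StrictMono P.phase :=
  strictMono_of_hasDerivAt_pos P.hasDerivAt_phase fun t =>
    one_div_pos.mpr (pow_pos (P.amp_pos t) 2)

/-- The solution of `u'' = Q u` with `u s = 0` and `u' s = 1`. -/
noncomputable def sol (s t : ℝ) : ℝ := P.amp s * P.amp t * sin (P.phase t - P.phase s)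

/-- The derivative of `P.sol s`. -/
noncomputable def solDeriv (s t : ℝ) : ℝ :=
  P.amp s * (P.ampDeriv t * sin (P.phase t - P.phase s)
    + cos (P.phase t - P.phase s) / P.amp t)

theorem isSolutionPair_sol (s : ℝ) : IsSolutionPair Q (P.sol s) (P.solDeriv s) where
  hasDerivAt t := by
    refine (((P.hasDerivAt_amp t).const_mul (P.amp s)).mul
      ((P.hasDerivAt_phase t).sub_const _).sin).congr_deriv ?_
    have := (P.amp_pos t).ne'
    simp only [solDeriv]
    field_simp
  hasDerivAt' t := by
    have hα := (P.hasDerivAt_phase t).sub_const (P.phase s)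
    have hne := (P.amp_pos t).ne'
    refine (((P.hasDerivAt_ampDeriv t).mul hα.sin).add
      (hα.cos.div (P.hasDerivAt_amp t) hne)).const_mul (P.amp s) |>.congr_deriv ?_
    simp only [sol]
    field_simp
    ring

theorem sol_self (s : ℝ) : P.sol s s = 0 := by simp [sol]

theorem solDeriv_self (s : ℝ) : P.solDeriv s s = 1 := by
  simp [solDeriv, (P.amp_pos s).ne']

theorem sol_of_phase_eq_add_pi (h : P.phase t = P.phase s + π) : P.sol s t = 0 := by
  simp [sol, h]

theorem solDeriv_of_phase_eq_add_pi (h : P.phase t = P.phase s + π) :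
    P.solDeriv s t = -(P.amp s / P.amp t) := by
  simp only [solDeriv, h, add_sub_cancel_left, sin_pi, cos_pi]; ring

theorem sol_of_phase_eq_add_two_pi (h : P.phase t = P.phase s + 2 * π) : P.sol s t = 0 := by
  simp [sol, h]

theorem solDeriv_of_phase_eq_add_two_pi (h : P.phase t = P.phase s + 2 * π) :
    P.solDeriv s t = P.amp s / P.amp t := by
  simp only [solDeriv, h, add_sub_cancel_left, sin_two_pi, cos_two_pi]; ring

theorem sol_swap (s t : ℝ) : P.sol s t = -P.sol t s := by
  rw [sol, sol, ← neg_sub (P.phase s), sin_neg]; ring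

theorem sol_pos (hst : s < t) (h : P.phase t < P.phase s + π) : 0 < P.sol s t :=
  mul_pos (mul_pos (P.amp_pos s) (P.amp_pos t))
    (sin_pos_of_pos_of_lt_pi (sub_pos.mpr (P.strictMono_phase hst)) (by linarith))

theorem sol_nonneg (hst : s ≤ t) (h : P.phase t ≤ P.phase s + π) : 0 ≤ P.sol s t :=
  mul_nonneg (mul_pos (P.amp_pos s) (P.amp_pos t)).le
    (sin_nonneg_of_nonneg_of_le_pi (sub_nonneg.mpr (P.strictMono_phase.monotone hst))
      (by linarith))

theorem sol_neg (h₁ : P.phase s + π < P.phase t) (h₂ : P.phase t < P.phase s + 2 * π) :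
    P.sol s t < 0 := by
  have : sin (P.phase t - P.phase s) < 0 := by
    rw [← sin_sub_two_pi]; exact sin_neg_of_neg_of_neg_pi_lt (by linarith) (by linarith)
  exact mul_neg_of_pos_of_neg (mul_pos (P.amp_pos s) (P.amp_pos t)) this

end PhaseAmplitude

end PhaseAmplitude

section Sturm

variable {Q Q₁ Q₂ u v w : ℝ → ℝ} {t x y : ℝ}

/-- On the interval `[x, y]` the function `u` is continuously differentiable with derivative `v`,
which in turn has derivative `w` in the interior of the interval. -/
structure HasTwoDerivsOn (u v w : ℝ → ℝ) (x y : ℝ) : Prop where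
  continuousOn : ContinuousOn u (Icc x y)
  continuousOn' : ContinuousOn v (Icc x y)
  hasDerivAt (t : ℝ) : t ∈ Ioo x y → HasDerivAt u (v t) t
  hasDerivAt' (t : ℝ) : t ∈ Ioo x y → HasDerivAt v (w t) t

theorem HasTwoDerivsOn.of_hasDerivAt (h : ∀ t, HasDerivAt u (v t) t)
    (h' : ∀ t, HasDerivAt v (w t) t) (x y : ℝ) : HasTwoDerivsOn u v w x y where
  continuousOn t _ := (h t).continuousAt.continuousWithinAt
  continuousOn' t _ := (h' t).continuousAt.continuousWithinAt
  hasDerivAt t _ := h t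
  hasDerivAt' t _ := h' t

theorem HasTwoDerivsOn.mono_right {z : ℝ} (h : HasTwoDerivsOn u v w x y) (hz : z ≤ y) :
    HasTwoDerivsOn u v w x z where
  continuousOn := h.continuousOn.mono (Icc_subset_Icc_right hz)
  continuousOn' := h.continuousOn'.mono (Icc_subset_Icc_right hz)
  hasDerivAt t ht := h.hasDerivAt t (Ioo_subset_Ioo_right hz ht)
  hasDerivAt' t ht := h.hasDerivAt' t (Ioo_subset_Ioo_right hz ht)

namespace PhaseAmplitude

variable (P : PhaseAmplitude Q)

theorem exists_wronskian_sol_slope (h : HasTwoDerivsOn u v w x y) (hxy : x < y) (s : ℝ) :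
    ∃ c ∈ Ioo x y, u y * P.solDeriv s y - v y * P.sol s y - (u x * P.solDeriv s x - v x * P.sol s x)
      = (y - x) * ((Q c * u c - w c) * P.sol s c) := by
  have hsol := P.isSolutionPair_sol s
  obtain ⟨c, hc, hslope⟩ := exists_hasDerivAt_eq_slope _ _ hxy
    ((h.continuousOn.mul hsol.continuous'.continuousOn).sub
      (h.continuousOn'.mul hsol.continuous.continuousOn))
    fun t ht => hasDerivAt_wronskian (h.hasDerivAt t ht) (h.hasDerivAt' t ht) (hsol.hasDerivAt t)
      (hsol.hasDerivAt' t)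
  rw [eq_div_iff (sub_pos.mpr hxy).ne'] at hslope
  simp only [Pi.sub_apply, Pi.mul_apply] at hslope
  exact ⟨c, hc, by linear_combination -hslope⟩

theorem eq_mul_sol (h : HasTwoDerivsOn u v (fun t => Q t * u t) x y) (hx : u x = 0)
    (ht : t ∈ Icc x y) : u t = v x * P.sol x t := by
  rcases ht.1.eq_or_lt with rfl | hxt
  · rw [hx, sol_self, mul_zero]
  · obtain ⟨c, -, hc⟩ := P.exists_wronskian_sol_slope (h.mono_right ht.2) hxt t
    rw [sol_self, solDeriv_self, hx, P.sol_swap t x] at hc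
    linear_combination hc

theorem phase_add_pi_le_of_subsolution (h : HasTwoDerivsOn u v w x y) (hxy : x < y)
    (hux : u x = 0) (huy : u y = 0) (hvy : v y < 0) (hle : ∀ t ∈ Ioo x y, Q t * u t ≤ w t) :
    P.phase x + π ≤ P.phase y := by
  by_contra! hlt
  obtain ⟨c, hc, hslope⟩ := P.exists_wronskian_sol_slope h hxy x
  have hsol_c : 0 < P.sol x c := P.sol_pos hc.1 ((P.strictMono_phase hc.2).trans hlt)
  have hrhs : (y - x) * ((Q c * u c - w c) * P.sol x c) ≤ 0 :=
    mul_nonpos_of_nonneg_of_nonpos (sub_pos.mpr hxy).le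
      (mul_nonpos_of_nonpos_of_nonneg (sub_nonpos.mpr (hle c hc)) hsol_c.le)
  have hlhs : v y * P.sol x y < 0 := mul_neg_of_neg_of_pos hvy (P.sol_pos hxy hlt)
  rw [← hslope, hux, huy, sol_self] at hrhs
  linarith

theorem phase_lt_of_strict_supersolution (h : HasTwoDerivsOn u v w x y) (hxy : x < y)
    (hu : ∀ t ∈ Icc x y, 0 ≤ u t) (hlt : ∀ t ∈ Ioo x y, w t < Q t * u t) :
    P.phase y < P.phase x + π := by
  by_contra! hle
  obtain ⟨z, hz, hzπ⟩ : ∃ z ∈ Icc x y, P.phase z = P.phase x + π :=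
    intermediate_value_Icc hxy.le P.continuous_phase.continuousOn ⟨by linarith [pi_pos], hle⟩
  have hxz : x < z := P.strictMono_phase.lt_iff_lt.mp (by linarith [pi_pos])
  obtain ⟨c, hc, hslope⟩ := P.exists_wronskian_sol_slope (h.mono_right hz.2) hxz x
  have hsol_c : 0 < P.sol x c := P.sol_pos hc.1 (hzπ ▸ P.strictMono_phase hc.2)
  have hrhs : 0 < (z - x) * ((Q c * u c - w c) * P.sol x c) :=
    mul_pos (sub_pos.mpr hxz)
      (mul_pos (sub_pos.mpr (hlt c ⟨hc.1, hc.2.trans_le hz.2⟩)) hsol_c)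
  have hsolDeriv_z : P.solDeriv x z ≤ 0 := by
    rw [P.solDeriv_of_phase_eq_add_pi hzπ, neg_nonpos]
    exact (div_pos (P.amp_pos x) (P.amp_pos z)).le
  rw [← hslope, P.sol_of_phase_eq_add_pi hzπ, sol_self, solDeriv_self] at hrhs
  linarith [hu x ⟨le_rfl, hxy.le⟩, mul_nonpos_of_nonneg_of_nonpos (hu z hz) hsolDeriv_z]

theorem phase_lt_of_potential_lt (P₁ : PhaseAmplitude Q₁) (P₂ : PhaseAmplitude Q₂)
    (hQ : ∀ t ∈ Ioo x y, Q₁ t < Q₂ t) (hxy : x < y) (h₁ : P₁.phase y ≤ P₁.phase x + π) :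
    P₂.phase y < P₂.phase x + π := by
  have hsol := P₁.isSolutionPair_sol x
  have hpos : ∀ t ∈ Ioo x y, 0 < P₁.sol x t := fun t ht =>
    P₁.sol_pos ht.1 ((P₁.strictMono_phase ht.2).trans_le h₁)
  refine P₂.phase_lt_of_strict_supersolution
    (.of_hasDerivAt hsol.hasDerivAt hsol.hasDerivAt' x y) hxy (fun t ht => ?_)
    fun t ht => mul_lt_mul_of_pos_right (hQ t ht) (hpos t ht)
  exact P₁.sol_nonneg ht.1 ((P₁.strictMono_phase.monotone ht.2).trans h₁)

end PhaseAmplitude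

end Sturm

section Bessel

variable {k a b ω : ℝ}

/-- In the variable `t = log r`, the radial equation `r² u'' + r u' + (r² - k²) u = 0` of angular
mode `k` reads `u'' = besselPotential k t * u`. -/
noncomputable def besselPotential (k t : ℝ) : ℝ := k ^ 2 - exp t ^ 2

theorem continuous_besselPotential (k : ℝ) : Continuous (besselPotential k) := by
  unfold besselPotential; fun_prop

/-- A choice of phase and amplitude for the Bessel equation of mode `k` in logarithmic scale. -/
noncomputable def besselPhase (k : ℝ) : PhaseAmplitude (besselPotential k) :=
  (nonempty_phaseAmplitude (continuous_besselPotential k)).some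

theorem hasDerivAt_inv_sqrt_mul_exp (hω : 0 < ω) (t : ℝ) :
    HasDerivAt (fun t => (√(ω * exp t))⁻¹) (-(√(ω * exp t))⁻¹ / 2) t := by
  have hpos : 0 < ω * exp t := by positivity
  refine ((((Real.hasDerivAt_exp t).const_mul ω).sqrt hpos.ne').inv
    (sqrt_pos.mpr hpos).ne').congr_deriv ?_
  have := (sqrt_pos.mpr hpos).ne'
  field_simp
  rw [sq_sqrt hpos.le]

/-- The phase-amplitude form of the equation satisfied by `r ^ (-1/2) * sin (ω * r)` in the
variable `t = log r`. -/
noncomputable def sinePhase (hω : 0 < ω) : PhaseAmplitude fun t => 1 / 4 - ω ^ 2 * exp t ^ 2 where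
  phase t := ω * exp t
  amp t := (√(ω * exp t))⁻¹
  ampDeriv t := -(√(ω * exp t))⁻¹ / 2
  amp_pos t := by positivity
  hasDerivAt_phase t := by
    rw [inv_pow, sq_sqrt (by positivity), one_div, inv_inv]
    exact (Real.hasDerivAt_exp t).const_mul ω
  hasDerivAt_amp := hasDerivAt_inv_sqrt_mul_exp hω
  hasDerivAt_ampDeriv t := by
    refine ((hasDerivAt_inv_sqrt_mul_exp hω t).neg.div_const 2).congr_deriv ?_
    have hsq : √(ω * exp t) ^ 2 = ω * exp t := sq_sqrt (by positivity)
    have : √(ω * exp t) ≠ 0 := by positivity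
    field_simp
    linear_combination -16 * (√(ω * exp t) ^ 2 + ω * exp t) * hsq

theorem besselPhase_add_pi_lt (ha : 0 < a) (hab : π < b - a)
    (h : k ^ 2 - 1 / 4 ≤ (1 - (π / (b - a)) ^ 2) * a ^ 2) :
    (besselPhase k).phase (log a) + π < (besselPhase k).phase (log b) := by
  have hlen : 0 < b - a := pi_pos.trans hab
  have hω : 0 < π / (b - a) := div_pos pi_pos hlen
  by_contra! hle
  refine absurd (PhaseAmplitude.phase_lt_of_potential_lt (besselPhase k) (sinePhase hω)
    (fun t ht => ?_) (log_lt_log ha (by linarith)) hle) (not_lt.mpr ?_)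
  · have hat : a ^ 2 < exp t ^ 2 := by
      gcongr; exact (log_lt_iff_lt_exp ha).mp ht.1
    have hω1 : (π / (b - a)) ^ 2 < 1 :=
      pow_lt_one₀ hω.le ((div_lt_one hlen).mpr hab) two_ne_zero
    unfold besselPotential
    nlinarith
  · simp only [sinePhase]
    rw [exp_log ha, exp_log (by linarith)]
    exact le_of_eq (by field_simp; ring)

theorem besselPhase_lt_add_pi (hk : 1 / 4 < k ^ 2) (ha : 0 < a) (hab : a < b) (hπ : b - a ≤ π) :
    (besselPhase k).phase (log b) < (besselPhase k).phase (log a) + π := by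
  refine PhaseAmplitude.phase_lt_of_potential_lt (sinePhase one_pos) (besselPhase k)
    (fun t _ => ?_) (log_lt_log ha hab) ?_
  · simpa [besselPotential] using hk
  · simpa [sinePhase, exp_log ha, exp_log (ha.trans hab)] using by linarith

section Polynomial

open Polynomial

theorem hasDerivAt_eval_exp (p : ℝ[X]) (t : ℝ) :
    HasDerivAt (fun s => p.eval (exp s)) ((X * derivative p).eval (exp t)) t :=
  ((p.hasDerivAt (exp t)).comp t (Real.hasDerivAt_exp t)).congr_deriv (by simp [mul_comm])

theorem besselPhase_add_pi_le_of_polynomial (p : ℝ[X]) (ha : 0 < a) (hab : a < b)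
    (hpa : p.eval a = 0) (hpb : p.eval b = 0) (hpb' : (derivative p).eval b < 0)
    (hp : ∀ r ∈ Ioo a b,
      (k ^ 2 - r ^ 2) * p.eval r ≤ (X * derivative (X * derivative p)).eval r) :
    (besselPhase k).phase (log a) + π ≤ (besselPhase k).phase (log b) := by
  have hb := ha.trans hab
  refine (besselPhase k).phase_add_pi_le_of_subsolution
    (.of_hasDerivAt (hasDerivAt_eval_exp p) (hasDerivAt_eval_exp _) _ _) (log_lt_log ha hab)
    (by rwa [exp_log ha]) (by rwa [exp_log hb]) ?_
    fun t ht => hp _ ⟨(log_lt_iff_lt_exp ha).mp ht.1, (lt_log_iff_exp_lt hb).mp ht.2⟩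
  rw [exp_log hb, eval_mul, eval_X]
  exact mul_neg_of_pos_of_neg hb hpb'

theorem besselPhase_lt_add_pi_of_polynomial (p : ℝ[X]) (ha : 0 < a) (hab : a < b)
    (hpos : ∀ r ∈ Icc a b, 0 ≤ p.eval r)
    (hp : ∀ r ∈ Ioo a b,
      (X * derivative (X * derivative p)).eval r < (k ^ 2 - r ^ 2) * p.eval r) :
    (besselPhase k).phase (log b) < (besselPhase k).phase (log a) + π := by
  have hb := ha.trans hab
  exact (besselPhase k).phase_lt_of_strict_supersolution
    (.of_hasDerivAt (hasDerivAt_eval_exp p) (hasDerivAt_eval_exp _) _ _) (log_lt_log ha hab)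
    (fun t ht => hpos _ ⟨(log_le_iff_le_exp ha).mp ht.1, (le_log_iff_exp_le hb).mp ht.2⟩)
    fun t ht => hp _ ⟨(log_lt_iff_lt_exp ha).mp ht.1, (lt_log_iff_exp_lt hb).mp ht.2⟩

theorem besselPhase_one_add_pi_le :
    (besselPhase 1).phase (log (1 / 10)) + π ≤ (besselPhase 1).phase (log (98 / 25)) := by
  -- A solution of mode `1` vanishing at `1/10` vanishes again just before `98/25`; the quadratic
  -- factor is a numerical fit to it.
  refine besselPhase_add_pi_le_of_polynomial
    ((X - C (1 / 10)) * (C (98 / 25) - X) * (12 + 3 * X - X ^ 2)) (by norm_num) (by norm_num)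
    (by norm_num) (by norm_num) (by norm_num [derivative_mul]) fun r _ => ?_
  rw [← sub_nonneg]
  calc 0 ≤ r ^ 6 - 7.02 * r ^ 5 + 15.452 * r ^ 4 - 9.096 * r ^ 3 - 3.348 * r ^ 2 + 4.704 := by
        nlinarith [sq_nonneg (r ^ 3 - 3.51 * r ^ 2 + 1.53 * r + 0.82), sq_nonneg (r ^ 2 - 4),
          sq_nonneg (r - 1.9)]
    _ = _ := by
        simp only [one_div, derivative_mul, derivative_sub, derivative_X, derivative_C, sub_zero,
          one_mul, zero_sub, mul_neg, mul_one, neg_sub, derivative_ofNat, zero_mul, zero_add,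
          derivative_X_pow_succ, Nat.cast_one, map_add, map_one, pow_one, derivative_one,
          add_zero, neg_add_rev, eval_mul, eval_X, eval_add, eval_sub, eval_C, eval_ofNat, eval_pow,
          eval_one, eval_neg, one_pow]
        ring

theorem besselPhase_lt_add_pi_of_four_le (hk : 4 ≤ k) :
    (besselPhase k).phase (log (50 / 7)) < (besselPhase k).phase (log (1 / 10)) + π := by
  have hp : ∀ r : ℝ, 0 ≤ r → r ≤ 50 / 7 →
      0 < 172500 - 8680 * r ^ 2 + 155 * r ^ 4 - r ^ 6 := fun r h0 hr => by
    have hz : r ^ 2 ≤ (50 / 7) ^ 2 := by gcongr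
    nlinarith [mul_nonneg (sub_nonneg.mpr hz) (sq_nonneg (r ^ 2 - 52))]
  -- Modelled on the Taylor polynomial of `J₄`, with coefficients adjusted numerically to give a
  -- strict supersolution.
  refine besselPhase_lt_add_pi_of_polynomial
    (X ^ 4 * (172500 - 8680 * X ^ 2 + 155 * X ^ 4 - X ^ 6)) (by norm_num) (by norm_num)
    (fun r hr => ?_) fun r hr => ?_
  · have hr0 : 0 < r := by linarith [hr.1]
    calc 0 ≤ r ^ 4 * (172500 - 8680 * r ^ 2 + 155 * r ^ 4 - r ^ 6) :=
          mul_nonneg (pow_pos hr0 4).le (hp r hr0.le hr.2).le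
      _ = _ := by simp
  · have hr0 : 0 < r := by linarith [hr.1]
    have hpr := hp r hr0.le hr.2.le
    have hL : 0 < 1100 + 1240 * r ^ 2 - 71 * r ^ 4 + r ^ 6 := by
      nlinarith [mul_nonneg (sq_nonneg r) (sq_nonneg (r ^ 2 - 36)), sq_nonneg (r ^ 2 - 36)]
    have hk' : 0 ≤ (k ^ 2 - 16) * (r ^ 4 * (172500 - 8680 * r ^ 2 + 155 * r ^ 4 - r ^ 6)) := by
      have : 0 ≤ k ^ 2 - 16 := by nlinarith
      positivity
    rw [← sub_pos]
    calc 0 < r ^ 6 * (1100 + 1240 * r ^ 2 - 71 * r ^ 4 + r ^ 6)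
          + (k ^ 2 - 16) * (r ^ 4 * (172500 - 8680 * r ^ 2 + 155 * r ^ 4 - r ^ 6)) :=
          add_pos_of_pos_of_nonneg (mul_pos (pow_pos hr0 6) hL) hk'
      _ = _ := by
          simp only [eval_mul, eval_pow, eval_X, eval_sub, eval_add, eval_ofNat, derivative_mul,
            derivative_X_pow_succ, Nat.cast_ofNat, map_add, map_one, derivative_sub,
            derivative_ofNat, zero_mul, Nat.cast_one, pow_one, zero_add, zero_sub,
            derivative_X, one_mul, derivative_C, derivative_one, add_zero, derivative_neg, mul_one,
            eval_C, eval_one, eval_neg]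
          ring

end Polynomial

end Bessel

section Crossing

theorem exists_simultaneous_advance {f g : ℝ → ℝ} (hf : StrictMono f) (hfc : Continuous f)
    (hg : Monotone g) (hgc : Continuous g) {a b a' b' c d : ℝ} (hab : a ≤ b) (hc : 0 ≤ c)
    (hfa : f a' ≤ f a + c) (hga : g a + d ≤ g a') (hfb : f b + c ≤ f b') (hgb : g b' ≤ g b + d) :
    ∃ σ τ, f τ = f σ + c ∧ g τ = g σ + d := by
  have hrange : ∀ s : Icc a b, ∃ y, f y = f s + c := fun s => by
    have hsb : f s + c ≤ f b' := by linarith [hf.monotone s.2.2]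
    obtain ⟨y, -, hy⟩ := intermediate_value_Icc
      (hf.le_iff_le.mp (by linarith : f s ≤ f b')) hfc.continuousOn ⟨by linarith, hsb⟩
    exact ⟨y, hy⟩
  choose y hy using hrange
  have hyc : Continuous y := by
    have hemb := hf.isEmbedding_of_ordConnected (isPreconnected_range hfc).ordConnected
    rw [hemb.continuous_iff]
    exact ((hfc.comp continuous_subtype_val).add_const c).congr fun s => (hy s).symm
  have : PreconnectedSpace (Icc a b) := Subtype.preconnectedSpace isPreconnected_Icc
  have hyb : y ⟨b, hab, le_rfl⟩ ≤ b' := hf.le_iff_le.mp ((hy _).trans_le hfb)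
  have hya : a' ≤ y ⟨a, le_rfl, hab⟩ := hf.le_iff_le.mp (hfa.trans_eq (hy ⟨a, le_rfl, hab⟩).symm)
  obtain ⟨s, hs⟩ := intermediate_value_univ₂ (f := fun s => g (y s)) (g := fun s => g s + d)
    (b := ⟨a, le_rfl, hab⟩) (by fun_prop) (by fun_prop) ((hg hyb).trans hgb) (hga.trans (hg hya))
  exact ⟨s, y s, hy s, hs⟩

variable {k : ℝ}

theorem besselPhase_one_add_two_pi_le :
    (besselPhase 1).phase (log (1 / 10)) + 2 * π ≤ (besselPhase 1).phase (log (50 / 7)) := by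
  have hstep :
      (besselPhase 1).phase (log (98 / 25)) + π < (besselPhase 1).phase (log (50 / 7)) := by
    refine besselPhase_add_pi_lt (by norm_num) (by linarith [pi_lt_d4]) ?_
    have : π ^ 2 ≤ 3.1416 ^ 2 := by gcongr; exact pi_lt_d4.le
    rw [div_pow]
    norm_num at this ⊢
    linarith
  linarith [besselPhase_one_add_pi_le]

theorem besselPhase_one_le_add_two_pi {a : ℝ} (ha : 0 < a) :
    (besselPhase 1).phase (log (a + 6)) ≤ (besselPhase 1).phase (log a) + 2 * π := by
  have h := fun {a : ℝ} (ha : 0 < a) => besselPhase_lt_add_pi (k := 1) (by norm_num) ha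
    (by linarith : a < a + 3) (by linarith [pi_gt_three])
  have h₂ := h (by linarith : 0 < a + 3)
  rw [add_assoc, show (3 : ℝ) + 3 = 6 by norm_num] at h₂
  linarith [h ha]

theorem besselPhase_add_pi_le_of_pos (hk : 0 < k) :
    (besselPhase k).phase (log (2 * k)) + π ≤ (besselPhase k).phase (log (2 * k + 6)) := by
  refine (besselPhase_add_pi_lt (by positivity) (by linarith [pi_lt_four]) ?_).le
  have : (π / 6) ^ 2 ≤ 3 / 4 := by nlinarith [pi_lt_four, pi_pos, pi_lt_d2]
  rw [add_sub_cancel_left]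
  nlinarith

theorem exists_phase_crossing (hk : 4 ≤ k) :
    ∃ σ τ, (besselPhase k).phase τ = (besselPhase k).phase σ + π ∧
      (besselPhase 1).phase τ = (besselPhase 1).phase σ + 2 * π :=
  exists_simultaneous_advance (besselPhase k).strictMono_phase (besselPhase k).continuous_phase
    (besselPhase 1).strictMono_phase.monotone (besselPhase 1).continuous_phase
    (log_le_log (by norm_num : (0 : ℝ) < 1 / 10) (by linarith : 1 / 10 ≤ 2 * k)) pi_pos.le
    (besselPhase_lt_add_pi_of_four_le hk).le besselPhase_one_add_two_pi_le
    (besselPhase_add_pi_le_of_pos (by linarith)) (besselPhase_one_le_add_two_pi (by linarith))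

end Crossing

section RadialCoordinate

variable {k τ σ r : ℝ} {u v w : ℝ → ℝ}

theorem IsSolutionPair.contDiff_two {Q : ℝ → ℝ} (h : IsSolutionPair Q u v) (hQ : Continuous Q) :
    ContDiff ℝ 2 u := by
  have hu : deriv u = v := funext fun t => (h.hasDerivAt t).deriv
  have hv : deriv v = fun t => Q t * u t := funext fun t => (h.hasDerivAt' t).deriv
  have hv1 : ContDiff ℝ 1 v := contDiff_one_iff_deriv.mpr
    ⟨fun t => (h.hasDerivAt' t).differentiableAt, hv ▸ hQ.mul h.continuous⟩
  rw [← one_add_one_eq_two, contDiff_succ_iff_deriv]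
  exact ⟨fun t => (h.hasDerivAt t).differentiableAt, by simp, hu ▸ hv1⟩

/-- The function of `r` obtained from a function `u` of `t` by the substitution `t = log r + τ`,
which sends `r = 1` to `t = τ`. -/
noncomputable def radialProfile (τ : ℝ) (u : ℝ → ℝ) (r : ℝ) : ℝ := u (log r + τ)

theorem radialProfile_exp (τ : ℝ) (u : ℝ → ℝ) (t : ℝ) : radialProfile τ u (exp (t - τ)) = u t := by
  simp [radialProfile]

theorem radialProfile_one (τ : ℝ) (u : ℝ → ℝ) : radialProfile τ u 1 = u τ := by
  simp [radialProfile]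

theorem log_add_mem_Ioo (hr : r ∈ Ioo (exp (σ - τ)) 1) : log r + τ ∈ Ioo σ τ := by
  have hr0 : 0 < r := (exp_pos _).trans hr.1
  constructor
  · linarith [(lt_log_iff_exp_lt hr0).mpr hr.1]
  · linarith [log_neg hr0 hr.2]

theorem log_add_mem_Icc (hr : r ∈ Icc (exp (σ - τ)) 1) : log r + τ ∈ Icc σ τ := by
  have hr0 : 0 < r := (exp_pos _).trans_le hr.1
  constructor
  · linarith [(le_log_iff_exp_le hr0).mpr hr.1]
  · linarith [log_nonpos hr0.le hr.2]

theorem exp_sub_mem_Ioo {t : ℝ} (ht : t ∈ Ioo σ τ) : exp (t - τ) ∈ Ioo (exp (σ - τ)) 1 :=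
  ⟨exp_lt_exp.mpr (by linarith [ht.1]), exp_lt_one_iff.mpr (by linarith [ht.2])⟩

theorem exp_sub_mem_Icc {t : ℝ} (ht : t ∈ Icc σ τ) : exp (t - τ) ∈ Icc (exp (σ - τ)) 1 :=
  ⟨exp_le_exp.mpr (by linarith [ht.1]), exp_le_one_iff.mpr (by linarith [ht.2])⟩

theorem encard_zeros_radialProfile (σ τ : ℝ) (u : ℝ → ℝ) :
    {r ∈ Ioo (exp (σ - τ)) 1 | radialProfile τ u r = 0}.encard
      = {t ∈ Ioo σ τ | u t = 0}.encard := by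
  have hinj : Function.Injective fun t => exp (t - τ) := fun s t h => by simpa using h
  rw [← hinj.encard_image {t ∈ Ioo σ τ | u t = 0}]
  congr 1
  ext r
  constructor
  · rintro ⟨hr, hu⟩
    exact ⟨log r + τ, ⟨log_add_mem_Ioo hr, hu⟩, by simp [exp_log ((exp_pos _).trans hr.1)]⟩
  · rintro ⟨t, ⟨ht, hu⟩, rfl⟩
    exact ⟨exp_sub_mem_Ioo ht, by rwa [radialProfile_exp]⟩

theorem hasDerivAt_radialProfile {u' : ℝ} (hr : r ≠ 0) (hu : HasDerivAt u u' (log r + τ)) :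
    HasDerivAt (radialProfile τ u) (u' / r) r :=
  hu.comp r ((hasDerivAt_log hr).add_const τ)

namespace IsSolutionPair

theorem contDiffOn_radialProfile (h : IsSolutionPair (besselPotential k) u v) {a : ℝ}
    (ha : 0 < a) (τ : ℝ) : ContDiffOn ℝ 2 (radialProfile τ u) (Icc a 1) :=
  (h.contDiff_two (continuous_besselPotential k)).comp_contDiffOn
    (contDiffOn_id.log (fun _ hr => (ha.trans_le hr.1).ne') |>.add contDiffOn_const)

theorem derivWithin_radialProfile (h : IsSolutionPair (besselPotential k) u v) {a : ℝ}
    (ha : 0 < a) (ha1 : a < 1) (τ : ℝ) (hr : r ∈ Icc a 1) :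
    derivWithin (radialProfile τ u) (Icc a 1) r = radialProfile τ v r / r :=
  (hasDerivAt_radialProfile (ha.trans_le hr.1).ne' (h.hasDerivAt _)).hasDerivWithinAt.derivWithin
    (uniqueDiffOn_Icc ha1 r hr)

theorem radial_equation (h : IsSolutionPair (besselPotential k) u v) (τ : ℝ) (hr : 0 < r) :
    deriv (deriv (radialProfile τ u)) r + deriv (radialProfile τ u) r / r
      - k ^ 2 * radialProfile τ u r / r ^ 2 + exp τ ^ 2 * radialProfile τ u r = 0 := by
  have hderiv : ∀ s > 0, deriv (radialProfile τ u) s = radialProfile τ v s / s := fun s hs =>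
    (hasDerivAt_radialProfile hs.ne' (h.hasDerivAt _)).deriv
  have heq : deriv (radialProfile τ u) =ᶠ[𝓝 r] fun s => radialProfile τ v s / s := by
    filter_upwards [Ioi_mem_nhds hr] with s hs using hderiv s hs
  have hderiv2 := (((hasDerivAt_radialProfile hr.ne' (h.hasDerivAt' _)).div (hasDerivAt_id r)
    hr.ne').congr_of_eventuallyEq heq).deriv
  have hexp : exp (log r + τ) = r * exp τ := by rw [exp_add, exp_log hr]
  rw [hderiv2, hderiv r hr]
  simp only [radialProfile, besselPotential, hexp, id]
  field_simp
  ring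

end IsSolutionPair

theorem hasTwoDerivsOn_comp_exp (hστ : σ < τ) (hw : ContDiffOn ℝ 2 w (Icc (exp (σ - τ)) 1))
    (hode : ∀ r ∈ Ioo (exp (σ - τ)) 1, deriv (deriv w) r + deriv w r / r - k ^ 2 * w r / r ^ 2
      + exp τ ^ 2 * w r = 0) :
    HasTwoDerivsOn (fun t => w (exp (t - τ)))
      (fun t => derivWithin w (Icc (exp (σ - τ)) 1) (exp (t - τ)) * exp (t - τ))
      (fun t => besselPotential k t * w (exp (t - τ))) σ τ := by
  have hI := uniqueDiffOn_Icc (exp_lt_one_iff.mpr (by linarith) : exp (σ - τ) < 1)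
  have hexp : ContinuousOn (fun t => exp (t - τ)) (Icc σ τ) := by fun_prop
  have hexp' : ∀ t, HasDerivAt (fun t => exp (t - τ)) (exp (t - τ)) t := fun t => by
    simpa using ((hasDerivAt_id t).sub_const τ).exp
  have hw' := (hw.mono Ioo_subset_Icc_self).deriv_of_isOpen isOpen_Ioo (m := 1) le_rfl
  have hderiv : ∀ r ∈ Ioo (exp (σ - τ)) 1, derivWithin w (Icc (exp (σ - τ)) 1) r = deriv w r :=
    fun r hr => derivWithin_of_mem_nhds (Icc_mem_nhds hr.1 hr.2)
  have hnhds : ∀ r ∈ Ioo (exp (σ - τ)) 1, Ioo (exp (σ - τ)) 1 ∈ 𝓝 r := fun r hr =>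
    isOpen_Ioo.mem_nhds hr
  refine ⟨hw.continuousOn.comp hexp fun t => exp_sub_mem_Icc,
    ((hw.continuousOn_derivWithin hI (by norm_num)).comp hexp fun t => exp_sub_mem_Icc).mul hexp,
    fun t ht => ?_, fun t ht => ?_⟩ <;> have hr := exp_sub_mem_Ioo ht
  · rw [hderiv _ hr]
    exact ((hw.differentiableOn two_ne_zero).differentiableAt
      (Icc_mem_nhds hr.1 hr.2)).hasDerivAt.comp t (hexp' t)
  · have hd := ((hw'.differentiableOn one_ne_zero).differentiableAt (hnhds _ hr)).hasDerivAt
    have heq : derivWithin w (Icc (exp (σ - τ)) 1) =ᶠ[𝓝 (exp (t - τ))] deriv w := by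
      filter_upwards [hnhds _ hr] using hderiv
    refine (((hd.congr_of_eventuallyEq heq).comp t (hexp' t)).mul (hexp' t)).congr_deriv ?_
    have h0 := (exp_pos (t - τ)).ne'
    have hprod : exp t = exp (t - τ) * exp τ := by rw [← exp_add, sub_add_cancel]
    have hode_t := hode _ hr
    simp only [Function.comp_apply, hderiv _ hr, besselPotential, hprod]
    field_simp at hode_t
    linear_combination hode_t

end RadialCoordinate

section Eigenfunctions

variable {k σ τ : ℝ}

theorem encard_zeros_eq_two {f : ℝ → ℝ} {a c b : ℝ} (hac : a ≤ c) (hcb : c ≤ b)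
    (hf : ContinuousOn f (Icc a b)) (hanti : StrictAntiOn f (Icc a c))
    (hmono : StrictMonoOn f (Icc c b)) (ha : 0 < f a) (hc : f c < 0) (hb : 0 < f b) :
    {t ∈ Ioo a b | f t = 0}.encard = 2 := by
  obtain ⟨x, hx, hfx⟩ := intermediate_value_Ioo' hac (hf.mono (Icc_subset_Icc_right hcb)) ⟨hc, ha⟩
  obtain ⟨y, hy, hfy⟩ := intermediate_value_Ioo hcb (hf.mono (Icc_subset_Icc_left hac)) ⟨hc, hb⟩
  have hzeros : {t ∈ Ioo a b | f t = 0} = {x, y} := by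
    refine Subset.antisymm ?_ ?_
    · rintro t ⟨ht, hft⟩
      rcases le_total t c with htc | hct
      · exact .inl (hanti.injOn ⟨ht.1.le, htc⟩ (Ioo_subset_Icc_self hx) (hft.trans hfx.symm))
      · exact .inr (hmono.injOn ⟨hct, ht.2.le⟩ (Ioo_subset_Icc_self hy) (hft.trans hfy.symm))
    · rintro t (rfl | rfl)
      · exact ⟨⟨hx.1, hx.2.trans_le hcb⟩, hfx⟩
      · exact ⟨⟨hac.trans_lt hy.1, hy.2⟩, hfy⟩
  rw [hzeros, encard_pair (hx.2.trans hy.1).ne]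

-- In the radial variable this says that `J₁' + J₁ / r = J₀` and `J₀' = -J₁` for every solution `J₁`
-- of the equation of mode `1`.
theorem IsSolutionPair.besselPotential_zero {u v : ℝ → ℝ}
    (h : IsSolutionPair (besselPotential 1) u v) :
    IsSolutionPair (besselPotential 0) (fun t => exp (-t) * (u t + v t))
      (fun t => -(exp t * u t)) where
  hasDerivAt t := by
    refine ((hasDerivAt_id t).neg.exp.mul
      ((h.hasDerivAt t).add (h.hasDerivAt' t))).congr_deriv ?_
    have hexp : exp (-t) * exp t = 1 := by rw [← exp_add]; simp
    simp only [besselPotential, Pi.neg_apply, Pi.add_apply, id]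
    linear_combination -exp t * u t * hexp
  hasDerivAt' t := by
    refine ((Real.hasDerivAt_exp t).mul (h.hasDerivAt t)).neg.congr_deriv ?_
    have hexp : exp (-t) * exp t = 1 := by rw [← exp_add]; simp
    simp only [besselPotential]
    linear_combination exp t * (u t + v t) * hexp

theorem exists_neumann_isSolutionPair
    (h : (besselPhase 1).phase τ = (besselPhase 1).phase σ + 2 * π) :
    ∃ u v, IsSolutionPair (besselPotential 0) u v ∧ v σ = 0 ∧ v τ = 0 ∧ 0 < u σ ∧
      {t ∈ Ioo σ τ | u t = 0}.encard = 2 := by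
  set P := besselPhase 1
  have hα := P.strictMono_phase
  have hστ : σ < τ := hα.lt_iff_lt.mp (by linarith [pi_pos])
  obtain ⟨c, hc, hcπ⟩ := intermediate_value_Ioo hστ.le P.continuous_phase.continuousOn
    (⟨by linarith [pi_pos], by linarith [pi_pos]⟩ : P.phase σ + π ∈ Ioo (P.phase σ) (P.phase τ))
  have hu := (P.isSolutionPair_sol σ).besselPotential_zero
  have hamp : ∀ t, 0 < P.amp σ / P.amp t := fun t => div_pos (P.amp_pos σ) (P.amp_pos t)
  have huσ : 0 < exp (-σ) * (P.sol σ σ + P.solDeriv σ σ) := by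
    rw [P.sol_self, P.solDeriv_self]; positivity
  refine ⟨_, _, hu, by simp [P.sol_self], by simp [P.sol_of_phase_eq_add_two_pi h], huσ,
    encard_zeros_eq_two hc.1.le hc.2.le hu.continuous.continuousOn
      (strictAntiOn_of_hasDerivWithinAt_neg (convex_Icc _ _) hu.continuous.continuousOn
        (fun t _ => (hu.hasDerivAt t).hasDerivWithinAt) fun t ht => ?_)
      (strictMonoOn_of_hasDerivWithinAt_pos (convex_Icc _ _) hu.continuous.continuousOn
        (fun t _ => (hu.hasDerivAt t).hasDerivWithinAt) fun t ht => ?_) huσ ?_ ?_⟩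
  · rw [interior_Icc] at ht
    exact neg_neg_of_pos (mul_pos (exp_pos t) (P.sol_pos ht.1 (hcπ ▸ hα ht.2)))
  · rw [interior_Icc] at ht
    exact neg_pos_of_neg (mul_neg_of_pos_of_neg (exp_pos t)
      (P.sol_neg (hcπ ▸ hα ht.1) (h ▸ hα ht.2)))
  · rw [P.sol_of_phase_eq_add_pi hcπ, P.solDeriv_of_phase_eq_add_pi hcπ, zero_add]
    exact mul_neg_of_pos_of_neg (exp_pos _) (neg_neg_of_pos (hamp c))
  · rw [P.sol_of_phase_eq_add_two_pi h, P.solDeriv_of_phase_eq_add_two_pi h, zero_add]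
    exact mul_pos (exp_pos _) (hamp τ)

theorem exists_radial_neumann_solution (hστ : σ < τ)
    (h : (besselPhase 1).phase τ = (besselPhase 1).phase σ + 2 * π) :
    ∃ ψ : ℝ → ℝ, ContDiffOn ℝ 2 ψ (Icc (exp (σ - τ)) 1) ∧
      (∀ r ∈ Ioo (exp (σ - τ)) 1,
        deriv (deriv ψ) r + deriv ψ r / r + exp τ ^ 2 * ψ r = 0) ∧
      derivWithin ψ (Icc (exp (σ - τ)) 1) (exp (σ - τ)) = 0 ∧
      derivWithin ψ (Icc (exp (σ - τ)) 1) 1 = 0 ∧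
      (∃ r ∈ Icc (exp (σ - τ)) 1, ψ r ≠ ψ (exp (σ - τ))) ∧
      {r ∈ Ioo (exp (σ - τ)) 1 | ψ r = 0}.encard = 2 := by
  obtain ⟨u, v, hu, hvσ, hvτ, huσ, hzeros⟩ := exists_neumann_isSolutionPair h
  have ha := exp_pos (σ - τ)
  have ha1 : exp (σ - τ) < 1 := exp_lt_one_iff.mpr (by linarith)
  rw [← encard_zeros_radialProfile] at hzeros
  obtain ⟨r, hr, hr0⟩ := nonempty_of_encard_ne_zero (hzeros ▸ two_ne_zero)
  refine ⟨radialProfile τ u, hu.contDiffOn_radialProfile ha τ, fun r hr => ?_, ?_, ?_,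
    ⟨r, Ioo_subset_Icc_self hr, ?_⟩, hzeros⟩
  · simpa using hu.radial_equation τ (ha.trans hr.1)
  · rw [hu.derivWithin_radialProfile ha ha1 τ ⟨le_rfl, ha1.le⟩, radialProfile_exp, hvσ, zero_div]
  · rw [hu.derivWithin_radialProfile ha ha1 τ ⟨ha1.le, le_rfl⟩, radialProfile_one, hvτ, zero_div]
  · rw [hr0, radialProfile_exp]
    exact huσ.ne

theorem radial_dirichlet_eq_mul {w : ℝ → ℝ} (hστ : σ < τ)
    (hw : ContDiffOn ℝ 2 w (Icc (exp (σ - τ)) 1))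
    (hode : ∀ r ∈ Ioo (exp (σ - τ)) 1, deriv (deriv w) r + deriv w r / r - k ^ 2 * w r / r ^ 2
      + exp τ ^ 2 * w r = 0) (hwa : w (exp (σ - τ)) = 0) :
    ∃ c, ∀ r ∈ Icc (exp (σ - τ)) 1, w r = c * radialProfile τ ((besselPhase k).sol σ) r := by
  refine ⟨derivWithin w (Icc (exp (σ - τ)) 1) (exp (σ - τ)) * exp (σ - τ), fun r hr => ?_⟩
  have h := (besselPhase k).eq_mul_sol (hasTwoDerivsOn_comp_exp hστ hw hode) hwa
    (log_add_mem_Icc hr)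
  rwa [add_sub_cancel_right, exp_log ((exp_pos _).trans_le hr.1)] at h

theorem besselPhase_lt_add_pi_of_lt {k' : ℝ} (hk : 0 ≤ k) (hkk' : k < k') (hστ : σ < τ)
    (h : (besselPhase k).phase τ ≤ (besselPhase k).phase σ + π) :
    (besselPhase k').phase τ < (besselPhase k').phase σ + π :=
  PhaseAmplitude.phase_lt_of_potential_lt (besselPhase k) (besselPhase k')
    (fun _ _ => sub_lt_sub_right (pow_lt_pow_left₀ hkk' hk two_ne_zero) _) hστ h

theorem exists_radial_dirichlet_solution (hk : 0 < k) (hστ : σ < τ)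
    (h : (besselPhase k).phase τ = (besselPhase k).phase σ + π) :
    ∃ φ : ℝ → ℝ, ContDiffOn ℝ 2 φ (Icc (exp (σ - τ)) 1) ∧
      (∀ r ∈ Ioo (exp (σ - τ)) 1, deriv (deriv φ) r + deriv φ r / r
        - k ^ 2 * φ r / r ^ 2 + exp τ ^ 2 * φ r = 0) ∧
      φ (exp (σ - τ)) = 0 ∧ φ 1 = 0 ∧ (∀ r ∈ Ioo (exp (σ - τ)) 1, 0 < φ r) ∧
      (∀ m : ℝ, 1 ≤ m → ∀ w : ℝ → ℝ, ContDiffOn ℝ 2 w (Icc (exp (σ - τ)) 1) →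
        (∀ r ∈ Ioo (exp (σ - τ)) 1, deriv (deriv w) r + deriv w r / r
          - (m * k) ^ 2 * w r / r ^ 2 + exp τ ^ 2 * w r = 0) →
        w (exp (σ - τ)) = 0 → w 1 = 0 → (∃ r ∈ Icc (exp (σ - τ)) 1, w r ≠ 0) →
        m = 1 ∧ ∃ c : ℝ, ∀ r ∈ Icc (exp (σ - τ)) 1, w r = c * φ r) := by
  have hsol := (besselPhase k).isSolutionPair_sol σ
  have ha := exp_pos (σ - τ)
  have ha1 : exp (σ - τ) < 1 := exp_lt_one_iff.mpr (by linarith)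
  refine ⟨radialProfile τ ((besselPhase k).sol σ), hsol.contDiffOn_radialProfile ha τ,
    fun r hr => hsol.radial_equation τ (ha.trans hr.1), ?_, ?_, fun r hr => ?_,
    fun m hm w hw hode hwa hw1 hne => ?_⟩
  · rw [radialProfile_exp, PhaseAmplitude.sol_self]
  · rw [radialProfile_one, PhaseAmplitude.sol_of_phase_eq_add_pi _ h]
  · have ht := log_add_mem_Ioo hr
    exact (besselPhase k).sol_pos ht.1 (h ▸ (besselPhase k).strictMono_phase ht.2)
  · rcases hm.eq_or_lt with rfl | hm
    · exact ⟨rfl, radial_dirichlet_eq_mul hστ hw (by simpa only [one_mul] using hode) hwa⟩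
    · obtain ⟨c, hc⟩ := radial_dirichlet_eq_mul hστ hw hode hwa
      have hsol_τ := (besselPhase (m * k)).sol_pos hστ
        (besselPhase_lt_add_pi_of_lt hk.le (lt_mul_of_one_lt_left hk hm) hστ h.le)
      have hc1 := hc 1 ⟨ha1.le, le_rfl⟩
      rw [hw1, radialProfile_one, zero_eq_mul, or_iff_left hsol_τ.ne'] at hc1
      obtain ⟨r, hr, hwr⟩ := hne
      exact absurd (by rw [hc r hr, hc1, zero_mul]) hwr

end Eigenfunctions

theorem eigenvalue_crossing_and_nonresonance_general (l : ℝ) (hl : 4 ≤ l) :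
    ∃ a ∈ Set.Ioo (0:ℝ) 1, ∃ μ > (0:ℝ),
      (∃ ψ : ℝ → ℝ, ContDiffOn ℝ 2 ψ (Set.Icc a 1) ∧
        (∀ r ∈ Set.Ioo a 1, deriv (deriv ψ) r + deriv ψ r / r + μ * ψ r = 0) ∧
        derivWithin ψ (Set.Icc a 1) a = 0 ∧ derivWithin ψ (Set.Icc a 1) 1 = 0 ∧
        (∃ r ∈ Set.Icc a 1, ψ r ≠ ψ a) ∧
        {r ∈ Set.Ioo a 1 | ψ r = 0}.encard = 2) ∧
      (∃ φ : ℝ → ℝ, ContDiffOn ℝ 2 φ (Set.Icc a 1) ∧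
        (∀ r ∈ Set.Ioo a 1, deriv (deriv φ) r + deriv φ r / r
          - l ^ 2 * φ r / r ^ 2 + μ * φ r = 0) ∧
        φ a = 0 ∧ φ 1 = 0 ∧ (∀ r ∈ Set.Ioo a 1, 0 < φ r) ∧
        (∀ m : ℝ, 1 ≤ m → ∀ w : ℝ → ℝ, ContDiffOn ℝ 2 w (Set.Icc a 1) →
          (∀ r ∈ Set.Ioo a 1, deriv (deriv w) r + deriv w r / r
            - (m * l) ^ 2 * w r / r ^ 2 + μ * w r = 0) →
          w a = 0 → w 1 = 0 → (∃ r ∈ Set.Icc a 1, w r ≠ 0) →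
          m = 1 ∧ ∃ c : ℝ, ∀ r ∈ Set.Icc a 1, w r = c * φ r)) := by
  obtain ⟨σ, τ, hl_phase, h1_phase⟩ := exists_phase_crossing hl
  have hστ : σ < τ := (besselPhase l).strictMono_phase.lt_iff_lt.mp (by linarith [pi_pos])
  exact ⟨exp (σ - τ), ⟨exp_pos _, exp_lt_one_iff.mpr (by linarith)⟩, exp τ ^ 2, by positivity,
    exists_radial_neumann_solution hστ h1_phase,
    exists_radial_dirichlet_solution (by linarith) hστ hl_phase⟩

/-- For every integer `l ≥ 4` there is an annulus `{a < |x| < 1}` on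
which the second nontrivial radial Neumann eigenvalue coincides with the first `l`-mode
Dirichlet eigenvalue, and a non-resonance condition holds: no other `ml`-mode Dirichlet
eigenvalue equals this common value. -/
theorem eigenvalue_crossing_and_nonresonance (l : ℕ) (hl : 4 ≤ l) :
    ∃ a ∈ Set.Ioo (0:ℝ) 1, ∃ μ > (0:ℝ),
      (∃ ψ : ℝ → ℝ, ContDiffOn ℝ 2 ψ (Set.Icc a 1) ∧
        (∀ r ∈ Set.Ioo a 1, deriv (deriv ψ) r + deriv ψ r / r + μ * ψ r = 0) ∧
        derivWithin ψ (Set.Icc a 1) a = 0 ∧ derivWithin ψ (Set.Icc a 1) 1 = 0 ∧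
        (∃ r ∈ Set.Icc a 1, ψ r ≠ ψ a) ∧
        {r ∈ Set.Ioo a 1 | ψ r = 0}.encard = 2) ∧
      (∃ φ : ℝ → ℝ, ContDiffOn ℝ 2 φ (Set.Icc a 1) ∧
        (∀ r ∈ Set.Ioo a 1, deriv (deriv φ) r + deriv φ r / r
          - (l:ℝ)^2 * φ r / r^2 + μ * φ r = 0) ∧
        φ a = 0 ∧ φ 1 = 0 ∧ (∀ r ∈ Set.Ioo a 1, 0 < φ r) ∧
        (∀ m : ℕ, 1 ≤ m → ∀ w : ℝ → ℝ, ContDiffOn ℝ 2 w (Set.Icc a 1) →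
          (∀ r ∈ Set.Ioo a 1, deriv (deriv w) r + deriv w r / r
            - ((m * l : ℕ) : ℝ)^2 * w r / r^2 + μ * w r = 0) →
          w a = 0 → w 1 = 0 → (∃ r ∈ Set.Icc a 1, w r ≠ 0) →
          m = 1 ∧ ∃ c : ℝ, ∀ r ∈ Set.Icc a 1, w r = c * φ r)) := by
  obtain ⟨a, ha, μ, hμ, hψ, φ, hφ, hode, hφa, hφ1, hpos, huniq⟩ :=
    eigenvalue_crossing_and_nonresonance_general l (mod_cast hl)
  exact ⟨a, ha, μ, hμ, hψ, φ, hφ, hode, hφa, hφ1, hpos,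
    fun m hm => by simpa using huniq m (mod_cast hm)⟩
end

section
/- There exist a constant C > 0 and an integer L such that the following holds for every integer l ≥ L: if a ∈ (1/2, 1) and μ > 0 are such that the Neumann problem ψ''(r) + ψ'(r)/r + μψ(r) = 0 on (a,1) with ψ'(a) = ψ'(1) = 0 has a nonconstant C² solution with exactly two zeros in (a,1), and the Dirichlet problem φ''(r) + φ'(r)/r − l²φ(r)/r² + μφ(r) = 0 on (a,1) with φ(a) = φ(1) = 0 has a C² solution which is positive on (a,1), then |a − (1 − √3·π/l)| ≤ C/l². -/
open Set Real

/-- `μ` is the second nontrivial radial Neumann eigenvalue of the annulus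
`{a < |x| < 1}`: the radial Neumann problem has a nonconstant `C²` solution with exactly
two zeros in `(a,1)`. -/
def NeumannMu02 (a μ : ℝ) : Prop :=
  ∃ ψ : ℝ → ℝ, ContDiffOn ℝ 2 ψ (Set.Icc a 1) ∧
    (∀ r ∈ Set.Ioo a 1, deriv (deriv ψ) r + deriv ψ r / r + μ * ψ r = 0) ∧
    derivWithin ψ (Set.Icc a 1) a = 0 ∧ derivWithin ψ (Set.Icc a 1) 1 = 0 ∧
    (∃ r ∈ Set.Icc a 1, ψ r ≠ ψ a) ∧
    {r ∈ Set.Ioo a 1 | ψ r = 0}.encard = 2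

/-- `μ` is the first `l`-mode Dirichlet eigenvalue of the annulus `{a < |x| < 1}`:
the `l`-mode Dirichlet problem has a `C²` solution positive on `(a,1)`. -/
def DirichletLam0 (a μ : ℝ) (l : ℕ) : Prop :=
  ∃ φ : ℝ → ℝ, ContDiffOn ℝ 2 φ (Set.Icc a 1) ∧
    (∀ r ∈ Set.Ioo a 1, deriv (deriv φ) r + deriv φ r / r
      - (l:ℝ)^2 * φ r / r^2 + μ * φ r = 0) ∧
    φ a = 0 ∧ φ 1 = 0 ∧ (∀ r ∈ Set.Ioo a 1, 0 < φ r)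

/-!
Multiplying a radial mode `f` of order `ν` by `√r` removes the first-order term of its equation and
leaves `v'' + (μ - (ν² - 1/4) / r²) v = 0`. Sturm comparison of `v` with `sin (π (r - p) / (q - p))`
on an interval `(p, q)` between consecutive zeros of `f` gives `μ - (ν² - 1/4) / r² = π² / (q - p)²`
for some `r ∈ (p, q)`.

For the Dirichlet mode on `(a, 1)` this reads `μ = π² / h² + l² (1 + O(h)) + O(1)`, where
`h = 1 - a`. The derivative of the Neumann solution is a mode of order `1` vanishing at `a`, at `1`
and at exactly one point in between, and comparing on the shorter and on the longer of the two
intervals gives `μ = 4π² / h² + O(1)`. Equating the two, `(l h)² = 3π² + O(h)`.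

The upper Neumann bound also holds on `(1/2, 1)` when `a ≤ 1/2`; there it bounds `μ` by an absolute
constant, while `l² ≤ μ`, so for large `l` there is no crossing with `a ≤ 1/2`.
-/

lemma mul_nonneg_of_ne_zero_on_Ioo {f : ℝ → ℝ} {p q x y : ℝ} (hf : ContinuousOn f (Icc p q))
    (hne : ∀ r ∈ Ioo p q, f r ≠ 0) (hx : x ∈ Icc p q) (hy : y ∈ Ioo p q) : 0 ≤ f x * f y := by
  by_contra! hneg
  have hmem : 0 ∈ uIcc (f x) (f y) := by
    rcases mul_neg_iff.1 hneg with ⟨hx0, hy0⟩ | ⟨hx0, hy0⟩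
    · exact mem_uIcc_of_ge hy0.le hx0.le
    · exact mem_uIcc_of_le hx0.le hy0.le
  obtain ⟨z, hz, hz0⟩ :=
    intermediate_value_uIcc (hf.mono (uIcc_subset_Icc hx (Ioo_subset_Icc_self hy))) hmem
  have hzx : z ≠ x := by rintro rfl; simp [hz0] at hneg
  refine hne z ?_ hz0
  rcases mem_uIcc.1 hz with ⟨h₁, h₂⟩ | ⟨h₁, h₂⟩
  · exact ⟨hx.1.trans_lt (lt_of_le_of_ne h₁ hzx.symm), h₂.trans_lt hy.2⟩
  · exact ⟨hy.1.trans_le h₁, (lt_of_le_of_ne h₂ hzx).trans_le hx.2⟩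

lemma eq_left_of_hasDerivAt_zero {f : ℝ → ℝ} {p q x : ℝ} (hf : ContinuousOn f (Icc p q))
    (hf' : ∀ r ∈ Ioo p q, HasDerivAt f 0 r) (hx : x ∈ Icc p q) : f x = f p := by
  rcases hx.1.eq_or_lt with rfl | hpx
  · rfl
  obtain ⟨_, _, hslope⟩ := exists_hasDerivAt_eq_slope f (fun _ ↦ 0) hpx
    (hf.mono (Icc_subset_Icc_right hx.2)) fun r hr ↦ hf' r (Ioo_subset_Ioo_right hx.2 hr)
  simpa [sub_eq_zero, hpx.ne'] using hslope.symm

lemma four_mul_div_sq (x y : ℝ) : 4 * x / y ^ 2 = x / (y / 2) ^ 2 := by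
  rw [div_pow, div_div_eq_mul_div]
  ring

/-- `f` is a radial mode of order `ν` with eigenvalue `μ` on `(p, q)`, with derivative `f'`: it
solves `f'' + f' / r - ν² f / r² + μ f = 0` there. Carrying `f'` as a separate function lets it be
continuous up to the endpoints, where the two-sided derivative of `f` may not exist. -/
structure IsRadialMode (ν μ : ℝ) (f f' : ℝ → ℝ) (p q : ℝ) : Prop where
  continuousOn : ContinuousOn f (Icc p q)
  continuousOn_deriv : ContinuousOn f' (Icc p q)
  hasDerivAt : ∀ r ∈ Ioo p q, HasDerivAt f (f' r) r
  hasDerivAt_deriv : ∀ r ∈ Ioo p q,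
    HasDerivAt f' (-f' r / r + (ν ^ 2 / r ^ 2 - μ) * f r) r

/-- The coefficient in the equation `v'' + liouvillePotential ν μ r * v = 0` satisfied by the
Liouville transform `v = √r f` of a radial mode `f` of order `ν` with eigenvalue `μ`. -/
noncomputable def liouvillePotential (ν μ r : ℝ) : ℝ :=
  μ - (ν ^ 2 - 1 / 4) / r ^ 2

/-- The Wronskian of `sin (k (r - p))` and the Liouville transform `√r f` of `f`. -/
noncomputable def liouvilleWronskian (f f' : ℝ → ℝ) (k p r : ℝ) : ℝ :=
  √r * ((f' r + f r / (2 * r)) * sin (k * (r - p)) - f r * (k * cos (k * (r - p))))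

namespace IsRadialMode

variable {ν μ p q : ℝ} {f f' : ℝ → ℝ}

lemma of_contDiffOn (hpq : p < q) (hf : ContDiffOn ℝ 2 f (Icc p q))
    (hode : ∀ r ∈ Ioo p q,
      deriv (deriv f) r + deriv f r / r - ν ^ 2 * f r / r ^ 2 + μ * f r = 0) :
    IsRadialMode ν μ f (derivWithin f (Icc p q)) p q := by
  have hf₁ : ContDiffOn ℝ 1 (derivWithin f (Icc p q)) (Icc p q) :=
    hf.derivWithin (uniqueDiffOn_Icc hpq) (by norm_num)
  have hderiv : ∀ r ∈ Ioo p q, derivWithin f (Icc p q) r = deriv f r := fun r hr ↦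
    derivWithin_of_mem_nhds (Icc_mem_nhds hr.1 hr.2)
  refine ⟨hf.continuousOn, hf₁.continuousOn, fun r hr ↦ ?_, fun r hr ↦ ?_⟩
  · rw [hderiv r hr]
    exact (hf.contDiffAt (Icc_mem_nhds hr.1 hr.2)).differentiableAt two_ne_zero |>.hasDerivAt
  · have hderiv₂ : deriv (derivWithin f (Icc p q)) r = deriv (deriv f) r :=
      Filter.EventuallyEq.deriv_eq <| by
        filter_upwards [Ioo_mem_nhds hr.1 hr.2] using hderiv
    have hd := (hf₁.contDiffAt (Icc_mem_nhds hr.1 hr.2)).differentiableAt one_ne_zero |>.hasDerivAt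
    refine hd.congr_deriv ?_
    rw [hderiv₂, hderiv r hr]
    linear_combination hode r hr

lemma mono {p' q' : ℝ} (h : IsRadialMode ν μ f f' p q) (hp : p ≤ p') (hq : q' ≤ q) :
    IsRadialMode ν μ f f' p' q' where
  continuousOn := h.continuousOn.mono (Icc_subset_Icc hp hq)
  continuousOn_deriv := h.continuousOn_deriv.mono (Icc_subset_Icc hp hq)
  hasDerivAt r hr := h.hasDerivAt r (Ioo_subset_Ioo hp hq hr)
  hasDerivAt_deriv r hr := h.hasDerivAt_deriv r (Ioo_subset_Ioo hp hq hr)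

lemma deriv_of_order_zero (h : IsRadialMode 0 μ f f' p q) (hp : 0 < p) :
    IsRadialMode 1 μ f' (fun r ↦ -f' r / r - μ * f r) p q where
  continuousOn := h.continuousOn_deriv
  continuousOn_deriv :=
    (h.continuousOn_deriv.neg.div continuousOn_id fun r hr ↦ (hp.trans_le hr.1).ne').sub
      (h.continuousOn.const_mul μ)
  hasDerivAt r hr := (h.hasDerivAt_deriv r hr).congr_deriv (by ring)
  hasDerivAt_deriv r hr := by
    have hr₀ : r ≠ 0 := (hp.trans hr.1).ne'
    refine (((h.hasDerivAt_deriv r hr).fun_neg.fun_div (hasDerivAt_id' r) hr₀).fun_sub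
      ((h.hasDerivAt r hr).const_mul μ)).congr_deriv ?_
    field_simp
    ring

lemma hasDerivAt_mul_deriv (h : IsRadialMode 0 μ f f' p q) {r : ℝ} (hr : r ∈ Ioo p q)
    (hr₀ : r ≠ 0) : HasDerivAt (fun r ↦ r * f' r) (-(r * μ) * f r) r := by
  refine ((hasDerivAt_id' r).fun_mul (h.hasDerivAt_deriv r hr)).congr_deriv ?_
  field_simp
  ring

lemma eq_left_of_eigenvalue_eq_zero {x : ℝ} (h : IsRadialMode 0 0 f f' p q) (hp : 0 ≤ p)
    (hfp : f' p = 0) (hx : x ∈ Icc p q) : f x = f p := by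
  have hflux : ∀ r ∈ Ioo p q, r * f' r = p * f' p := fun r hr ↦
    eq_left_of_hasDerivAt_zero (f := fun r ↦ r * f' r) (continuousOn_id.mul h.continuousOn_deriv)
      (fun s hs ↦ by simpa using h.hasDerivAt_mul_deriv hs (hp.trans_lt hs.1).ne')
      (Ioo_subset_Icc_self hr)
  refine eq_left_of_hasDerivAt_zero h.continuousOn (fun r hr ↦ ?_) hx
  have hr₀ : r ≠ 0 := (hp.trans_lt hr.1).ne'
  have hfr : f' r = 0 := by simpa [hfp, hr₀] using hflux r hr
  simpa [hfr] using h.hasDerivAt r hr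

lemma exists_eq_zero_of_deriv_eq_zero (h : IsRadialMode 0 μ f f' p q) (hp : 0 ≤ p) (hpq : p < q)
    (hμ : μ ≠ 0) (hfp : f' p = 0) (hfq : f' q = 0) : ∃ z ∈ Ioo p q, f z = 0 := by
  obtain ⟨z, hz, hz0⟩ := exists_hasDerivAt_eq_zero hpq
    (continuousOn_id.mul h.continuousOn_deriv) (by simp [hfp, hfq])
    fun r hr ↦ h.hasDerivAt_mul_deriv hr (hp.trans_lt hr.1).ne'
  have hz₀ : z ≠ 0 := (hp.trans_lt hz.1).ne'
  exact ⟨z, hz, by simpa [hz₀, hμ] using hz0⟩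

lemma exists_deriv_eq_zero_of_nontrivial (h : IsRadialMode ν μ f f' p q)
    (hzeros : {r ∈ Ioo p q | f r = 0}.Nontrivial) : ∃ c ∈ Ioo p q, f' c = 0 := by
  obtain ⟨x, ⟨hx, hfx⟩, y, ⟨hy, hfy⟩, hlt⟩ := hzeros.exists_lt
  have hsub := h.mono hx.1.le hy.2.le
  obtain ⟨c, hc, hc0⟩ :=
    exists_hasDerivAt_eq_zero hlt hsub.continuousOn (hfx.trans hfy.symm) hsub.hasDerivAt
  exact ⟨c, ⟨hx.1.trans hc.1, hc.2.trans hy.2⟩, hc0⟩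

lemma deriv_zeros_subsingleton (h : IsRadialMode 0 μ f f' p q) (hp : 0 ≤ p) (hμ : μ ≠ 0)
    (hfp : f' p = 0) (hfq : f' q = 0) (hzeros : {r ∈ Ioo p q | f r = 0}.encard ≤ 2) :
    {r ∈ Ioo p q | f' r = 0}.Subsingleton := by
  by_contra hnot
  obtain ⟨c, ⟨hc, hc0⟩, d, ⟨hd, hd0⟩, hcd⟩ := (not_subsingleton_iff.1 hnot).exists_lt
  -- `c` and `d` cut `(p, q)` into three intervals, each containing a zero of `f`.
  obtain ⟨z₁, hz₁, hf₁⟩ :=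
    (h.mono le_rfl hc.2.le).exists_eq_zero_of_deriv_eq_zero hp hc.1 hμ hfp hc0
  obtain ⟨z₂, hz₂, hf₂⟩ := (h.mono hc.1.le hd.2.le).exists_eq_zero_of_deriv_eq_zero
    (hp.trans hc.1.le) hcd hμ hc0 hd0
  obtain ⟨z₃, hz₃, hf₃⟩ := (h.mono hd.1.le le_rfl).exists_eq_zero_of_deriv_eq_zero
    (hp.trans hd.1.le) hd.2 hμ hd0 hfq
  have h₁₂ : z₁ < z₂ := hz₁.2.trans hz₂.1
  have h₂₃ : z₂ < z₃ := hz₂.2.trans hz₃.1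
  have hsub : {z₁, z₂, z₃} ⊆ {r ∈ Ioo p q | f r = 0} := by
    rintro z (rfl | rfl | rfl)
    · exact ⟨⟨hz₁.1, hz₁.2.trans hc.2⟩, hf₁⟩
    · exact ⟨⟨hc.1.trans hz₂.1, hz₂.2.trans hd.2⟩, hf₂⟩
    · exact ⟨⟨hd.1.trans hz₃.1, hz₃.2⟩, hf₃⟩
  have hcard : ({z₁, z₂, z₃} : Set ℝ).encard = 3 :=
    encard_eq_three.2 ⟨z₁, z₂, z₃, h₁₂.ne, (h₁₂.trans h₂₃).ne, h₂₃.ne, rfl⟩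
  have habsurd : (3 : ℕ∞) ≤ 2 := hcard ▸ (encard_le_encard hsub).trans hzeros
  exact absurd habsurd (by decide)

lemma exists_deriv_zeros_eq_singleton (h : IsRadialMode 0 μ f f' p q) (hp : 0 ≤ p) (hμ : μ ≠ 0)
    (hfp : f' p = 0) (hfq : f' q = 0) (hzeros : {r ∈ Ioo p q | f r = 0}.encard = 2) :
    ∃ c, {r ∈ Ioo p q | f' r = 0} = {c} :=
  exists_eq_singleton_iff_nonempty_subsingleton.2
    ⟨h.exists_deriv_eq_zero_of_nontrivial (one_lt_encard_iff_nontrivial.1 (hzeros ▸ by decide)),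
      h.deriv_zeros_subsingleton hp hμ hfp hfq hzeros.le⟩

lemma continuousOn_liouvilleWronskian (h : IsRadialMode ν μ f f' p q) (hp : 0 < p) (k : ℝ) :
    ContinuousOn (liouvilleWronskian f f' k p) (Icc p q) := by
  have hf := h.continuousOn
  have hf' := h.continuousOn_deriv
  have hne : ∀ r ∈ Icc p q, 2 * r ≠ 0 := fun r hr ↦ by linarith [hr.1]
  unfold liouvilleWronskian
  fun_prop (disch := assumption)

lemma hasDerivAt_liouvilleWronskian (h : IsRadialMode ν μ f f' p q) (k : ℝ) {r : ℝ}
    (hr : r ∈ Ioo p q) (hr₀ : 0 < r) :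
    HasDerivAt (liouvilleWronskian f f' k p)
      (√r * f r * sin (k * (r - p)) * (k ^ 2 - liouvillePotential ν μ r)) r := by
  have hangle : HasDerivAt (fun r ↦ k * (r - p)) k r := by
    simpa using ((hasDerivAt_id' r).sub_const p).const_mul k
  have hf := h.hasDerivAt r hr
  have hquot := hf.fun_div ((hasDerivAt_id' r).const_mul 2) (mul_pos two_pos hr₀).ne'
  have hW := (hasDerivAt_sqrt hr₀.ne').fun_mul
    ((((h.hasDerivAt_deriv r hr).fun_add hquot).fun_mul hangle.sin).fun_sub
      (hf.fun_mul (hangle.cos.const_mul k)))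
  refine hW.congr_deriv ?_
  have hsqrt : 1 / (2 * √r) = √r / (2 * r) := by
    rw [div_eq_div_iff (by positivity) (by positivity)]
    linear_combination -2 * mul_self_sqrt hr₀.le
  rw [hsqrt, liouvillePotential]
  field_simp
  ring

lemma exists_pos_mul_sub_liouvillePotential_eq (h : IsRadialMode ν μ f f' p q) (hp : 0 < p)
    (hpq : p < q) : ∃ r ∈ Ioo p q, ∃ w > 0,
      w * f r * (π ^ 2 / (q - p) ^ 2 - liouvillePotential ν μ r) = √q * f q + √p * f p := by
  have hlen : 0 < q - p := sub_pos.2 hpq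
  set k := π / (q - p) with hk
  have hk₀ : 0 < k := div_pos pi_pos hlen
  have hkq : k * (q - p) = π := div_mul_cancel₀ π hlen.ne'
  obtain ⟨r, hr, hslope⟩ := exists_hasDerivAt_eq_slope _ _ hpq
    (h.continuousOn_liouvilleWronskian hp k)
    fun r hr ↦ h.hasDerivAt_liouvilleWronskian k hr (hp.trans hr.1)
  have hsin : 0 < sin (k * (r - p)) := by
    refine sin_pos_of_pos_of_lt_pi (mul_pos hk₀ (sub_pos.2 hr.1)) ?_
    rw [← hkq]
    gcongr
    exact hr.2
  have hsqrt : 0 < √r := sqrt_pos.2 (hp.trans hr.1)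
  have hends : liouvilleWronskian f f' k p q - liouvilleWronskian f f' k p p =
      k * (√q * f q + √p * f p) := by
    simp only [liouvilleWronskian, hkq, sub_self, mul_zero, sin_pi, cos_pi, sin_zero, cos_zero]
    ring
  refine ⟨r, hr, √r * sin (k * (r - p)) * ((q - p) / k), by positivity, ?_⟩
  rw [hends, eq_div_iff hlen.ne'] at hslope
  rw [← div_pow, ← hk, ← mul_right_inj' hk₀.ne', ← hslope]
  field_simp

lemma exists_liouvillePotential_le (h : IsRadialMode ν μ f f' p q) (hp : 0 < p) (hpq : p < q)
    (hne : ∀ r ∈ Ioo p q, f r ≠ 0) :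
    ∃ r ∈ Ioo p q, liouvillePotential ν μ r ≤ π ^ 2 / (q - p) ^ 2 := by
  obtain ⟨r, hr, w, hw, hslope⟩ := h.exists_pos_mul_sub_liouvillePotential_eq hp hpq
  refine ⟨r, hr, ?_⟩
  have hq := mul_nonneg_of_ne_zero_on_Ioo h.continuousOn hne (right_mem_Icc.2 hpq.le) hr
  have hp := mul_nonneg_of_ne_zero_on_Ioo h.continuousOn hne (left_mem_Icc.2 hpq.le) hr
  have hfr : 0 < w * f r ^ 2 := mul_pos hw (sq_pos_of_ne_zero (hne r hr))
  have hprod : 0 ≤ w * f r ^ 2 *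
      (π ^ 2 / (q - p) ^ 2 - liouvillePotential ν μ r) := calc
    0 ≤ √q * (f q * f r) + √p * (f p * f r) := by positivity
    _ = _ := by linear_combination -f r * hslope
  exact sub_nonneg.1 (nonneg_of_mul_nonneg_right hprod hfr)

lemma exists_liouvillePotential_eq (h : IsRadialMode ν μ f f' p q) (hp : 0 < p) (hpq : p < q)
    (hfp : f p = 0) (hfq : f q = 0) (hne : ∀ r ∈ Ioo p q, f r ≠ 0) :
    ∃ r ∈ Ioo p q, liouvillePotential ν μ r = π ^ 2 / (q - p) ^ 2 := by
  obtain ⟨r, hr, w, hw, hslope⟩ := h.exists_pos_mul_sub_liouvillePotential_eq hp hpq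
  refine ⟨r, hr, (sub_eq_zero.1 ?_).symm⟩
  simpa [hfp, hfq, hw.ne', hne r hr] using hslope

lemma exists_liouvillePotential_le_of_subsingleton (h : IsRadialMode ν μ f f' p q) (hp : 0 < p)
    (hpq : p < q) (hzeros : {r ∈ Ioo p q | f r = 0}.Subsingleton) :
    ∃ r ∈ Ioo p q, liouvillePotential ν μ r ≤ 4 * π ^ 2 / (q - p) ^ 2 := by
  obtain ⟨m, hm⟩ : ∃ m, m = (p + q) / 2 := ⟨_, rfl⟩
  have hpm : p < m := by linarith
  have hmq : m < q := by linarith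
  rw [four_mul_div_sq]
  by_cases hleft : ∀ r ∈ Ioo p m, f r ≠ 0
  · obtain ⟨r, hr, hle⟩ := (h.mono le_rfl hmq.le).exists_liouvillePotential_le hp hpm hleft
    exact ⟨r, ⟨hr.1, hr.2.trans hmq⟩, by rwa [show (q - p) / 2 = m - p by linarith]⟩
  · push Not at hleft
    obtain ⟨z, hz, hz0⟩ := hleft
    have hright : ∀ r ∈ Ioo m q, f r ≠ 0 := fun r hr hr0 ↦
      (hz.2.trans hr.1).ne (hzeros ⟨⟨hz.1, hz.2.trans hmq⟩, hz0⟩ ⟨⟨hpm.trans hr.1, hr.2⟩, hr0⟩)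
    obtain ⟨r, hr, hle⟩ :=
      (h.mono hpm.le le_rfl).exists_liouvillePotential_le (hp.trans hpm) hmq hright
    exact ⟨r, ⟨hpm.trans hr.1, hr.2⟩, by rwa [show (q - p) / 2 = q - m by linarith]⟩

lemma exists_le_liouvillePotential_of_eq_singleton {c : ℝ} (h : IsRadialMode ν μ f f' p q)
    (hp : 0 < p) (hfp : f p = 0) (hfq : f q = 0) (hzeros : {r ∈ Ioo p q | f r = 0} = {c}) :
    ∃ r ∈ Ioo p q, 4 * π ^ 2 / (q - p) ^ 2 ≤ liouvillePotential ν μ r := by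
  have hiff : ∀ r, (r ∈ Ioo p q ∧ f r = 0) ↔ r = c := Set.ext_iff.1 hzeros
  obtain ⟨⟨hpc, hcq⟩, hfc⟩ := (hiff c).2 rfl
  have hhalf : ∀ x > 0, x ≤ (q - p) / 2 → 4 * π ^ 2 / (q - p) ^ 2 ≤ π ^ 2 / x ^ 2 := by
    intro x hx hle
    rw [four_mul_div_sq]
    gcongr
  rcases le_total (c - p) (q - c) with hle | hle
  · obtain ⟨r, hr, heq⟩ := (h.mono le_rfl hcq.le).exists_liouvillePotential_eq hp hpc hfp hfc
      fun r hr hr0 ↦ hr.2.ne ((hiff r).1 ⟨⟨hr.1, hr.2.trans hcq⟩, hr0⟩)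
    exact ⟨r, ⟨hr.1, hr.2.trans hcq⟩, heq ▸ hhalf _ (sub_pos.2 hpc) (by linarith)⟩
  · obtain ⟨r, hr, heq⟩ := (h.mono hpc.le le_rfl).exists_liouvillePotential_eq
      (hp.trans hpc) hcq hfc hfq fun r hr hr0 ↦ hr.1.ne' ((hiff r).1 ⟨⟨hpc.trans hr.1, hr.2⟩, hr0⟩)
    exact ⟨r, ⟨hpc.trans hr.1, hr.2⟩, heq ▸ hhalf _ (sub_pos.2 hcq) (by linarith)⟩

end IsRadialMode

namespace NeumannMu02

variable {a μ : ℝ}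

lemma eigenvalue_ne_zero (h : NeumannMu02 a μ) (ha : 0 < a) (ha1 : a < 1) : μ ≠ 0 := by
  rintro rfl
  obtain ⟨ψ, hψ, hode, hψa, -, ⟨r, hr, hne⟩, -⟩ := h
  exact hne ((IsRadialMode.of_contDiffOn ha1 hψ (by simpa using hode)).eq_left_of_eigenvalue_eq_zero
    ha.le hψa hr)

lemma exists_isRadialMode_one (h : NeumannMu02 a μ) (ha : 0 < a) (ha1 : a < 1) :
    ∃ f f' c, IsRadialMode 1 μ f f' a 1 ∧ f a = 0 ∧ f 1 = 0 ∧
      {r ∈ Ioo a 1 | f r = 0} = {c} := by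
  have hμ := h.eigenvalue_ne_zero ha ha1
  obtain ⟨ψ, hψ, hode, hψa, hψ1, -, hzeros⟩ := h
  have hmode : IsRadialMode 0 μ ψ (derivWithin ψ (Icc a 1)) a 1 :=
    .of_contDiffOn ha1 hψ (by simpa using hode)
  obtain ⟨c, hc⟩ := hmode.exists_deriv_zeros_eq_singleton ha.le hμ hψa hψ1 hzeros
  exact ⟨_, _, c, hmode.deriv_of_order_zero ha, hψa, hψ1, hc⟩

lemma le_eigenvalue (h : NeumannMu02 a μ) (ha : 0 < a) (ha1 : a < 1) :
    4 * π ^ 2 / (1 - a) ^ 2 ≤ μ := by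
  obtain ⟨f, f', c, hmode, hfa, hf1, hzeros⟩ := h.exists_isRadialMode_one ha ha1
  obtain ⟨r, -, hle⟩ := hmode.exists_le_liouvillePotential_of_eq_singleton ha hfa hf1 hzeros
  rw [liouvillePotential] at hle
  have hpot : 0 ≤ ((1 : ℝ) ^ 2 - 1 / 4) / r ^ 2 := by positivity
  linarith

lemma eigenvalue_le {p : ℝ} (h : NeumannMu02 a μ) (ha : 0 < a) (hap : a ≤ p) (hp1 : p < 1) :
    μ ≤ 4 * π ^ 2 / (1 - p) ^ 2 + 3 / (4 * p ^ 2) := by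
  obtain ⟨f, f', c, hmode, -, -, hzeros⟩ := h.exists_isRadialMode_one ha (hap.trans_lt hp1)
  have hsub : {r ∈ Ioo p 1 | f r = 0} ⊆ {c} :=
    hzeros ▸ fun r hr ↦ ⟨Ioo_subset_Ioo_left hap hr.1, hr.2⟩
  have hp : 0 < p := ha.trans_le hap
  obtain ⟨r, hr, hle⟩ := (hmode.mono hap le_rfl).exists_liouvillePotential_le_of_subsingleton hp hp1
    (subsingleton_singleton.anti hsub)
  rw [liouvillePotential] at hle
  have hpot : ((1 : ℝ) ^ 2 - 1 / 4) / r ^ 2 ≤ 3 / (4 * p ^ 2) := calc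
    ((1 : ℝ) ^ 2 - 1 / 4) / r ^ 2 ≤ (1 ^ 2 - 1 / 4) / p ^ 2 := by
      have := hr.1.le
      gcongr
    _ = 3 / (4 * p ^ 2) := by ring
  linarith

end NeumannMu02

namespace DirichletLam0

variable {a μ : ℝ} {l : ℕ}

lemma exists_eigenvalue_eq (h : DirichletLam0 a μ l) (ha : 0 < a) (ha1 : a < 1) :
    ∃ r ∈ Ioo a 1, μ = π ^ 2 / (1 - a) ^ 2 + ((l : ℝ) ^ 2 - 1 / 4) / r ^ 2 := by
  obtain ⟨φ, hφ, hode, hφa, hφ1, hpos⟩ := h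
  obtain ⟨r, hr, heq⟩ := (IsRadialMode.of_contDiffOn ha1 hφ hode).exists_liouvillePotential_eq
    ha ha1 hφa hφ1 fun r hr ↦ (hpos r hr).ne'
  rw [liouvillePotential] at heq
  exact ⟨r, hr, by linarith⟩

lemma le_eigenvalue (h : DirichletLam0 a μ l) (ha : 0 < a) (ha1 : a < 1) (hl : 1 ≤ l) :
    π ^ 2 / (1 - a) ^ 2 + ((l : ℝ) ^ 2 - 1 / 4) ≤ μ := by
  obtain ⟨r, hr, rfl⟩ := h.exists_eigenvalue_eq ha ha1
  have hr₀ : 0 < r := ha.trans hr.1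
  have hl₂ : (1 : ℝ) ≤ (l : ℝ) ^ 2 := one_le_pow₀ (by exact_mod_cast hl)
  gcongr
  exact le_div_self (by linarith) (by positivity) (pow_le_one₀ hr₀.le hr.2.le)

lemma sq_lt_eigenvalue (h : DirichletLam0 a μ l) (ha : 0 < a) (ha1 : a < 1) (hl : 1 ≤ l) :
    (l : ℝ) ^ 2 < μ := by
  have hle := h.le_eigenvalue ha ha1 hl
  have hlen : 0 < 1 - a := sub_pos.2 ha1
  have hπ : 1 ≤ π ^ 2 / (1 - a) ^ 2 := by
    rw [← div_pow]
    exact one_le_pow₀ ((one_le_div hlen).2 (by linarith [pi_gt_three]))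
  linarith

lemma eigenvalue_le (h : DirichletLam0 a μ l) (ha : 0 < a) (ha1 : a < 1) :
    μ ≤ π ^ 2 / (1 - a) ^ 2 + (l : ℝ) ^ 2 / a ^ 2 := by
  obtain ⟨r, hr, rfl⟩ := h.exists_eigenvalue_eq ha ha1
  have hle := hr.1.le
  gcongr
  linarith

end DirichletLam0

section Crossing

variable {a μ : ℝ} {l : ℕ}

lemma half_lt_of_crossing (hN : NeumannMu02 a μ) (hD : DirichletLam0 a μ l) (ha : 0 < a)
    (ha1 : a < 1) (hl : 13 ≤ l) : 1 / 2 < a := by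
  by_contra! ha2
  have hlower := hD.sq_lt_eigenvalue ha ha1 (by linarith)
  have hupper := hN.eigenvalue_le ha ha2 (by norm_num)
  have hl₂ : (13 : ℝ) ^ 2 ≤ (l : ℝ) ^ 2 := by gcongr; exact_mod_cast hl
  have hπ : π ^ 2 < 10 := by nlinarith [pi_pos, pi_lt_d2]
  norm_num at hupper
  linarith

lemma mul_le_mul_one_sub_of_crossing (hN : NeumannMu02 a μ) (hD : DirichletLam0 a μ l) (ha : 0 < a)
    (ha1 : a < 1) : √3 * π * a ≤ l * (1 - a) := by
  have hlen : 0 < 1 - a := sub_pos.2 ha1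
  have hbounds := (hN.le_eigenvalue ha ha1).trans (hD.eigenvalue_le ha ha1)
  have hquot : (√3 * π / (1 - a)) ^ 2 ≤ (l / a) ^ 2 := by
    rw [div_pow, div_pow, mul_pow, sq_sqrt zero_le_three]
    linear_combination hbounds
  exact (div_le_div_iff₀ hlen ha).1 ((sq_le_sq₀ (by positivity) (by positivity)).1 hquot)

lemma mul_one_sub_le_of_crossing (hN : NeumannMu02 a μ) (hD : DirichletLam0 a μ l) (ha : 1 / 2 < a)
    (ha1 : a < 1) (hl : 1 ≤ l) : l * (1 - a) ≤ √3 * π + 2 * (1 - a) := by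
  have ha₀ : 0 < a := by linarith
  have hlen : 0 < 1 - a := sub_pos.2 ha1
  have hbounds := (hD.le_eigenvalue ha₀ ha1 hl).trans (hN.eigenvalue_le ha₀ le_rfl ha1)
  have hpot : 3 / (4 * a ^ 2) ≤ 3 := div_le_self zero_le_three (by nlinarith)
  have hsq : (l * (1 - a)) ^ 2 ≤ (√3 * π) ^ 2 + (2 * (1 - a)) ^ 2 := by
    have hl₂ : (l : ℝ) ^ 2 ≤ 3 * π ^ 2 / (1 - a) ^ 2 + 4 := by
      linear_combination hbounds + hpot
    calc (l * (1 - a)) ^ 2 = (l : ℝ) ^ 2 * (1 - a) ^ 2 := mul_pow _ _ _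
      _ ≤ (3 * π ^ 2 / (1 - a) ^ 2 + 4) * (1 - a) ^ 2 := by gcongr
      _ = (√3 * π) ^ 2 + (2 * (1 - a)) ^ 2 := by
        rw [mul_pow, sq_sqrt zero_le_three]
        field_simp
        ring
  exact (sq_le_sq₀ (by positivity) (by positivity)).1
    (hsq.trans (pow_add_pow_le (by positivity) (by positivity) two_ne_zero))

end Crossing

lemma abs_sub_le_of_mul_one_sub_bounds {K a l : ℝ} (hK : 2 ≤ K) (hl : 0 < l) (ha : 1 / 2 ≤ a)
    (ha1 : a ≤ 1) (hlower : K * a ≤ l * (1 - a)) (hupper : l * (1 - a) ≤ K + 2 * (1 - a)) :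
    |a - (1 - K / l)| ≤ K * (K + 1) / l ^ 2 := by
  have herror : |K - l * (1 - a)| ≤ K * (1 - a) := by
    rw [abs_le]
    constructor <;> nlinarith
  have hwidth : l * (1 - a) ≤ K + 1 := by linarith
  calc |a - (1 - K / l)| = |K - l * (1 - a)| / l := by
        rw [← abs_of_pos hl, ← abs_div, abs_of_pos hl]
        congr 1
        field_simp
        ring
    _ ≤ K * (1 - a) / l := by gcongr
    _ = K * (l * (1 - a)) / l ^ 2 := by field_simp
    _ ≤ K * (K + 1) / l ^ 2 := by gcongr

theorem crossing_point_first_order_asymptotics_general :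
    ∃ C > (0 : ℝ), ∃ L : ℕ, ∀ l : ℕ, L ≤ l → ∀ a ∈ Ioo (0 : ℝ) 1, ∀ μ : ℝ,
      NeumannMu02 a μ → DirichletLam0 a μ l → |a - (1 - √3 * π / l)| ≤ C / (l : ℝ) ^ 2 := by
  refine ⟨√3 * π * (√3 * π + 1), by positivity, 13, fun l hl a ⟨ha, ha1⟩ μ hN hD ↦ ?_⟩
  have ha2 : 1 / 2 < a := half_lt_of_crossing hN hD ha ha1 hl
  have hK : 2 ≤ √3 * π := by
    nlinarith [one_le_sqrt.2 (by norm_num : (1 : ℝ) ≤ 3), pi_gt_three]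
  exact abs_sub_le_of_mul_one_sub_bounds hK (by positivity) ha2.le ha1.le
    (mul_le_mul_one_sub_of_crossing hN hD ha ha1)
    (mul_one_sub_le_of_crossing hN hD ha2 ha1 (by linarith))

/-- First-order asymptotics of the crossing points:
`a_l = 1 − √3·π/l + O(l⁻²)`. -/
theorem crossing_point_first_order_asymptotics :
    ∃ C > (0:ℝ), ∃ L : ℕ, ∀ l : ℕ, L ≤ l →
      ∀ a ∈ Set.Ioo (1/2 : ℝ) 1, ∀ μ > (0:ℝ),
        NeumannMu02 a μ → DirichletLam0 a μ l →
        |a - (1 - Real.sqrt 3 * π / l)| ≤ C / (l:ℝ)^2 := by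
  obtain ⟨C, hC, L, h⟩ := crossing_point_first_order_asymptotics_general
  exact ⟨C, hC, L, fun l hl a ha μ _ ↦ h l hl a ⟨one_half_pos.trans ha.1, ha.2⟩ μ⟩
end
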